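/- arXiv:2306.09895 — 11 statements merged into one kernel-verified Lean document; each statement's English description precedes it below -/
import Mathlib

section
/- Let p ≥ 1 and let f : [0,∞) → ℝ be locally integrable. Suppose that for every θ ∈ (0,1] the function t ↦ ∫_t^{t+θ} f(s) ds belongs to L^p([0,∞)). Then there exists a constant B > 0, independent of θ, such that ‖ t ↦ ∫_t^{t+θ} f(s) ds ‖_{L^p([0,∞))} ≤ B for all θ ∈ (0,1]. -/
open MeasureTheory Set Filter

/-- The extended `L^q` norm on `[0,∞)` of the increment of `H` with step `θ`. -/
noncomputable def incNorm (H : ℝ → ℝ) (q : ENNReal) (θ : ℝ) : ENNReal :=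
  eLpNorm (fun t => H (t + θ) - H t) q (volume.restrict (Ici (0:ℝ)))

theorem eLpNorm_shift_le (u : ℝ → ℝ) (hu : Continuous u) (q : ENNReal) (a : ℝ) (ha : 0 ≤ a) :
    eLpNorm (fun t => u (t + a)) q (volume.restrict (Ici (0:ℝ)))
      ≤ eLpNorm u q (volume.restrict (Ici (0:ℝ))) := by
  have h1 : MeasurePreserving (fun t : ℝ => t + a) (volume.restrict ((fun t : ℝ => t + a) ⁻¹' Ici a))
      (volume.restrict (Ici a)) :=
    (measurePreserving_add_right volume a).restrict_preimage measurableSet_Ici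
  have h2 : (fun t : ℝ => t + a) ⁻¹' Ici a = Ici 0 := by
    ext t; simp
  rw [h2] at h1
  have h3 := eLpNorm_comp_measurePreserving (p := q) (g := u) hu.aestronglyMeasurable h1
  have h4 : (fun t => u (t + a)) = u ∘ (fun t : ℝ => t + a) := rfl
  rw [h4, h3]
  exact eLpNorm_mono_measure _ (Measure.restrict_mono (Ici_subset_Ici.2 ha) le_rfl)

theorem incNorm_add (H : ℝ → ℝ) (hH : Continuous H) (q : ENNReal) (hq : 1 ≤ q) (a b : ℝ)
    (ha : 0 ≤ a) : incNorm H q (a + b) ≤ incNorm H q a + incNorm H q b := by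
  have h := eLpNorm_shift_le (fun t => H (t + b) - H t) (by fun_prop) q a ha
  unfold incNorm
  have e : (fun t => H (t + (a + b)) - H t)
      = (fun t => H (t + a) - H t) + (fun t => H (t + a + b) - H (t + a)) := by
    ext t; simp [add_assoc]
  rw [e]
  refine (eLpNorm_add_le ?_ ?_ hq).trans (add_le_add le_rfl h)
  · exact (show Continuous fun t => H (t + a) - H t by fun_prop).aestronglyMeasurable
  · exact (show Continuous fun t => H (t + a + b) - H (t + a) by fun_prop).aestronglyMeasurable

theorem incNorm_sub (H : ℝ → ℝ) (hH : Continuous H) (q : ENNReal) (hq : 1 ≤ q) (a b : ℝ)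
    (ha : 0 ≤ a) : incNorm H q a ≤ incNorm H q (a + b) + incNorm H q b := by
  have h := eLpNorm_shift_le (fun t => H (t + b) - H t) (by fun_prop) q a ha
  unfold incNorm
  have e : (fun t => H (t + a) - H t)
      = (fun t => H (t + (a + b)) - H t) - (fun t => H (t + a + b) - H (t + a)) := by
    ext t; simp [add_assoc]
  rw [e]
  refine (eLpNorm_sub_le ?_ ?_ hq).trans (add_le_add le_rfl h)
  · exact (show Continuous fun t => H (t + (a + b)) - H t by fun_prop).aestronglyMeasurable
  · exact (show Continuous fun t => H (t + a + b) - H (t + a) by fun_prop).aestronglyMeasurable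

theorem incNorm_nsmul (H : ℝ → ℝ) (hH : Continuous H) (q : ENNReal) (hq : 1 ≤ q) (a : ℝ)
    (ha : 0 ≤ a) (k : ℕ) : incNorm H q (k * a) ≤ k * incNorm H q a := by
  induction k with
  | zero => simp [incNorm]
  | succ k ih =>
    have e : ((k + 1 : ℕ) : ℝ) * a = k * a + a := by push_cast; ring
    have e' : ((k + 1 : ℕ) : ENNReal) * incNorm H q a = k * incNorm H q a + incNorm H q a := by
      push_cast; ring
    rw [e, e']
    exact (incNorm_add H hH q hq _ _ (by positivity)).trans (add_le_add ih le_rfl)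

theorem incNorm_closed (H : ℝ → ℝ) (hH : Continuous H) (q : ENNReal) (c : ENNReal) :
    IsClosed {θ : ℝ | incNorm H q θ ≤ c} := by
  apply IsSeqClosed.isClosed
  intro θ x hθ hx
  have h := Lp.eLpNorm_lim_le_liminf_eLpNorm (p := q) (μ := volume.restrict (Ici (0:ℝ)))
    (f := fun n t => H (t + θ n) - H t)
    (fun n => (show Continuous fun t => H (t + θ n) - H t by fun_prop).aestronglyMeasurable)
    (fun t => H (t + x) - H t)
    (ae_of_all _ fun t => by
      have : Continuous fun y => H (t + y) - H t := by fun_prop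
      exact (this.tendsto x).comp hx)
  refine h.trans ?_
  refine (liminf_le_liminf (v := fun _ => c) (Eventually.of_forall hθ)).trans ?_
  simp

theorem incNorm_bounded (H : ℝ → ℝ) (hH : Continuous H) (q : ENNReal) (hq : 1 ≤ q)
    (hfin : ∀ θ ∈ Ioc (0:ℝ) 1, incNorm H q θ < ⊤) :
    ∃ C : ENNReal, C < ⊤ ∧ ∀ θ ∈ Ioc (0:ℝ) 1, incNorm H q θ ≤ C := by
  have : Nonempty (Icc (1/2:ℝ) 1) := ⟨⟨1, by norm_num⟩⟩
  obtain ⟨n, x, hx⟩ := nonempty_interior_of_iUnion_of_closed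
    (X := Icc (1/2:ℝ) 1) (f := fun n : ℕ => {θ | incNorm H q θ ≤ n})
    (fun n => (incNorm_closed H hH q n).preimage continuous_subtype_val)
    (by
      ext ⟨θ, hθ⟩
      simp only [mem_iUnion, mem_ofPred_eq, mem_univ, iff_true]
      obtain ⟨n, hn⟩ := ENNReal.exists_nat_gt (hfin θ ⟨by linarith [hθ.1], hθ.2⟩).ne
      exact ⟨n, hn.le⟩)
  obtain ⟨ε, hε, hball⟩ := Metric.mem_nhds_iff.1 (mem_interior_iff_mem_nhds.1 hx)
  have key : ∀ y ∈ Icc (1/2:ℝ) 1, |y - x| < ε → incNorm H q y ≤ n := by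
    intro y hy hd
    have hm : (⟨y, hy⟩ : Icc (1/2:ℝ) 1) ∈ Metric.ball x ε := by
      rw [Metric.mem_ball, Subtype.dist_eq, Real.dist_eq]
      exact hd
    have hm2 := hball hm
    rw [mem_ofPred_eq] at hm2
    exact hm2
  obtain ⟨x, hx1, hx2⟩ := x
  simp only at key
  have hxn : incNorm H q x ≤ n := key x ⟨hx1, hx2⟩ (by simpa using hε)
  have small : ∀ θ, 0 < θ → θ < ε → θ ≤ 1/4 → incNorm H q θ ≤ n + n := by
    intro θ h0 h1 h2
    rcases le_total x (3/4) with h | h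
    · refine (incNorm_sub H hH q hq θ x h0.le).trans (add_le_add (key _ ⟨by linarith, by linarith⟩ ?_) hxn)
      rw [add_sub_cancel_right, abs_of_pos h0]; exact h1
    · have := incNorm_sub H hH q hq θ (x - θ) h0.le
      rw [add_sub_cancel] at this
      refine this.trans (add_le_add hxn (key _ ⟨by linarith, by linarith⟩ ?_))
      rw [sub_sub_cancel_left, abs_neg, abs_of_pos h0]; exact h1
  obtain ⟨k, hk⟩ := exists_nat_gt (max 4 (1/ε))
  have hk4 : (4:ℝ) < k := (le_max_left _ _).trans_lt hk
  have hkε : 1/ε < k := (le_max_right _ _).trans_lt hk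
  have hk0 : (0:ℝ) < k := by linarith
  refine ⟨k * (n + n), ?_, ?_⟩
  · exact_mod_cast ENNReal.natCast_lt_top (k * (n + n))
  · intro θ hθ
    have e : θ = k * (θ / k) := by field_simp
    rw [e]
    refine (incNorm_nsmul H hH q hq _ (div_nonneg hθ.1.le hk0.le) k).trans ?_
    gcongr
    apply small _ (div_pos hθ.1 hk0)
    · rw [div_lt_iff₀ hk0]
      rw [div_lt_iff₀ hε] at hkε
      nlinarith [hθ.2]
    · rw [div_le_iff₀ hk0]; linarith [hθ.2]

/-- Lemma 2.1: if for every `θ ∈ (0,1]` the interval average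
`t ↦ ∫_t^{t+θ} f(s) ds` lies in `L^p([0,∞))`, then its `L^p`-norms are bounded
uniformly in `θ` by a constant `B > 0`. -/
theorem lp_norm_of_interval_average_uniformly_bounded
    (p : ℝ) (hp : 1 ≤ p) (f : ℝ → ℝ)
    (hf : LocallyIntegrableOn f (Ici 0))
    (hFp : ∀ θ ∈ Ioc (0:ℝ) 1,
      IntegrableOn (fun t => |∫ s in t..(t + θ), f s| ^ p) (Ici 0)) :
    ∃ B > (0:ℝ), ∀ θ ∈ Ioc (0:ℝ) 1,
      (∫ t in Ici (0:ℝ), |∫ s in t..(t + θ), f s| ^ p) ^ (1 / p) ≤ B := by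
  have hgi : ∀ a b, IntervalIntegrable ((Ici (0:ℝ)).indicator f) volume a b := by
    intro a b
    rw [intervalIntegrable_iff]
    rw [IntegrableOn, integrable_indicator_iff measurableSet_Ici, IntegrableOn,
      Measure.restrict_restrict measurableSet_Ici]
    have h := hf.integrableOn_compact_subset (t := Icc 0 (max a b)) (fun x hx => hx.1) isCompact_Icc
    refine h.mono_set ?_
    rintro y ⟨hy1, hy2⟩
    exact ⟨hy1, hy2.2⟩
  set H : ℝ → ℝ := fun x => ∫ s in (0:ℝ)..x, (Ici (0:ℝ)).indicator f s with hHdef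
  have hH : Continuous H := intervalIntegral.continuous_primitive hgi 0
  have hinc : ∀ θ ∈ Ioc (0:ℝ) 1, ∀ t ∈ Ici (0:ℝ), ∫ s in t..(t + θ), f s = H (t + θ) - H t := by
    intro θ hθ t ht
    rw [hHdef]
    simp only
    rw [intervalIntegral.integral_interval_sub_left (hgi _ _) (hgi _ _)]
    apply intervalIntegral.integral_congr
    intro s hs
    rw [uIcc_of_le (by linarith [hθ.1])] at hs
    exact (indicator_of_mem (show s ∈ Ici (0:ℝ) from le_trans ht hs.1) f).symm
  have hp0 : 0 < p := by linarith
  have hq0 : ENNReal.ofReal p ≠ 0 := by simpa using hp0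
  have hqt : ENNReal.ofReal p ≠ ⊤ := ENNReal.ofReal_ne_top
  have hqr : (ENNReal.ofReal p).toReal = p := ENNReal.toReal_ofReal hp0.le
  have hmem : ∀ θ ∈ Ioc (0:ℝ) 1, MemLp (fun t => H (t + θ) - H t) (ENNReal.ofReal p)
      (volume.restrict (Ici (0:ℝ))) := by
    intro θ hθ
    have hm : AEStronglyMeasurable (fun t => H (t + θ) - H t) (volume.restrict (Ici (0:ℝ))) :=
      (show Continuous fun t => H (t + θ) - H t by fun_prop).aestronglyMeasurable
    rw [← integrable_norm_rpow_iff hm hq0 hqt, hqr]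
    refine (hFp θ hθ).congr_fun ?_ measurableSet_Ici
    intro t ht
    simp only [hinc θ hθ t ht, Real.norm_eq_abs]
  obtain ⟨C, hC, hb⟩ := incNorm_bounded H hH (ENNReal.ofReal p) (by simpa using hp)
    (fun θ hθ => (hmem θ hθ).2)
  refine ⟨C.toReal + 1, by positivity, fun θ hθ => ?_⟩
  have h1 := hb θ hθ
  rw [incNorm, (hmem θ hθ).eLpNorm_eq_integral_rpow_norm hq0 hqt, hqr,
    ENNReal.ofReal_le_iff_le_toReal hC.ne] at h1
  have h2 : ∫ t in Ici (0:ℝ), |∫ s in t..(t + θ), f s| ^ p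
      = ∫ t in Ici (0:ℝ), ‖H (t + θ) - H t‖ ^ p := by
    apply setIntegral_congr_fun measurableSet_Ici
    intro t ht
    simp only [hinc θ hθ t ht, Real.norm_eq_abs]
  rw [h2, one_div]
  linarith
end

section
/- Let p ≥ 1 and let f : [0,∞) → ℝ be locally integrable, extended to ℝ by setting f(t) = 0 for t < 0. Suppose that for every θ ∈ (0,1] the function t ↦ ∫_t^{t+θ} f(s) ds belongs to L^p([0,∞)). Then the function f₁ defined by f₁(t) = ∫_{t-1}^t f(s) ds for t ≥ 0 is continuous on [0,∞) and belongs to L^p([0,∞)). -/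
open MeasureTheory Set Filter

/-- with `f` locally integrable on `[0,∞)` and extended by zero for `t < 0`,
if every interval average `t ↦ ∫_t^{t+θ} f(s) ds` (`θ ∈ (0,1]`) is in `L^p([0,∞))`, then
`f₁(t) = ∫_{t-1}^t f(s) ds` is continuous on `[0,∞)` and belongs to `L^p([0,∞))`. -/
theorem moving_average_continuous_and_Lp
    (p : ℝ) (hp : 1 ≤ p) (f : ℝ → ℝ)
    (hf : LocallyIntegrableOn f (Ici 0))
    (hf0 : ∀ t < (0:ℝ), f t = 0)
    (hFp : ∀ θ ∈ Ioc (0:ℝ) 1,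
      IntegrableOn (fun t => |∫ s in t..(t + θ), f s| ^ p) (Ici 0)) :
    ContinuousOn (fun t => ∫ s in (t - 1)..t, f s) (Ici 0) ∧
    IntegrableOn (fun t => |∫ s in (t - 1)..t, f s| ^ p) (Ici 0) := by
  have hM : ∀ M : ℝ, IntegrableOn f (Iic M) := by
    intro M
    have h1 : IntegrableOn f (Icc 0 M) :=
      hf.integrableOn_compact_subset Icc_subset_Ici_self isCompact_Icc
    have h2 : IntegrableOn f (Iio 0) :=
      (integrableOn_zero : IntegrableOn (fun _ => (0:ℝ)) (Iio (0:ℝ)) volume).congr_fun (fun t ht => (hf0 t ht).symm) measurableSet_Iio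
    refine (h2.union h1).mono_set ?_
    intro x hx
    rcases lt_or_ge x 0 with h | h
    · exact Or.inl h
    · exact Or.inr ⟨h, hx⟩
  have hii : ∀ a b : ℝ, IntervalIntegrable f volume a b := by
    intro a b
    rw [intervalIntegrable_iff]
    exact (hM (max a b)).mono_set (fun x hx => hx.2)
  have hG : Continuous (fun t => ∫ s in (0:ℝ)..t, f s) :=
    intervalIntegral.continuous_primitive hii 0
  have hc : Continuous (fun t => ∫ s in (t - 1)..t, f s) := by
    have he : (fun t => ∫ s in (t - 1)..t, f s)
        = fun t => (∫ s in (0:ℝ)..t, f s) - ∫ s in (0:ℝ)..(t - 1), f s := by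
      funext t
      exact (intervalIntegral.integral_interval_sub_left (hii _ _) (hii _ _)).symm
    rw [he]
    exact hG.sub (hG.comp (continuous_id.sub continuous_const))
  refine ⟨hc.continuousOn, ?_⟩
  have hcp : Continuous (fun t => |∫ s in (t - 1)..t, f s| ^ p) :=
    hc.abs.rpow_const (fun _ => Or.inr (by linarith))
  have h1 : IntegrableOn (fun t => |∫ s in (t - 1)..t, f s| ^ p) (Icc 0 1) :=
    hcp.continuousOn.integrableOn_compact isCompact_Icc
  have h2 : IntegrableOn (fun t => |∫ s in (t - 1)..t, f s| ^ p) (Ici 1) := by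
    have h := hFp 1 ⟨one_pos, le_refl 1⟩
    have hmp := measurePreserving_sub_right (volume : Measure ℝ) 1
    have := (hmp.integrableOn_comp_preimage
      (MeasurableEquiv.subRight (1:ℝ)).measurableEmbedding).2 h
    simpa [Function.comp_def] using this
  refine (h1.union h2).mono_set ?_
  intro x hx
  rcases le_total x 1 with h | h
  · exact Or.inl ⟨hx, h⟩
  · exact Or.inr h
end

section
/- Let p ≥ 1 and let f : [0,∞) → ℝ be locally integrable, extended by zero on (−∞,0), with f₁(t) = ∫_{t-1}^t f(s) ds and f₂ = f − f₁. Then for every t ≥ 1, |∫_0^t f₂(s) ds|^p ≤ ∫_0^1 |∫_{t+v-1}^t f(u) du|^p dv, and consequently ∫_1^∞ |∫_0^t f₂(s) ds|^p dt ≤ ∫_0^1 ( ∫_0^∞ |∫_t^{t+v} f(u) du|^p dt ) dv. -/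
open MeasureTheory Set Filter

lemma aux_ii (f : ℝ → ℝ) (hf : LocallyIntegrableOn f (Ici 0))
    (hf0 : ∀ t < (0:ℝ), f t = 0) (a b : ℝ) : IntervalIntegrable f volume a b := by
  have h0 : ∀ c : ℝ, IntervalIntegrable f volume 0 c := by
    intro c
    rcases le_total 0 c with h | h
    · rw [intervalIntegrable_iff_integrableOn_Icc_of_le h]
      exact hf.integrableOn_compact_subset Icc_subset_Ici_self isCompact_Icc
    · apply IntervalIntegrable.symm
      rw [intervalIntegrable_iff_integrableOn_Ioo_of_le h]
      exact (integrableOn_zero).congr_fun (fun x hx => (hf0 x hx.2).symm) measurableSet_Ioo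
  exact (h0 a).symm.trans (h0 b)

lemma aux_eq (f : ℝ → ℝ) (hi : ∀ a b : ℝ, IntervalIntegrable f volume a b)
    (hf0 : ∀ t < (0:ℝ), f t = 0) (t : ℝ) :
    ∫ s in (0:ℝ)..t, (f s - ∫ u in (s - 1)..s, f u)
      = ∫ v in (0:ℝ)..1, ∫ u in (t - v)..t, f u := by
  have hFc : Continuous (fun x => ∫ u in (0:ℝ)..x, f u) :=
    intervalIntegral.continuous_primitive hi 0
  have hd : ∀ a b : ℝ, ∫ u in a..b, f u = (∫ u in (0:ℝ)..b, f u) - ∫ u in (0:ℝ)..a, f u := by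
    intro a b
    rw [intervalIntegral.integral_interval_sub_left (hi _ _) (hi _ _)]
  have hneg : ∀ x ≤ (0:ℝ), ∫ u in (0:ℝ)..x, f u = 0 := by
    intro x hx
    rw [intervalIntegral.integral_symm, intervalIntegral.integral_of_le hx,
      integral_Ioc_eq_integral_Ioo,
      setIntegral_eq_zero_of_forall_eq_zero (fun y hy => hf0 y hy.2), neg_zero]
  set F : ℝ → ℝ := fun x => ∫ u in (0:ℝ)..x, f u with hF
  have e1 : (fun s => f s - ∫ u in (s - 1)..s, f u) = fun s => f s - (F s - F (s-1)) := by
    funext s; rw [hd]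
  have e2 : (fun v => ∫ u in (t - v)..t, f u) = fun v => F t - F (t - v) := by
    funext s; rw [hd]
  have hFi : ∀ a b : ℝ, IntervalIntegrable F volume a b := fun a b => hFc.intervalIntegrable a b
  have hFi1 : ∀ a b : ℝ, IntervalIntegrable (fun s => F (s-1)) volume a b :=
    fun a b => (hFc.comp (by fun_prop)).intervalIntegrable a b
  have hFi2 : ∀ a b : ℝ, IntervalIntegrable (fun s => F (t-s)) volume a b :=
    fun a b => (hFc.comp (by fun_prop)).intervalIntegrable a b
  rw [e1, e2, intervalIntegral.integral_sub (hi _ _) ((hFi _ _).sub (hFi1 _ _)),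
    intervalIntegral.integral_sub (hFi _ _) (hFi1 _ _),
    intervalIntegral.integral_sub (by simp) (hFi2 _ _),
    intervalIntegral.integral_comp_sub_right (fun x => F x),
    intervalIntegral.integral_comp_sub_left (fun x => F x)]
  have h1 : ∫ x in (0-1:ℝ)..0, F x = 0 := by
    rw [intervalIntegral.integral_of_le (by norm_num)]
    exact setIntegral_eq_zero_of_forall_eq_zero (fun y hy => hneg y hy.2)
  have h2 := intervalIntegral.integral_add_adjacent_intervals (hFi (0-1) 0) (hFi 0 (t-1))
  have h3 := intervalIntegral.integral_add_adjacent_intervals (hFi 0 (t-1)) (hFi (t-1) t)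
  have h4 : ∫ u in (0:ℝ)..t, f u = F t := rfl
  simp only [intervalIntegral.integral_const, sub_zero, smul_eq_mul, one_mul]
  linarith

lemma aux_jensen (p : ℝ) (hp : 1 ≤ p) (g : ℝ → ℝ) (hg : Continuous g) :
    |∫ v in (0:ℝ)..1, g v| ^ p ≤ ∫ v in (0:ℝ)..1, |g v| ^ p := by
  have hp0 : 0 ≤ p := by linarith
  have h1 : |∫ v in (0:ℝ)..1, g v| ≤ ∫ v in (0:ℝ)..1, |g v| :=
    intervalIntegral.abs_integral_le_integral_abs zero_le_one
  refine (Real.rpow_le_rpow (abs_nonneg _) h1 hp0).trans ?_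
  rw [intervalIntegral.integral_of_le zero_le_one, intervalIntegral.integral_of_le zero_le_one]
  have : IsProbabilityMeasure (volume.restrict (Ioc (0:ℝ) 1)) := ⟨by simp⟩
  have hc : Continuous fun v => |g v| ^ p := hg.abs.rpow_const (fun _ => Or.inr hp0)
  refine (convexOn_rpow hp).map_integral_le (μ := volume.restrict (Ioc (0:ℝ) 1))
    (f := fun v => |g v|) ?_ isClosed_Ici ?_ ?_ ?_
  · exact continuousOn_id.rpow_const (fun _ _ => Or.inr hp0)
  · exact Eventually.of_forall fun x => mem_Ici.2 (abs_nonneg (g x))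
  · exact (hg.abs.integrableOn_Icc (a := 0) (b := 1)).mono_set Ioc_subset_Icc_self
  · exact (hc.integrableOn_Icc (a := 0) (b := 1)).mono_set Ioc_subset_Icc_self

/-- with `f` locally integrable on `[0,∞)`, extended by zero on `(-∞,0)`,
`f₁(t) = ∫_{t-1}^t f(s) ds` and `f₂ = f - f₁`, one has for every `t ≥ 1` the Jensen bound
`|∫_0^t f₂(s) ds|^p ≤ ∫_0^1 |∫_{t+v-1}^t f(u) du|^p dv`, and consequently
`∫_1^∞ |∫_0^t f₂(s) ds|^p dt ≤ ∫_0^1 (∫_0^∞ |∫_t^{t+v} f(u) du|^p dt) dv`. -/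
theorem jensen_bound_for_f2
    (p : ℝ) (hp : 1 ≤ p) (f : ℝ → ℝ)
    (hf : LocallyIntegrableOn f (Ici 0))
    (hf0 : ∀ t < (0:ℝ), f t = 0) :
    (∀ t ≥ (1:ℝ),
      |∫ s in (0:ℝ)..t, (f s - ∫ u in (s - 1)..s, f u)| ^ p
        ≤ ∫ v in (0:ℝ)..1, |∫ u in (t + v - 1)..t, f u| ^ p) ∧
    (∫⁻ t in Ici (1:ℝ),
        ENNReal.ofReal (|∫ s in (0:ℝ)..t, (f s - ∫ u in (s - 1)..s, f u)| ^ p)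
      ≤ ∫⁻ v in Ioc (0:ℝ) 1,
          ∫⁻ t in Ici (0:ℝ), ENNReal.ofReal (|∫ u in t..(t + v), f u| ^ p)) := by
  have hp0 : 0 ≤ p := by linarith
  have hi := aux_ii f hf hf0
  have hFc : Continuous (fun x => ∫ u in (0:ℝ)..x, f u) :=
    intervalIntegral.continuous_primitive hi 0
  have hd : ∀ a b : ℝ, ∫ u in a..b, f u = (∫ u in (0:ℝ)..b, f u) - ∫ u in (0:ℝ)..a, f u := by
    intro a b
    rw [intervalIntegral.integral_interval_sub_left (hi _ _) (hi _ _)]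
  have hc2 : Continuous (fun q : ℝ × ℝ => ∫ u in (q.1 - q.2)..q.1, f u) := by
    have : (fun q : ℝ × ℝ => ∫ u in (q.1 - q.2)..q.1, f u) = fun q : ℝ × ℝ =>
        (∫ u in (0:ℝ)..q.1, f u) - ∫ u in (0:ℝ)..(q.1-q.2), f u := by
      funext q; rw [hd]
    rw [this]
    exact (hFc.comp continuous_fst).sub (hFc.comp (continuous_fst.sub continuous_snd))
  have hc3 : Continuous (fun q : ℝ × ℝ => |∫ u in (q.1 - q.2)..q.1, f u| ^ p) :=
    hc2.abs.rpow_const (fun _ => Or.inr hp0)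
  have key : ∀ t : ℝ, |∫ s in (0:ℝ)..t, (f s - ∫ u in (s - 1)..s, f u)| ^ p
        ≤ ∫ v in (0:ℝ)..1, |∫ u in (t - v)..t, f u| ^ p := by
    intro t
    rw [aux_eq f hi hf0 t]
    exact aux_jensen p hp _ (hc2.comp (Continuous.prodMk_right t))
  refine ⟨fun t _ => (key t).trans (le_of_eq ?_), ?_⟩
  · have := intervalIntegral.integral_comp_sub_left (a := 0) (b := 1)
      (fun v => |∫ u in (t - v)..t, f u| ^ p) 1
    simp only [sub_self, sub_zero] at this
    rw [← this]
    congr 1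
    funext v
    rw [show t - (1 - v) = t + v - 1 by ring]
  · have hm : Measurable (fun q : ℝ × ℝ => ENNReal.ofReal (|∫ u in (q.1 - q.2)..q.1, f u| ^ p)) :=
      hc3.measurable.ennreal_ofReal
    calc _ ≤ ∫⁻ t in Ici (1:ℝ), ∫⁻ v in Ioc (0:ℝ) 1,
              ENNReal.ofReal (|∫ u in (t - v)..t, f u| ^ p) := by
          refine lintegral_mono fun t => ?_
          refine (ENNReal.ofReal_le_ofReal (key t)).trans (le_of_eq ?_)
          rw [intervalIntegral.integral_of_le zero_le_one, ofReal_integral_eq_lintegral_ofReal]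
          · exact ((hc3.comp (Continuous.prodMk_right t)).integrableOn_Icc
              (a := 0) (b := 1)).mono_set Ioc_subset_Icc_self
          · exact Eventually.of_forall fun _ => by positivity
      _ = ∫⁻ v in Ioc (0:ℝ) 1, ∫⁻ t in Ici (1:ℝ),
              ENNReal.ofReal (|∫ u in (t - v)..t, f u| ^ p) :=
          lintegral_lintegral_swap hm.aemeasurable
      _ ≤ _ := by
          refine setLIntegral_mono' measurableSet_Ioc fun v hv => ?_
          rw [← lintegral_indicator measurableSet_Ici, ← lintegral_indicator measurableSet_Ici,
            ← lintegral_add_right_eq_self _ v]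
          refine lintegral_mono fun t => ?_
          simp only [indicator, mem_Ici, add_sub_cancel_right]
          split_ifs with h1 h2
          · exact le_rfl
          · exact absurd (by linarith [hv.2]) h2
          all_goals simp
end

section
/- Let ν be a finite signed Borel measure on [0,∞) and let r : [0,∞) → ℝ be absolutely continuous with r(0) = 1 and r′(t) = ∫_{[0,t]} r(t−s) dν(s) for almost every t > 0. If r ∈ L¹([0,∞)), then r′ ∈ L¹([0,∞)), r(t) → 0 as t → ∞, and r ∈ L^p([0,∞)) for every p ≥ 1. -/
open MeasureTheory Set Filter

/-- The integral of `g` over the set `A` against the finite signed Borel measure `ν`,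
defined through the Jordan decomposition `ν = ν⁺ - ν⁻`. -/
noncomputable def signedSetIntegral (ν : MeasureTheory.SignedMeasure ℝ) (g : ℝ → ℝ)
    (A : Set ℝ) : ℝ :=
  (∫ s in A, g s ∂ν.toJordanDecomposition.posPart)
    - ∫ s in A, g s ∂ν.toJordanDecomposition.negPart

lemma aux_conv_integrable (μ : Measure ℝ) [IsFiniteMeasure μ] (r : ℝ → ℝ)
    (hc : ContinuousOn r (Ici 0)) (hr : IntegrableOn r (Ici 0)) :
    IntegrableOn (fun t => ∫ s in Icc 0 t, r (t - s) ∂μ) (Ioi 0) := by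
  set R : ℝ → ℝ := (Ici (0:ℝ)).indicator r with hR
  have hRm : Measurable R := by
    classical
    have h := ContinuousOn.measurable_piecewise (s := Ici (0:ℝ)) (f := r) (g := fun _ => (0:ℝ))
      hc continuousOn_const measurableSet_Ici
    rw [hR, ← Set.piecewise_eq_indicator]
    exact h
  have hRi : Integrable R := (integrable_indicator_iff measurableSet_Ici).2 hr
  set κ : Measure ℝ := μ.restrict (Ici 0) with hκ
  have hprod : Integrable (fun z : ℝ × ℝ => R (z.1 - z.2)) ((volume : Measure ℝ).prod κ) := by
    rw [integrable_prod_iff' (by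
      exact (hRm.comp (measurable_fst.sub measurable_snd)).aestronglyMeasurable)]
    refine ⟨Eventually.of_forall fun s => hRi.comp_sub_right s, ?_⟩
    have : (fun s => ∫ t, ‖R (t - s)‖) = fun _ : ℝ => ∫ t, ‖R t‖ := by
      funext s
      exact integral_sub_right_eq_self (fun t => ‖R t‖) s
    simp only [this]
    exact integrable_const _
  have h1 := hprod.integral_prod_left
  refine h1.integrableOn.congr_fun ?_ measurableSet_Ioi
  intro t _
  simp only
  have : ∀ s, R (t - s) = (Iic t).indicator (fun s => r (t - s)) s := by
    intro s
    simp only [hR, indicator, mem_Ici, mem_Iic, sub_nonneg]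
  simp only [this]
  rw [integral_indicator measurableSet_Iic, hκ, Measure.restrict_restrict measurableSet_Iic,
    Set.inter_comm, Ici_inter_Iic]

/-- if the differential resolvent `r` of the finite signed Borel measure `ν`
on `[0,∞)` (i.e. `r` locally absolutely continuous, `r(0) = 1`,
`r'(t) = ∫_{[0,t]} r(t-s) dν(s)` a.e. `t > 0`) is integrable on `[0,∞)`, then
`r' ∈ L¹([0,∞))`, `r(t) → 0` as `t → ∞`, and `r ∈ L^p([0,∞))` for every `p ≥ 1`. -/
theorem resolvent_L1_implies_derivative_L1_limit_zero_and_Lp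
    (ν : MeasureTheory.SignedMeasure ℝ)
    (hν : ν.restrict (Iio 0) = 0)
    (r r' : ℝ → ℝ)
    (hr'loc : LocallyIntegrableOn r' (Ici 0))
    (hr0 : r 0 = 1)
    (hFTC : ∀ t ≥ (0:ℝ), r t = 1 + ∫ s in (0:ℝ)..t, r' s)
    (hres : ∀ᵐ t ∂(volume.restrict (Ioi (0:ℝ))),
      r' t = signedSetIntegral ν (fun s => r (t - s)) (Icc 0 t))
    (hrL1 : IntegrableOn r (Ici 0)) :
    IntegrableOn r' (Ici 0) ∧
    Tendsto r atTop (nhds 0) ∧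
    ∀ p ≥ (1:ℝ), IntegrableOn (fun t => |r t| ^ p) (Ici 0) := by
  have hint : ∀ T, 0 ≤ T → IntegrableOn r' (Icc 0 T) := fun T hT =>
    hr'loc.integrableOn_compact_subset Icc_subset_Ici_self isCompact_Icc
  have hc : ContinuousOn r (Ici 0) := by
    have hg : ContinuousOn (fun t => 1 + ∫ s in (0:ℝ)..t, r' s) (Ici 0) := by
      intro t ht
      have ht' : (0:ℝ) ≤ t := ht
      have hT : (0:ℝ) ≤ t + 1 := by linarith
      have h := intervalIntegral.continuousOn_primitive_interval (μ := volume) (f := r')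
        (a := 0) (b := t + 1) (by rw [uIcc_of_le hT]; exact hint _ hT)
      rw [uIcc_of_le hT] at h
      have h2 := h t ⟨ht', by linarith⟩
      refine (continuousWithinAt_const.add h2).mono_of_mem_nhdsWithin ?_
      rw [← Ici_inter_Iic]
      exact inter_mem self_mem_nhdsWithin (mem_nhdsWithin_of_mem_nhds (Iic_mem_nhds (by linarith)))
    exact hg.congr fun t ht => hFTC t ht
  have hIoi : IntegrableOn r' (Ioi 0) := by
    have h := (aux_conv_integrable ν.toJordanDecomposition.posPart r hc hrL1).sub
      (aux_conv_integrable ν.toJordanDecomposition.negPart r hc hrL1)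
    refine h.congr ?_
    filter_upwards [hres] with t ht
    rw [ht]; rfl
  have hlim : Tendsto r atTop (nhds (1 + ∫ s in Ioi (0:ℝ), r' s)) := by
    have h := (intervalIntegral_tendsto_integral_Ioi 0 hIoi tendsto_id).const_add 1
    refine h.congr' ?_
    filter_upwards [eventually_ge_atTop 0] with t ht
    exact (hFTC t ht).symm
  have hL : (1 + ∫ s in Ioi (0:ℝ), r' s) = 0 := by
    refine IntegrableAtFilter.eq_zero_of_tendsto (μ := volume) (l := atTop) (f := r)
      ⟨Ici 0, Ici_mem_atTop 0, hrL1⟩ ?_ hlim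
    intro s hs
    obtain ⟨a, ha⟩ := mem_atTop_sets.1 hs
    exact top_le_iff.1 ((Real.volume_Ici (a := a)).symm.le.trans (measure_mono fun x hx => ha x hx))
  refine ⟨(integrableOn_Ici_iff_integrableOn_Ioi (by simp)).2 hIoi, hL ▸ hlim, ?_⟩
  intro p hp
  set M : ℝ := 1 + ∫ s in Ioi (0:ℝ), |r' s| with hM
  have hb : ∀ t ≥ (0:ℝ), |r t| ≤ M := by
    intro t ht
    rw [hFTC t ht]
    refine (abs_add_le _ _).trans ?_
    rw [abs_one, hM, intervalIntegral.integral_of_le ht]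
    gcongr
    refine (abs_integral_le_integral_abs).trans ?_
    exact setIntegral_mono_set hIoi.abs (Eventually.of_forall fun _ => abs_nonneg _)
      (Eventually.of_forall fun x hx => hx.1)
  refine Integrable.mono' (hrL1.abs.const_mul (M ^ (p - 1))) ?_ ?_
  · exact (ContinuousOn.rpow_const hc.abs fun x _ => Or.inr (by linarith)).aestronglyMeasurable
      measurableSet_Ici
  · filter_upwards [ae_restrict_mem measurableSet_Ici] with t ht
    rw [Real.norm_of_nonneg (Real.rpow_nonneg (abs_nonneg _) _)]
    have : |r t| ^ p = |r t| ^ (p - 1) * |r t| := by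
      rcases eq_or_ne (|r t|) 0 with h | h
      · rw [h, mul_zero, Real.zero_rpow (by linarith)]
      · rw [← Real.rpow_add_one h]; congr 1; ring
    rw [this]
    gcongr
    exact hb t ht
end

section
/- Let p ≥ 1, let ν be a finite signed Borel measure on [0,∞), let f : [0,∞) → ℝ be locally integrable, and let r be the differential resolvent of ν; assume r ∈ L¹([0,∞)). If for every θ ∈ (0,1] the function t ↦ ∫_t^{t+θ} f(s) ds belongs to L^p([0,∞)), then for every ξ ∈ ℝ the function x(t) = r(t) ξ + ∫_0^t r(t−s) f(s) ds belongs to L^p([0,∞)). -/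
open MeasureTheory Set Filter

open scoped ENNReal Topology

lemma aux_jensen_s7 {α : Type*} [MeasurableSpace α] (p : ℝ) (hp : 1 ≤ p) (μ : Measure α)
    (h : α → ℝ≥0∞) (hh : AEMeasurable h μ) :
    (∫⁻ s, h s ∂μ) ^ p ≤ μ univ ^ (p - 1) * ∫⁻ s, h s ^ p ∂μ := by
  rcases hp.eq_or_lt with rfl | hp
  · simp
  have hq := Real.HolderConjugate.conjExponent hp
  have := ENNReal.lintegral_mul_le_Lp_mul_Lq μ hq hh (g := fun _ => 1) aemeasurable_const
  simp only [Pi.mul_apply, mul_one, ENNReal.one_rpow, lintegral_const, one_mul] at this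
  calc _ ≤ ((∫⁻ s, h s ^ p ∂μ) ^ (1 / p) * μ univ ^ (1 / p.conjExponent)) ^ p := by gcongr
    _ = _ := by
      have hp0 : p ≠ 0 := by positivity
      rw [ENNReal.mul_rpow_of_nonneg _ _ (by positivity), ← ENNReal.rpow_mul, ← ENNReal.rpow_mul,
        one_div_mul_cancel hp0, ENNReal.rpow_one, mul_comm]
      congr 2
      rw [Real.conjExponent]
      have : p - 1 ≠ 0 := by linarith
      field_simp

lemma aux_mink (p : ℝ) (hp : 1 ≤ p) (μ l : Measure ℝ) [IsFiniteMeasure μ] [SFinite l]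
    (H : ℝ → ℝ → ℝ≥0∞) (hH : Measurable (Function.uncurry H)) (C : ℝ≥0∞) (hC : C ≠ ⊤)
    (h : ∀ᵐ s ∂μ, ∫⁻ t, H t s ^ p ∂l ≤ C) :
    ∫⁻ t, (∫⁻ s, H t s ∂μ) ^ p ∂l < ⊤ := by
  have hm : Measurable (fun z : ℝ × ℝ => H z.1 z.2 ^ p) := hH.pow_const p
  calc _ ≤ ∫⁻ t, μ univ ^ (p - 1) * ∫⁻ s, H t s ^ p ∂μ ∂l := by
        gcongr with t
        exact aux_jensen_s7 p hp μ _ (hH.comp measurable_prodMk_left).aemeasurable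
    _ = μ univ ^ (p - 1) * ∫⁻ t, ∫⁻ s, H t s ^ p ∂μ ∂l := by
        rw [lintegral_const_mul]
        exact hm.lintegral_prod_right'
    _ = μ univ ^ (p - 1) * ∫⁻ s, ∫⁻ t, H t s ^ p ∂l ∂μ := by
        rw [lintegral_lintegral_swap]
        exact hm.aemeasurable
    _ ≤ μ univ ^ (p - 1) * ∫⁻ s, C ∂μ := by
        gcongr 1
        exact lintegral_mono_ae h
    _ < ⊤ := by
        rw [lintegral_const]
        refine ENNReal.mul_lt_top (ENNReal.rpow_lt_top_of_nonneg (by linarith) (by simp)) ?_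
        exact ENNReal.mul_lt_top hC.lt_top (by simp)

lemma memLp_iff_lint (p : ℝ) (hp : 1 ≤ p) (l : Measure ℝ) (h : ℝ → ℝ)
    (hm : AEStronglyMeasurable h l) :
    MemLp h (ENNReal.ofReal p) l ↔ ∫⁻ t, ‖h t‖ₑ ^ p ∂l < ⊤ := by
  have h0 : ENNReal.ofReal p ≠ 0 := by simp; linarith
  rw [MemLp, and_iff_right hm, eLpNorm_lt_top_iff_lintegral_rpow_enorm_lt_top h0 (by simp),
    ENNReal.toReal_ofReal (by linarith)]

lemma aux_young (p : ℝ) (hp : 1 ≤ p) (k h : ℝ → ℝ) (hk : Integrable k)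
    (hhm : StronglyMeasurable h) (hh : MemLp h (ENNReal.ofReal p)) :
    MemLp (fun t => ∫ s, k s * h (t - s)) (ENNReal.ofReal p) := by
  have hm : AEStronglyMeasurable (fun t => ∫ s, k s * h (t - s)) volume := 
    (hk.aestronglyMeasurable.convolution_integrand (ContinuousLinearMap.mul ℝ ℝ) 
      hhm.aestronglyMeasurable (μ := volume)).integral_prod_right'
  rw [memLp_iff_lint p hp _ _ hm]
  have hh' := (memLp_iff_lint p hp _ _ hh.1).1 hh
  have hke : AEMeasurable (fun s => ‖k s‖ₑ) volume := hk.aestronglyMeasurable.enorm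
  have : IsFiniteMeasure (volume.withDensity (fun s => ‖k s‖ₑ)) :=
    isFiniteMeasure_withDensity hk.2.ne
  have key := aux_mink p hp (volume.withDensity (fun s => ‖k s‖ₑ)) volume
    (fun t s => ‖h (t - s)‖ₑ) (hhm.measurable.comp (measurable_fst.sub measurable_snd)).enorm 
    (∫⁻ t, ‖h t‖ₑ ^ p) hh'.ne (ae_of_all _ fun s => 
      (lintegral_sub_right_eq_self (fun t => ‖h t‖ₑ ^ p) s).le)
  refine lt_of_le_of_lt ?_ key
  gcongr with t
  have hmt : Measurable (fun s => ‖h (t - s)‖ₑ) :=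
    (hhm.measurable.comp (measurable_id.const_sub t)).enorm
  rw [lintegral_withDensity_eq_lintegral_mul₀ hke hmt.aemeasurable]
  refine (enorm_integral_le_lintegral_enorm _).trans (le_of_eq ?_)
  simp

lemma aux_baire (p : ℝ) (F : ℝ → ℝ) (hF : Continuous F)
    (h : ∀ θ ∈ Icc (0:ℝ) 1, ∫⁻ t in Ici (0:ℝ), ‖F (t + θ) - F t‖ₑ ^ p < ⊤) :
    ∃ a b : ℝ, ∃ n : ℕ, 0 ≤ a ∧ a < b ∧ b ≤ 1 ∧ ∀ θ ∈ Icc a b,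
      ∫⁻ t in Ici (0:ℝ), ‖F (t + θ) - F t‖ₑ ^ p ≤ n := by
  let c : ℝ → ℝ := fun θ => max 0 (min θ 1)
  have hc : Continuous c := by fun_prop
  have hc1 : ∀ θ, c θ ∈ Icc (0:ℝ) 1 := fun θ => ⟨le_max_left _ _, max_le zero_le_one (min_le_right _ _)⟩
  let N : ℝ → ℝ≥0∞ := fun θ => ∫⁻ t in Ici (0:ℝ), ‖F (t + c θ) - F t‖ₑ ^ p
  let E : ℕ → Set ℝ := fun n => {θ | N θ ≤ n}
  have hE : ∀ n, IsClosed (E n) := by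
    intro n
    apply IsSeqClosed.isClosed
    intro u x hu hx
    have : N x ≤ liminf (fun i => N (u i)) atTop := by
      refine le_trans (le_of_eq ?_) (lintegral_liminf_le (fun i => ?_))
      · refine lintegral_congr fun t => ?_
        refine (Tendsto.liminf_eq ?_).symm
        have : Continuous (fun θ => ‖F (t + c θ) - F t‖ₑ ^ p) := 
          (ENNReal.continuous_rpow_const).comp (by fun_prop)
        exact (this.tendsto x).comp hx
      · have : Continuous (fun t => ‖F (t + c (u i)) - F t‖ₑ ^ p) := 
          (ENNReal.continuous_rpow_const).comp (by fun_prop)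
        exact this.measurable
    refine this.trans ?_
    refine (liminf_le_liminf (v := fun _ => (n : ℝ≥0∞)) (Eventually.of_forall hu)).trans ?_
    simp
  have hU : ⋃ n, E n = univ := by
    ext θ
    simp only [mem_iUnion, mem_univ, iff_true]
    obtain ⟨n, hn⟩ := ENNReal.exists_nat_gt (h (c θ) (hc1 θ)).ne
    exact ⟨n, hn.le⟩
  obtain ⟨x, hx, hx2⟩ := (dense_iUnion_interior_of_closed hE hU).exists_mem_open isOpen_Ioo
    (nonempty_Ioo.2 (zero_lt_one (α := ℝ)))
  rw [mem_iUnion] at hx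
  obtain ⟨n, hn⟩ := hx
  have hnb : interior (E n) ∩ Ioo 0 1 ∈ 𝓝 x := 
    (isOpen_interior.inter isOpen_Ioo).mem_nhds ⟨hn, hx2⟩
  obtain ⟨ε, hε, hb⟩ := Metric.mem_nhds_iff.1 hnb
  rw [Real.ball_eq_Ioo] at hb
  have hsub : Icc x (x + ε / 2) ⊆ interior (E n) ∩ Ioo 0 1 := fun y hy =>
    hb ⟨by linarith [hy.1], by linarith [hy.2]⟩
  refine ⟨x, x + ε / 2, n, hx2.1.le, by linarith, 
    (hsub ⟨by linarith, le_rfl⟩).2.2.le, fun θ hθ => ?_⟩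
  have h1 : θ ∈ E n := interior_subset (hsub hθ).1
  have h2 : c θ = θ := by
    have := (hsub hθ).2
    simp only [c]
    rw [min_eq_left this.2.le, max_eq_right this.1.le]
  simpa only [E, N, h2, mem_ofPred_eq] using h1

lemma aux_fubini (g k : ℝ → ℝ) (t : ℝ) (ht : 0 ≤ t) (hg : IntervalIntegrable g volume 0 t)
    (hk : IntervalIntegrable k volume 0 t) :
    ∫ s in (0:ℝ)..t, (∫ u in (0:ℝ)..(t - s), k u) * g s =
    ∫ u in (0:ℝ)..t, k u * ∫ s in (0:ℝ)..(t - u), g s := by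
  have hg' := (intervalIntegrable_iff_integrableOn_Ioc_of_le ht).1 hg
  have hk' := (intervalIntegrable_iff_integrableOn_Ioc_of_le ht).1 hk
  have hS : MeasurableSet {z : ℝ × ℝ | z.1 + z.2 ≤ t} := 
    measurableSet_le (measurable_fst.add measurable_snd) measurable_const
  have hint : Integrable (Function.uncurry fun s u => 
      ({z : ℝ × ℝ | z.1 + z.2 ≤ t}).indicator (fun z => g z.1 * k z.2) (s, u)) 
      ((volume.restrict (Ioc 0 t)).prod (volume.restrict (Ioc 0 t))) := 
    (Integrable.mul_prod hg' hk').indicator hS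
  have := integral_integral_swap hint
  rw [intervalIntegral.integral_of_le ht, intervalIntegral.integral_of_le ht]
  have aux : ∀ (q : ℝ → ℝ) (s : ℝ), s ∈ Ioc 0 t → 
      ∫ u in (0:ℝ)..(t - s), q u = ∫ u in Ioc 0 t, (Iic (t - s)).indicator q u := by
    intro q s hs
    rw [intervalIntegral.integral_of_le (by linarith [hs.2]), setIntegral_indicator measurableSet_Iic]
    congr 2
    ext u
    simp only [mem_Ioc, mem_inter_iff, mem_Iic]
    constructor
    · intro h; exact ⟨⟨h.1, by linarith [hs.1]⟩, h.2⟩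
    · intro h; exact ⟨h.1.1, h.2⟩
  convert this using 1
  · refine setIntegral_congr_fun measurableSet_Ioc fun s hs => ?_
    rw [aux k s hs, ← integral_mul_const]
    refine integral_congr_ae (ae_of_all _ fun u => ?_)
    simp only [indicator, mem_Iic, mem_ofPred_eq]
    have : u ≤ t - s ↔ s + u ≤ t := by constructor <;> intro h <;> linarith
    simp only [this]
    split_ifs <;> ring
  · refine setIntegral_congr_fun measurableSet_Ioc fun s hs => ?_
    rw [aux g s hs, ← integral_const_mul]
    refine integral_congr_ae (ae_of_all _ fun u => ?_)
    simp only [indicator, mem_Iic, mem_ofPred_eq]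
    have : u ≤ t - s ↔ u + s ≤ t := by constructor <;> intro h <;> linarith
    simp only [this]
    split_ifs <;> ring

lemma aux_conv_eq (k h : ℝ → ℝ) (t : ℝ) (ht : 0 ≤ t) :
    ∫ u in (0:ℝ)..t, k u * h (t - u) =
      ∫ u, (Ici (0:ℝ)).indicator k u * (Ici (0:ℝ)).indicator h (t - u) := by
  rw [intervalIntegral.integral_of_le ht, ← integral_Icc_eq_integral_Ioc,
    ← integral_indicator measurableSet_Icc]
  congr 1
  ext u
  by_cases h1 : 0 ≤ u <;> by_cases h2 : u ≤ t <;> simp [indicator, h1, h2]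

lemma aux_conv_memLp (p : ℝ) (hp : 1 ≤ p) (k h : ℝ → ℝ)
    (hk : Integrable ((Ici (0:ℝ)).indicator k)) (hh : Continuous h)
    (hL : MemLp h (ENNReal.ofReal p) (volume.restrict (Ici 0))) :
    MemLp (fun t => ∫ u in (0:ℝ)..t, k u * h (t - u)) (ENNReal.ofReal p)
      (volume.restrict (Ici 0)) := by
  have := (aux_young p hp _ ((Ici (0:ℝ)).indicator h) hk
    (hh.stronglyMeasurable.indicator measurableSet_Ici)
    ((memLp_indicator_iff_restrict measurableSet_Ici).2 hL)).restrict (Ici 0)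
  refine this.ae_eq ?_
  filter_upwards [ae_restrict_mem measurableSet_Ici] with t ht
  exact (aux_conv_eq k h t ht).symm

lemma aux_G (p : ℝ) (hp : 1 ≤ p) (F : ℝ → ℝ) (hF : Continuous F) (a b : ℝ) (hab : a < b) (n : ℕ)
    (h : ∀ θ ∈ Icc a b, ∫⁻ t in Ici (0:ℝ), ‖F (t + θ) - F t‖ₑ ^ p ≤ n) :
    MemLp (fun t => ∫ θ in a..b, (F (t + θ) - F t)) (ENNReal.ofReal p)
      (volume.restrict (Ici 0)) := by
  have hc : Continuous (fun t => ∫ θ in a..b, (F (t + θ) - F t)) :=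
    intervalIntegral.continuous_parametric_intervalIntegral_of_continuous' (by fun_prop) a b
  rw [memLp_iff_lint p hp _ _ hc.aestronglyMeasurable]
  have key := aux_mink p hp (volume.restrict (Ioc a b)) (volume.restrict (Ici 0))
    (fun t θ => ‖F (t + θ) - F t‖ₑ) 
    (Continuous.measurable (by simp only [Function.uncurry_def]; fun_prop)) n (by simp) (by
      filter_upwards [ae_restrict_mem measurableSet_Ioc] with θ hθ
      exact h θ (Ioc_subset_Icc_self hθ))
  refine lt_of_le_of_lt ?_ key
  gcongr with t
  rw [intervalIntegral.integral_of_le hab.le]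
  exact enorm_integral_le_lintegral_enorm _

lemma aux_shift (p : ℝ) (D : ℝ → ℝ) (a : ℝ) (ha : 0 ≤ a) :
    ∫⁻ t in Ici (0:ℝ), ‖D (t + a)‖ₑ ^ p ≤ ∫⁻ t in Ici (0:ℝ), ‖D t‖ₑ ^ p := by
  rw [← lintegral_indicator measurableSet_Ici, ← lintegral_indicator measurableSet_Ici,
    ← lintegral_add_right_eq_self ((Ici (0:ℝ)).indicator fun t => ‖D t‖ₑ ^ p) a]
  refine lintegral_mono fun t => ?_
  by_cases h1 : 0 ≤ t
  · have h2 : 0 ≤ t + a := by linarith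
    simp [indicator, h1, h2]
  · simp [indicator, h1]

lemma aux_core (p : ℝ) (hp : 1 ≤ p) (f k R : ℝ → ℝ)
    (hf : ∀ a b, IntervalIntegrable f volume a b) (hk : Integrable k)
    (hR : ∀ t, R t = 1 + ∫ s in (0:ℝ)..t, k s)
    (hRi : Integrable ((Ici (0:ℝ)).indicator R))
    (hFp : ∀ θ ∈ Ioc (0:ℝ) 1,
      IntegrableOn (fun t => |∫ s in t..(t + θ), f s| ^ p) (Ici 0)) (ξ : ℝ) :
    MemLp (fun t => R t * ξ + ∫ s in (0:ℝ)..t, R (t - s) * f s) (ENNReal.ofReal p)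
      (volume.restrict (Ici 0)) := by
  have hp0 : p ≠ 0 := by linarith
  have hki : ∀ a b, IntervalIntegrable k volume a b := fun a b => hk.intervalIntegrable
  set F : ℝ → ℝ := fun t => ∫ s in (0:ℝ)..t, f s with hFdef
  have hF : Continuous F := intervalIntegral.continuous_primitive hf 0
  have hF0 : F 0 = 0 := by simp [F]
  have hRc : Continuous R := by
    have : R = fun t => 1 + ∫ s in (0:ℝ)..t, k s := funext hR
    rw [this]
    exact continuous_const.add (intervalIntegral.continuous_primitive hki 0)
  have hFd : ∀ x y, ∫ s in x..y, f s = F y - F x := fun x y =>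
    (intervalIntegral.integral_interval_sub_left (hf 0 y) (hf 0 x)).symm
  have hFp' : ∀ θ ∈ Icc (0:ℝ) 1, ∫⁻ t in Ici (0:ℝ), ‖F (t + θ) - F t‖ₑ ^ p < ⊤ := by
    intro θ hθ
    rcases hθ.1.eq_or_lt with rfl | h0
    · simp [show 0 < p by linarith]
    · have := (hFp θ ⟨h0, hθ.2⟩).2
      rw [HasFiniteIntegral] at this
      refine lt_of_le_of_lt (le_of_eq (lintegral_congr fun t => ?_)) this
      rw [hFd, Real.enorm_rpow_of_nonneg (abs_nonneg _) (by linarith), Real.enorm_abs]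
  obtain ⟨a, b, n, ha, hab, hb, hn⟩ := aux_baire p F hF hFp'
  set c : ℝ := (b - a)⁻¹ with hc
  have hba : b - a ≠ 0 := by linarith
  set G : ℝ → ℝ := fun t => c * ∫ θ in a..b, (F (t + θ) - F t) with hG
  have hGc : Continuous G := continuous_const.mul
    (intervalIntegral.continuous_parametric_intervalIntegral_of_continuous' (by fun_prop) a b)
  have hGL : MemLp G (ENNReal.ofReal p) (volume.restrict (Ici 0)) :=
    (aux_G p hp F hF a b hab n hn).const_mul c
  set g : ℝ → ℝ := fun t => c * (F (t + b) - F (t + a)) with hg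
  have hgc : Continuous g := by fun_prop
  have hgL : MemLp g (ENNReal.ofReal p) (volume.restrict (Ici 0)) := by
    refine MemLp.const_mul ?_ c
    rw [memLp_iff_lint p hp _ _ (Continuous.aestronglyMeasurable (by fun_prop))]
    refine lt_of_le_of_lt (le_of_eq_of_le ?_ 
      (aux_shift p (fun t => F (t + (b - a)) - F t) a ha)) (hFp' (b - a) ⟨by linarith, by linarith⟩)
    refine lintegral_congr fun t => ?_
    rw [show t + a + (b - a) = t + b by ring]
  have hFi : ∀ x y, IntervalIntegrable F volume x y := fun x y => hF.intervalIntegrable x y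
  have hGeq : ∀ t, G t = c * (∫ θ in (t + a)..(t + b), F θ) - F t := by
    intro t
    simp only [G]
    rw [intervalIntegral.integral_sub (Continuous.intervalIntegrable (by fun_prop) _ _) (by simp),
      intervalIntegral.integral_comp_add_left, intervalIntegral.integral_const, smul_eq_mul,
      mul_sub, ← mul_assoc, hc, inv_mul_cancel₀ hba, one_mul]
  have hPhi : ∀ t, ∫ s in (0:ℝ)..t, (f s - g s) = G 0 - G t := by
    intro t
    rw [intervalIntegral.integral_sub (hf _ _) (hgc.intervalIntegrable _ _)]
    simp only [hg]
    rw [intervalIntegral.integral_const_mul,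
      intervalIntegral.integral_sub (Continuous.intervalIntegrable (by fun_prop) _ _) 
        (Continuous.intervalIntegrable (by fun_prop) _ _),
      intervalIntegral.integral_comp_add_right, intervalIntegral.integral_comp_add_right,
      hGeq, hGeq, hF0]
    have e1 := intervalIntegral.integral_add_adjacent_intervals (hFi (0 + a) (0 + b)) 
      (hFi (0 + b) (t + b))
    have e2 := intervalIntegral.integral_add_adjacent_intervals (hFi (0 + a) (t + a)) 
      (hFi (t + a) (t + b))
    have e3 : (∫ s in (0:ℝ)..t, f s) = F t := rfl
    rw [e3]
    linear_combination c * e2 - c * e1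
  have hRL : MemLp R (ENNReal.ofReal p) (volume.restrict (Ici 0)) := by
    rw [memLp_iff_lint p hp _ _ hRc.aestronglyMeasurable]
    have hb : ∀ t, ‖R t‖ₑ ≤ 1 + ∫⁻ s, ‖k s‖ₑ := by
      intro t
      rw [hR]
      refine (enorm_add_le _ _).trans ?_
      gcongr
      · simp
      · have e : ‖∫ s in (0:ℝ)..t, k s‖ₑ = ‖∫ s in uIoc 0 t, k s‖ₑ := by
          rw [← ofReal_norm, ← ofReal_norm, intervalIntegral.norm_integral_eq_norm_integral_uIoc]
        rw [e]
        exact (enorm_integral_le_lintegral_enorm _).trans (setLIntegral_le_lintegral _ _)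
    have hRi' : ∫⁻ t in Ici (0:ℝ), ‖R t‖ₑ < ⊤ := 
      ((integrable_indicator_iff measurableSet_Ici).1 hRi).2
    calc _ ≤ ∫⁻ t in Ici (0:ℝ), (1 + ∫⁻ s, ‖k s‖ₑ) ^ (p - 1) * ‖R t‖ₑ := by
          gcongr with t
          have : ‖R t‖ₑ ^ p = ‖R t‖ₑ ^ (p - 1) * ‖R t‖ₑ := by
            conv_rhs => rw [← ENNReal.rpow_one ‖R t‖ₑ, ← ENNReal.rpow_mul, one_mul]
            rw [← ENNReal.rpow_add_of_nonneg _ _ (by linarith) (by norm_num)]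
            simp
          rw [this]
          gcongr
          exact hb t
      _ = (1 + ∫⁻ s, ‖k s‖ₑ) ^ (p - 1) * ∫⁻ t in Ici (0:ℝ), ‖R t‖ₑ := 
          lintegral_const_mul _ hRc.measurable.enorm
      _ < ⊤ := by
          refine ENNReal.mul_lt_top (ENNReal.rpow_lt_top_of_nonneg (by linarith) ?_) hRi'
          exact (ENNReal.add_lt_top.2 ⟨ENNReal.one_lt_top, hk.2⟩).ne
  have hT1 := aux_conv_memLp p hp R g hRi hgc hgL
  have hT2 := aux_conv_memLp p hp k G (hk.indicator measurableSet_Ici) hGc hGL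
  have hsum := (((hRL.mul_const ξ).add hT1).add ((hRL.const_mul (G 0)).sub hGL)).sub hT2
  refine hsum.ae_eq ?_
  filter_upwards [ae_restrict_mem measurableSet_Ici] with t ht
  have ht : 0 ≤ t := ht
  simp only [Pi.add_apply, Pi.sub_apply]
  have hfg : ∀ x y, IntervalIntegrable (fun s => f s - g s) volume x y := fun x y =>
    (hf x y).sub (hgc.intervalIntegrable _ _)
  have s1 : ∫ s in (0:ℝ)..t, R (t - s) * f s = 
      (∫ s in (0:ℝ)..t, R (t - s) * g s) + ∫ s in (0:ℝ)..t, R (t - s) * (f s - g s) := by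
    rw [← intervalIntegral.integral_add]
    · congr 1; ext s; ring
    · exact Continuous.intervalIntegrable (by fun_prop) _ _
    · exact (hfg 0 t).continuousOn_mul (Continuous.continuousOn (by fun_prop))
  have s2 : ∫ s in (0:ℝ)..t, R (t - s) * g s = ∫ u in (0:ℝ)..t, R u * g (t - u) := by
    have := intervalIntegral.integral_comp_sub_left (a := 0) (b := t) 
      (fun u => R u * g (t - u)) t
    simpa using this
  have s3 : ∫ s in (0:ℝ)..t, R (t - s) * (f s - g s) = 
      (∫ s in (0:ℝ)..t, (f s - g s)) + 
        ∫ s in (0:ℝ)..t, (∫ u in (0:ℝ)..(t - s), k u) * (f s - g s) := by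
    rw [← intervalIntegral.integral_add (hfg 0 t)]
    · congr 1; ext s; rw [hR]; ring
    · refine (hfg 0 t).continuousOn_mul (Continuous.continuousOn ?_)
      exact (intervalIntegral.continuous_primitive hki 0).comp (continuous_const.sub continuous_id)
  have s4 : ∫ u in (0:ℝ)..t, k u * (G 0 - G (t - u)) = 
      G 0 * (∫ u in (0:ℝ)..t, k u) - ∫ u in (0:ℝ)..t, k u * G (t - u) := by
    rw [← intervalIntegral.integral_const_mul, ← intervalIntegral.integral_sub]
    · congr 1; ext s; ring
    · exact (hki 0 t).const_mul _
    · exact (hki 0 t).mul_continuousOn (Continuous.continuousOn (by fun_prop))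
  rw [s1, s2, s3, aux_fubini _ _ t ht (hfg 0 t) (hki 0 t)]
  simp only [hPhi]
  rw [s4, hR t]
  ring

lemma aux_indicator_ii (g : ℝ → ℝ) (hg : LocallyIntegrableOn g (Ici 0)) (a b : ℝ) :
    IntervalIntegrable ((Ici (0:ℝ)).indicator g) volume a b := by
  rw [intervalIntegrable_iff]
  refine IntegrableOn.mono_set (t := uIcc a b) ?_ uIoc_subset_uIcc
  rw [IntegrableOn, integrable_indicator_iff measurableSet_Ici, IntegrableOn,
    Measure.restrict_restrict measurableSet_Ici]
  exact hg.integrableOn_compact_subset inter_subset_left 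
    (isCompact_uIcc.inter_left isClosed_Ici)

lemma aux_integral_indicator (g : ℝ → ℝ) (a b : ℝ) (ha : 0 ≤ a) (hb : 0 ≤ b) :
    ∫ s in a..b, (Ici (0:ℝ)).indicator g s = ∫ s in a..b, g s := by
  refine intervalIntegral.integral_congr fun s hs => ?_
  exact indicator_of_mem (show s ∈ Ici (0:ℝ) from (le_min ha hb).trans hs.1) g

lemma aux_set_bound (μ : Measure ℝ) (r R : ℝ → ℝ) (hrR : ∀ t ≥ (0:ℝ), r t = R t) (t : ℝ) :
    ‖∫ s in Icc 0 t, r (t - s) ∂μ‖ₑ ≤ ∫⁻ s, ‖(Ici (0:ℝ)).indicator R (t - s)‖ₑ ∂μ := by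
  refine (enorm_integral_le_lintegral_enorm _).trans ?_
  rw [← lintegral_indicator measurableSet_Icc]
  refine lintegral_mono fun s => ?_
  by_cases h : s ∈ Icc 0 t
  · have h1 : 0 ≤ t - s := by linarith [h.2]
    rw [indicator_of_mem h, indicator_of_mem (show t - s ∈ Ici (0:ℝ) from h1), hrR _ h1]
  · rw [indicator_of_notMem h]
    exact zero_le

lemma aux_r'_int (ν : MeasureTheory.SignedMeasure ℝ) (r r' R : ℝ → ℝ)
    (hr'loc : LocallyIntegrableOn r' (Ici 0)) (hrR : ∀ t ≥ (0:ℝ), r t = R t) (hR : Continuous R)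
    (hRi : Integrable ((Ici (0:ℝ)).indicator R))
    (hres : ∀ᵐ t ∂(volume.restrict (Ioi (0:ℝ))),
      r' t = signedSetIntegral ν (fun s => r (t - s)) (Icc 0 t)) :
    Integrable ((Ici (0:ℝ)).indicator r') := by
  rw [integrable_indicator_iff measurableSet_Ici]
  refine ⟨hr'loc.aestronglyMeasurable, ?_⟩
  rw [HasFiniteIntegral, ← restrict_Ioi_eq_restrict_Ici]
  set μ := ν.toJordanDecomposition.posPart + ν.toJordanDecomposition.negPart with hμ
  have hm : Measurable ((Ici (0:ℝ)).indicator R) := hR.measurable.indicator measurableSet_Ici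
  have key := aux_mink 1 le_rfl μ volume (fun t s => ‖(Ici (0:ℝ)).indicator R (t - s)‖ₑ)
    (hm.comp (measurable_fst.sub measurable_snd)).enorm
    (∫⁻ t, ‖(Ici (0:ℝ)).indicator R t‖ₑ) hRi.2.ne (ae_of_all _ fun s => by
      simp only [ENNReal.rpow_one]
      exact (lintegral_sub_right_eq_self (fun t => ‖(Ici (0:ℝ)).indicator R t‖ₑ) s).le)
  simp only [ENNReal.rpow_one] at key
  refine lt_of_le_of_lt ((lintegral_mono_ae ?_).trans (setLIntegral_le_lintegral (Ioi 0) _)) key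
  filter_upwards [hres] with t ht
  rw [ht, signedSetIntegral, hμ, lintegral_add_measure]
  refine enorm_sub_le.trans ?_
  exact add_le_add (aux_set_bound _ r R hrR t) (aux_set_bound _ r R hrR t)

/-- (A) ⟹ (B) of Theorem 2.3: if the differential resolvent `r` of the
finite signed Borel measure `ν` on `[0,∞)` is integrable on `[0,∞)`, and each interval average
`t ↦ ∫_t^{t+θ} f(s) ds`, `θ ∈ (0,1]`, is in `L^p([0,∞))`, then for every initial condition
`ξ ∈ ℝ` the solution `x(t) = r(t) ξ + ∫_0^t r(t-s) f(s) ds` is in `L^p([0,∞))`. -/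
theorem interval_average_Lp_implies_solution_Lp
    (p : ℝ) (hp : 1 ≤ p)
    (ν : MeasureTheory.SignedMeasure ℝ)
    (hν : ν.restrict (Iio 0) = 0)
    (f : ℝ → ℝ)
    (hf : LocallyIntegrableOn f (Ici 0))
    (r r' : ℝ → ℝ)
    (hr'loc : LocallyIntegrableOn r' (Ici 0))
    (hr0 : r 0 = 1)
    (hFTC : ∀ t ≥ (0:ℝ), r t = 1 + ∫ s in (0:ℝ)..t, r' s)
    (hres : ∀ᵐ t ∂(volume.restrict (Ioi (0:ℝ))),
      r' t = signedSetIntegral ν (fun s => r (t - s)) (Icc 0 t))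
    (hrL1 : IntegrableOn r (Ici 0))
    (hFp : ∀ θ ∈ Ioc (0:ℝ) 1,
      IntegrableOn (fun t => |∫ s in t..(t + θ), f s| ^ p) (Ici 0)) :
    ∀ ξ : ℝ,
      IntegrableOn (fun t => |r t * ξ + ∫ s in (0:ℝ)..t, r (t - s) * f s| ^ p) (Ici 0) := by
  intro ξ
  set R : ℝ → ℝ := fun t => 1 + ∫ s in (0:ℝ)..t, (Ici (0:ℝ)).indicator r' s with hR
  have hRc : Continuous R := continuous_const.add
    (intervalIntegral.continuous_primitive (aux_indicator_ii r' hr'loc) 0)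
  have hrR : ∀ t ≥ (0:ℝ), r t = R t := fun t ht => by
    rw [hFTC t ht, hR, ← aux_integral_indicator r' 0 t le_rfl ht]
  have hRi : Integrable ((Ici (0:ℝ)).indicator R) := by
    rw [integrable_indicator_iff measurableSet_Ici]
    exact hrL1.congr_fun (fun t ht => hrR t ht) measurableSet_Ici
  have hk := aux_r'_int ν r r' R hr'loc hrR hRc hRi hres
  have main := aux_core p hp ((Ici (0:ℝ)).indicator f) ((Ici (0:ℝ)).indicator r') R
    (aux_indicator_ii f hf) hk (fun t => rfl) hRi (fun θ hθ => by
      refine (hFp θ hθ).congr_fun (fun t ht => ?_) measurableSet_Ici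
      have ht : 0 ≤ t := ht
      simp only
      rw [aux_integral_indicator f t (t + θ) ht (by linarith [hθ.1])]) ξ
  have h0 : ENNReal.ofReal p ≠ 0 := by simp; linarith
  have := main.integrable_norm_rpow h0 (by simp)
  rw [ENNReal.toReal_ofReal (by linarith)] at this
  refine IntegrableOn.congr_fun this (fun t ht => ?_) measurableSet_Ici
  have ht : 0 ≤ t := ht
  simp only [Real.norm_eq_abs]
  rw [hrR t ht]
  congr 3
  refine intervalIntegral.integral_congr fun s hs => ?_
  rw [uIcc_of_le ht] at hs
  rw [indicator_of_mem (show s ∈ Ici (0:ℝ) from hs.1), hrR (t - s) (by linarith [hs.2])]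
end

section
/- Let p ≥ 1, let ν be a finite signed Borel measure on [0,∞), f : [0,∞) → ℝ locally integrable, and let x : [0,∞) → ℝ be locally absolutely continuous with x(0) = ξ and x′(t) = ∫_{[0,t]} x(t−s) dν(s) + f(t) for almost every t > 0. If x ∈ L^p([0,∞)), then for every θ ∈ (0,1] the function t ↦ ∫_t^{t+θ} f(s) ds belongs to L^p([0,∞)). -/
open MeasureTheory Set Filter

open scoped ENNReal

/-- Young's inequality for the convolution of an `L^p` function with a finite measure. -/
lemma conv_memLp (p : ℝ) (hp : 1 ≤ p) (μ : Measure ℝ) [IsFiniteMeasure μ] (y : ℝ → ℝ)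
    (hy : Measurable y) (hyp : MemLp y (ENNReal.ofReal p) volume) :
    StronglyMeasurable (fun t => ∫ s, y (t - s) ∂μ) ∧
    MemLp (fun t => ∫ s, y (t - s) ∂μ) (ENNReal.ofReal p) volume := by
  have hp0 : 0 < p := by linarith
  have hm : Measurable (fun z : ℝ × ℝ => y (z.1 - z.2)) := by fun_prop
  have hsm : StronglyMeasurable (fun t => ∫ s, y (t - s) ∂μ) :=
    hm.stronglyMeasurable.integral_prod_right
  refine ⟨hsm, hsm.aestronglyMeasurable, ?_⟩
  have hpne : ENNReal.ofReal p ≠ 0 := by simpa using hp0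
  rw [eLpNorm_lt_top_iff_lintegral_rpow_enorm_lt_top hpne ENNReal.ofReal_ne_top,
    ENNReal.toReal_ofReal hp0.le]
  have hfin := hyp.2
  rw [eLpNorm_lt_top_iff_lintegral_rpow_enorm_lt_top hpne ENNReal.ofReal_ne_top,
    ENNReal.toReal_ofReal hp0.le] at hfin
  set A : ℝ≥0∞ := (μ univ ^ (1 - 1 / p)) ^ p with hA
  have hAtop : A ≠ ⊤ := by
    apply ENNReal.rpow_ne_top_of_nonneg hp0.le
    apply ENNReal.rpow_ne_top_of_nonneg _ (measure_ne_top _ _)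
    rw [sub_nonneg, div_le_one hp0]; exact hp
  have hpt : ∀ t, ‖∫ s, y (t - s) ∂μ‖ₑ ^ p ≤ (∫⁻ s, ‖y (t - s)‖ₑ ^ p ∂μ) * A := by
    intro t
    have h1 : ‖∫ s, y (t - s) ∂μ‖ₑ ≤ eLpNorm (fun s => y (t - s)) 1 μ := by
      rw [eLpNorm_one_eq_lintegral_enorm]
      exact enorm_integral_le_lintegral_enorm _
    have h2 : eLpNorm (fun s => y (t - s)) 1 μ ≤ _ :=
      eLpNorm_le_eLpNorm_mul_rpow_measure_univ (p := 1) (q := ENNReal.ofReal p)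
      (by simpa using hp) (f := fun s => y (t - s)) (μ := μ)
        (by have : Measurable (fun s => y (t - s)) := by fun_prop
            exact this.aestronglyMeasurable)
    have h3 := ENNReal.rpow_le_rpow (h1.trans h2) hp0.le
    refine h3.trans (le_of_eq ?_)
    rw [ENNReal.mul_rpow_of_nonneg _ _ hp0.le, eLpNorm_eq_lintegral_rpow_enorm_toReal hpne
      ENNReal.ofReal_ne_top, ENNReal.toReal_ofReal hp0.le, ← ENNReal.rpow_mul,
      one_div_mul_cancel hp0.ne', ENNReal.rpow_one, hA]
    simp
  refine (lintegral_mono hpt).trans_lt ?_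
  rw [lintegral_mul_const' _ _ hAtop, lintegral_lintegral_swap]
  · have : ∀ s, ∫⁻ t, ‖y (t - s)‖ₑ ^ p = ∫⁻ t, ‖y t‖ₑ ^ p := fun s =>
      lintegral_sub_right_eq_self (fun t => ‖y t‖ₑ ^ p) s
    simp only [this, lintegral_const]
    exact ENNReal.mul_lt_top (ENNReal.mul_lt_top hfin (measure_lt_top _ _)) hAtop.lt_top
  · exact (hm.enorm.pow_const p).aemeasurable

/-- The moving integral as a convolution with a finite measure. -/
lemma moving_eq (θ : ℝ) (hθ : 0 ≤ θ) (C : ℝ → ℝ) (t : ℝ) :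
    ∫ s in t..(t + θ), C s = ∫ s, C (t - s) ∂(volume.restrict (Ioc (-θ) 0)) := by
  rw [← intervalIntegral.integral_of_le (by linarith), intervalIntegral.integral_comp_sub_left]
  simp

lemma moving_memLp (p : ℝ) (hp : 1 ≤ p) (θ : ℝ) (hθ : 0 ≤ θ) (y : ℝ → ℝ)
    (hy : Measurable y) (hyp : MemLp y (ENNReal.ofReal p) volume) :
    MemLp (fun t => ∫ s in t..(t + θ), y s) (ENNReal.ofReal p) volume := by
  simp only [moving_eq θ hθ]
  exact (conv_memLp p hp _ y hy hyp).2

lemma setIntegral_eq_conv (μ : Measure ℝ) (x : ℝ → ℝ) (t : ℝ) :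
    ∫ s in Icc 0 t, x (t - s) ∂μ
      = ∫ s, (Ici (0:ℝ)).indicator x (t - s) ∂(μ.restrict (Ici 0)) := by
  rw [← integral_indicator measurableSet_Icc, ← integral_indicator measurableSet_Ici]
  congr 1
  ext s
  by_cases h1 : 0 ≤ s <;> by_cases h2 : s ≤ t <;> simp [indicator, h1, h2]

/-- (B) ⟹ (A) of Theorem 2.3: if `x` is a locally absolutely continuous
solution of `x'(t) = ∫_{[0,t]} x(t-s) dν(s) + f(t)` (a.e. `t > 0`) with `x(0) = ξ`, and
`x ∈ L^p([0,∞))`, then for every `θ ∈ (0,1]` the interval average `t ↦ ∫_t^{t+θ} f(s) ds`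
belongs to `L^p([0,∞))`. -/
theorem solution_Lp_implies_interval_average_Lp
    (p : ℝ) (hp : 1 ≤ p)
    (ν : MeasureTheory.SignedMeasure ℝ)
    (hν : ν.restrict (Iio 0) = 0)
    (f : ℝ → ℝ)
    (hf : LocallyIntegrableOn f (Ici 0))
    (ξ : ℝ) (x x' : ℝ → ℝ)
    (hx'loc : LocallyIntegrableOn x' (Ici 0))
    (hx0 : x 0 = ξ)
    (hFTC : ∀ t ≥ (0:ℝ), x t = ξ + ∫ s in (0:ℝ)..t, x' s)
    (hode : ∀ᵐ t ∂(volume.restrict (Ioi (0:ℝ))),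
      x' t = signedSetIntegral ν (fun s => x (t - s)) (Icc 0 t) + f t)
    (hxLp : IntegrableOn (fun t => |x t| ^ p) (Ici 0)) :
    ∀ θ ∈ Ioc (0:ℝ) 1,
      IntegrableOn (fun t => |∫ s in t..(t + θ), f s| ^ p) (Ici 0) := by
  intro θ hθ
  have hp0 : 0 < p := by linarith
  have hpne : ENNReal.ofReal p ≠ 0 := by simpa using hp0
  have hθ0 : 0 < θ := hθ.1
  have hII : ∀ g : ℝ → ℝ, LocallyIntegrableOn g (Ici 0) → ∀ a b : ℝ, 0 ≤ a → 0 ≤ b →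
      IntervalIntegrable g volume a b := by
    intro g hg a b ha hb
    rw [intervalIntegrable_iff']
    refine hg.integrableOn_compact_subset ?_ isCompact_uIcc
    intro z hz
    exact (le_min ha hb).trans hz.1
  set y : ℝ → ℝ := (Ici (0:ℝ)).indicator x with hydef
  have hxc : ContinuousOn x (Ici 0) := by
    have hInd : ∀ a b, IntervalIntegrable ((Ici (0:ℝ)).indicator x') volume a b := by
      intro a b
      rw [intervalIntegrable_iff', IntegrableOn, integrable_indicator_iff measurableSet_Ici,
        IntegrableOn, Measure.restrict_restrict measurableSet_Ici]
      exact hx'loc.integrableOn_compact_subset inter_subset_left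
        (isCompact_uIcc.inter_left isClosed_Ici)
    have hc := (continuous_const (y := ξ)).add (intervalIntegral.continuous_primitive hInd 0)
    refine hc.continuousOn.congr ?_
    intro t ht
    rw [hFTC t ht]
    congr 1
    apply intervalIntegral.integral_congr
    intro s hs
    rw [uIcc_of_le ht] at hs
    simp [indicator, hs.1]
  have hym : Measurable y := by
    have := hxc.measurable_piecewise (g := fun _ => (0:ℝ)) continuousOn_const measurableSet_Ici
    have e : (Ici (0:ℝ)).piecewise x (fun _ => (0:ℝ)) = y := piecewise_eq_indicator
    rwa [e] at this
  have hyp : MemLp y (ENNReal.ofReal p) volume := by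
    rw [← integrable_norm_rpow_iff hym.aestronglyMeasurable hpne ENNReal.ofReal_ne_top,
      ENNReal.toReal_ofReal hp0.le]
    rw [← integrable_indicator_iff measurableSet_Ici] at hxLp
    refine hxLp.congr (ae_of_all _ ?_)
    intro t
    by_cases h : 0 ≤ t <;> simp [hydef, indicator, h, hp0.ne']
  set P := ν.toJordanDecomposition.posPart.restrict (Ici 0)
  set N := ν.toJordanDecomposition.negPart.restrict (Ici 0)
  obtain ⟨hC1m, hC1⟩ := conv_memLp p hp P y hym hyp
  obtain ⟨hC2m, hC2⟩ := conv_memLp p hp N y hym hyp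
  set C1 := fun t => ∫ s, y (t - s) ∂P with hC1def
  set C2 := fun t => ∫ s, y (t - s) ∂N with hC2def
  have h1p : 1 ≤ ENNReal.ofReal p := by simpa using hp
  have hI1 := hC1.locallyIntegrable h1p
  have hI2 := hC2.locallyIntegrable h1p
  have hG1 := moving_memLp p hp θ hθ0.le C1 hC1m.measurable hC1
  have hG2 := moving_memLp p hp θ hθ0.le C2 hC2m.measurable hC2
  have hsh : MemLp (fun t => y (t + θ)) (ENNReal.ofReal p) volume :=
    hyp.comp_measurePreserving (measurePreserving_add_right volume θ)
  have hH := ((hsh.sub hyp).sub hG1).add hG2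
  have hHi := hH.integrable_norm_rpow hpne ENNReal.ofReal_ne_top
  rw [ENNReal.toReal_ofReal hp0.le] at hHi
  refine hHi.integrableOn.congr_fun ?_ measurableSet_Ici
  intro t ht
  have ht0 : (0:ℝ) ≤ t := ht
  have htθ : (0:ℝ) ≤ t + θ := by linarith
  have e1 : ∫ s in t..(t + θ), f s = ∫ s in t..(t + θ), ((x' s - C1 s) + C2 s) := by
    apply intervalIntegral.integral_congr_ae
    rw [ae_restrict_iff' measurableSet_Ioi] at hode
    filter_upwards [hode] with s hs hs'
    rw [uIoc_of_le (by linarith)] at hs'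
    have := hs (lt_of_le_of_lt ht0 hs'.1)
    rw [signedSetIntegral, setIntegral_eq_conv, setIntegral_eq_conv] at this
    change x' s = C1 s - C2 s + f s at this
    linarith
  have i1 : IntervalIntegrable C1 volume t (t + θ) := hII C1 (hI1.locallyIntegrableOn _) _ _ ht0 htθ
  have i2 : IntervalIntegrable C2 volume t (t + θ) := hII C2 (hI2.locallyIntegrableOn _) _ _ ht0 htθ
  have i0 := hII x' hx'loc t (t + θ) ht0 htθ
  have e2 : ∫ s in t..(t + θ), x' s = y (t + θ) - y t := by
    have a1 : y (t + θ) = x (t + θ) := indicator_of_mem htθ _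
    have a2 : y t = x t := indicator_of_mem ht _
    rw [a1, a2, hFTC _ htθ, hFTC _ ht0, ← intervalIntegral.integral_add_adjacent_intervals
      (hII x' hx'loc 0 t le_rfl ht0) i0]
    ring
  have e3 : ∫ s in t..(t + θ), f s = (y (t + θ) - y t - ∫ s in t..(t + θ), C1 s)
      + ∫ s in t..(t + θ), C2 s := by
    rw [e1, intervalIntegral.integral_add (i0.sub i1) i2, intervalIntegral.integral_sub i0 i1, e2]
  simp only [e3]
  rfl
end

section
/- Let p ≥ 1, let ν be a finite signed Borel measure on [0,∞), let f : [0,∞) → ℝ be locally integrable, let r be the differential resolvent of ν, and assume r ∈ L¹([0,∞)). For ξ ∈ ℝ let x(·;ξ) denote the solution of x′(t) = ∫_{[0,t]} x(t−s) dν(s) + f(t), x(0) = ξ. Then the following are equivalent: (A) for each θ ∈ (0,1], the function t ↦ ∫_t^{t+θ} f(s) ds belongs to L^p([0,∞)); (B) x(·;ξ) ∈ L^p([0,∞)) for every ξ ∈ ℝ. -/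
open MeasureTheory Set Filter

open scoped ENNReal

namespace VolterraLp

/-- Jensen's inequality for finite measures. -/
lemma jensen {α : Type*} [MeasurableSpace α] (μ : Measure α) [IsFiniteMeasure μ] {p : ℝ} (hp : 1 ≤ p)
    {g : α → ℝ≥0∞} (hg : AEMeasurable g μ) :
    (∫⁻ s, g s ∂μ) ^ p ≤ (∫⁻ s, g s ^ p ∂μ) * μ univ ^ (p - 1) := by
  have hp0 : 0 < p := by linarith
  have h := eLpNorm'_le_eLpNorm'_mul_rpow_measure_univ (f := g) (μ := μ) one_pos hp
    hg.aestronglyMeasurable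
  simp only [eLpNorm', enorm_eq_self, ENNReal.rpow_one, div_one] at h
  calc (∫⁻ s, g s ∂μ) ^ p
      ≤ ((∫⁻ s, g s ^ p ∂μ) ^ (1 / p) * μ univ ^ (1 - 1 / p)) ^ p :=
        ENNReal.rpow_le_rpow h hp0.le
    _ = _ := by
        rw [ENNReal.mul_rpow_of_nonneg _ _ hp0.le, ← ENNReal.rpow_mul, ← ENNReal.rpow_mul]
        congr 2
        · field_simp; simp
        · field_simp

lemma memLp_iff {p : ℝ} (hp : 1 ≤ p) {μ : Measure ℝ} {g : ℝ → ℝ} (hg : AEStronglyMeasurable g μ) :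
    MemLp g (ENNReal.ofReal p) μ ↔ ∫⁻ t, ‖g t‖ₑ ^ p ∂μ < ∞ := by
  have hp0 : 0 < p := by linarith
  have h := eLpNorm_lt_top_iff_lintegral_rpow_enorm_lt_top (f := g) (μ := μ)
    (p := ENNReal.ofReal p) (by simpa using hp0) ENNReal.ofReal_ne_top
  rw [ENNReal.toReal_ofReal hp0.le] at h
  exact ⟨fun H => h.1 H.2, fun H => ⟨hg, h.2 H⟩⟩

/-- Young's inequality (finiteness). -/
lemma young_lintegral (μ : Measure ℝ) [IsFiniteMeasure μ] {p : ℝ} (hp : 1 ≤ p)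
    {h : ℝ → ℝ≥0∞} (hh : Measurable h) (hfin : ∫⁻ t, h t ^ p < ∞) :
    ∫⁻ t, (∫⁻ s, h (t - s) ∂μ) ^ p < ∞ := by
  calc ∫⁻ t, (∫⁻ s, h (t - s) ∂μ) ^ p
      ≤ ∫⁻ t, (∫⁻ s, h (t - s) ^ p ∂μ) * μ univ ^ (p - 1) := by
        apply lintegral_mono
        intro t
        exact jensen μ hp (by fun_prop)
    _ = (∫⁻ t, ∫⁻ s, h (t - s) ^ p ∂μ) * μ univ ^ (p - 1) := by
        rw [lintegral_mul_const']
        exact ENNReal.rpow_ne_top_of_nonneg (by linarith) (measure_ne_top _ _)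
    _ = (∫⁻ s, ∫⁻ t, h (t - s) ^ p ∂volume ∂μ) * μ univ ^ (p - 1) := by
        rw [lintegral_lintegral_swap]
        exact Measurable.aemeasurable (by simp only [Function.uncurry_def]; fun_prop)
    _ = (∫⁻ s, (∫⁻ t, h t ^ p) ∂μ) * μ univ ^ (p - 1) := by
        congr 1
        apply lintegral_congr
        intro s
        exact lintegral_sub_right_eq_self (fun t => h t ^ p) s
    _ < ∞ := by
        rw [lintegral_const]
        exact ENNReal.mul_lt_top (ENNReal.mul_lt_top hfin (measure_lt_top _ _))
          (ENNReal.rpow_lt_top_of_nonneg (by linarith) (measure_ne_top _ _))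

lemma young (μ : Measure ℝ) [IsFiniteMeasure μ] {p : ℝ} (hp : 1 ≤ p)
    {h : ℝ → ℝ} (hh : Measurable h) (hL : MemLp h (ENNReal.ofReal p) volume) :
    MemLp (fun t => ∫ s, h (t - s) ∂μ) (ENNReal.ofReal p) volume := by
  have hm : StronglyMeasurable (fun t => ∫ s, h (t - s) ∂μ) := by
    apply StronglyMeasurable.integral_prod_right
    exact Measurable.stronglyMeasurable (by simp only [Function.uncurry_def]; fun_prop)
  rw [memLp_iff hp hm.aestronglyMeasurable]
  rw [memLp_iff hp hh.aestronglyMeasurable] at hL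
  refine lt_of_le_of_lt (lintegral_mono fun t => ?_)
    (young_lintegral μ hp (h := fun t => ‖h t‖ₑ) (by fun_prop) hL)
  exact ENNReal.rpow_le_rpow (enorm_integral_le_lintegral_enorm _) (by linarith)

lemma young_conv {p : ℝ} (hp : 1 ≤ p) {a : ℝ → ℝ} (ha : Measurable a) (hai : Integrable a)
    {h : ℝ → ℝ} (hh : Measurable h) (hL : MemLp h (ENNReal.ofReal p) volume) :
    MemLp (fun t => ∫ s, a s * h (t - s)) (ENNReal.ofReal p) volume := by
  have hm : StronglyMeasurable (fun t => ∫ s, a s * h (t - s)) := by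
    apply StronglyMeasurable.integral_prod_right
    exact Measurable.stronglyMeasurable (by simp only [Function.uncurry_def]; fun_prop)
  rw [memLp_iff hp hm.aestronglyMeasurable]
  rw [memLp_iff hp hh.aestronglyMeasurable] at hL
  have : IsFiniteMeasure (volume.withDensity fun s => ‖a s‖ₑ) :=
    isFiniteMeasure_withDensity hai.2.ne
  refine lt_of_le_of_lt (lintegral_mono fun t => ?_)
    (young_lintegral (volume.withDensity fun s => ‖a s‖ₑ) hp (h := fun t => ‖h t‖ₑ)
      (by fun_prop) hL)
  refine ENNReal.rpow_le_rpow ?_ (by linarith)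
  rw [lintegral_withDensity_eq_lintegral_mul _ (by fun_prop) (by fun_prop)]
  refine (enorm_integral_le_lintegral_enorm _).trans_eq ?_
  simp [enorm_mul]

lemma memLp_shift {p : ℝ≥0∞} {h : ℝ → ℝ} (hL : MemLp h p volume) (c : ℝ) :
    MemLp (fun t => h (t + c)) p volume :=
  hL.comp_measurePreserving (measurePreserving_add_right volume c)

lemma memLp_of_bdd {p : ℝ} (hp : 1 ≤ p) {a : ℝ → ℝ} (hai : Integrable a)
    {M : ℝ} (hM : ∀ t, |a t| ≤ M) : MemLp a (ENNReal.ofReal p) volume := by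
  rw [memLp_iff hp hai.1]
  have h1 : ∀ t, ‖a t‖ₑ ^ p ≤ ENNReal.ofReal M ^ (p - 1) * ‖a t‖ₑ := by
    intro t
    have : ‖a t‖ₑ ^ p = ‖a t‖ₑ ^ (p - 1) * ‖a t‖ₑ := by
      conv_rhs => rw [← ENNReal.rpow_one ‖a t‖ₑ, ← ENNReal.rpow_mul, one_mul,
        ← ENNReal.rpow_add_of_nonneg _ _ (by linarith) zero_le_one]
      simp
    rw [this]
    refine mul_le_mul_left (ENNReal.rpow_le_rpow ?_ (by linarith)) _
    rw [← ofReal_norm]; exact ENNReal.ofReal_le_ofReal (hM t)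
  refine lt_of_le_of_lt (lintegral_mono h1) ?_
  rw [lintegral_const_mul']
  · exact ENNReal.mul_lt_top (ENNReal.rpow_lt_top_of_nonneg (by linarith) ENNReal.ofReal_ne_top) hai.2
  · exact ENNReal.rpow_ne_top_of_nonneg (by linarith) ENNReal.ofReal_ne_top


/-- The primitive of `f` from `0`. -/
noncomputable def prim (f : ℝ → ℝ) (t : ℝ) : ℝ := ∫ s in (0:ℝ)..t, f s

lemma prim_nonpos {f : ℝ → ℝ} (h0 : ∀ s < 0, f s = 0) {t : ℝ} (ht : t ≤ 0) : prim f t = 0 := by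
  unfold prim
  rw [intervalIntegral.integral_of_ge ht]
  rw [integral_Ioc_eq_integral_Ioo, setIntegral_eq_zero_of_forall_eq_zero, neg_zero]
  intro x hx
  exact h0 x hx.2

lemma integrable_trunc {f : ℝ → ℝ} (hf : LocallyIntegrable f) (h0 : ∀ s < 0, f s = 0) (t : ℝ) :
    Integrable ((Iic t).indicator f) := by
  have h1 : (Iic t).indicator f = (Icc 0 t).indicator f := by
    ext s
    by_cases hs : s < 0
    · simp [indicator, h0 s hs]
    · simp [indicator, not_lt.1 hs]
  rw [h1, integrable_indicator_iff measurableSet_Icc]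
  exact hf.integrableOn_isCompact isCompact_Icc

lemma prim_eq {f : ℝ → ℝ} (h0 : ∀ s < 0, f s = 0) (t : ℝ) :
    prim f t = ∫ s, (Iic t).indicator f s := by
  rcases lt_or_ge t 0 with ht | ht
  · rw [prim_nonpos h0 ht.le]
    symm
    have : (Iic t).indicator f = 0 := by
      ext s
      by_cases hs : s ≤ t
      · simp [indicator, h0 s (lt_of_le_of_lt hs ht)]
      · simp [indicator, hs]
    rw [this]; simp
  · unfold prim
    rw [intervalIntegral.integral_of_le ht, ← integral_Icc_eq_integral_Ioc,
      ← integral_indicator measurableSet_Icc]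
    congr 1
    ext s
    by_cases hs : s < 0
    · simp [indicator, h0 s hs]
    · simp [indicator, not_lt.1 hs]

lemma intInt {f : ℝ → ℝ} (hf : LocallyIntegrable f) (a b : ℝ) : IntervalIntegrable f volume a b :=
  (hf.integrableOn_isCompact isCompact_uIcc).intervalIntegrable

lemma prim_continuous {f : ℝ → ℝ} (hf : LocallyIntegrable f) : Continuous (prim f) :=
  intervalIntegral.continuous_primitive (fun a b => intInt hf a b) 0

lemma prim_sub {f : ℝ → ℝ} (hf : LocallyIntegrable f) (a b : ℝ) :
    prim f b - prim f a = ∫ s in a..b, f s :=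
  intervalIntegral.integral_interval_sub_left (intInt hf _ _) (intInt hf _ _)

lemma bdd_left {b : ℝ → ℝ} (hb : Continuous b) (h0 : ∀ s ≤ 0, b s = 0) (t : ℝ) :
    ∃ C, ∀ x ≤ t, |b x| ≤ C := by
  obtain ⟨C, hC⟩ := isCompact_Icc.exists_bound_of_continuousOn (s := Icc (0:ℝ) t) hb.continuousOn
  refine ⟨max C 0, fun x hx => ?_⟩
  rcases le_total x 0 with h | h
  · simp [h0 x h]
  · exact le_max_of_le_left (hC x ⟨h, hx⟩)

lemma integrable_mul_left {a b : ℝ → ℝ} (ha : Integrable a) (ha0 : ∀ s < 0, a s = 0)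
    (hb : Continuous b) (h0 : ∀ s ≤ 0, b s = 0) (t : ℝ) :
    Integrable (fun u => a u * b (t - u)) := by
  obtain ⟨C, hC⟩ := bdd_left hb h0 t
  have h1 : (fun u => a u * b (t - u)) = fun u => a u * b (t - max u 0) := by
    ext u
    rcases lt_or_ge u 0 with h | h
    · simp [ha0 u h]
    · rw [max_eq_left h]
  rw [h1]
  refine ha.mul_bdd (c := C) (Continuous.aestronglyMeasurable (by fun_prop)) (ae_of_all _ fun u => ?_)
  exact hC _ (by have := le_max_right u 0; linarith)

lemma fubini_prim {a b : ℝ → ℝ} (ha : LocallyIntegrable a) (ha0 : ∀ s < 0, a s = 0)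
    (hb : LocallyIntegrable b) (hb0 : ∀ s < 0, b s = 0) (t : ℝ) :
    ∫ u, a u * prim b (t - u) = ∫ s, prim a (t - s) * b s := by
  set A := (Iic t).indicator a with hA
  set B := (Iic t).indicator b with hB
  have hAi : Integrable A := integrable_trunc ha ha0 t
  have hBi : Integrable B := integrable_trunc hb hb0 t
  set K : ℝ → ℝ → ℝ := fun u s => {z : ℝ × ℝ | z.1 + z.2 ≤ t}.indicator
    (fun z => A z.1 * B z.2) (u, s) with hK
  have hKi : Integrable (Function.uncurry K) (volume.prod volume) := by
    have : Function.uncurry K = {z : ℝ × ℝ | z.1 + z.2 ≤ t}.indicator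
      (fun z => A z.1 * B z.2) := by ext ⟨u, s⟩; rfl
    rw [this]
    refine (hAi.mul_prod hBi).indicator ?_
    exact measurableSet_le (by fun_prop) (by fun_prop)
  have key : ∀ u s, K u s = if u + s ≤ t then a u * b s else 0 := by
    intro u s
    simp only [hK, hA, hB, indicator, mem_ofPred_eq, mem_Iic]
    by_cases h : u + s ≤ t
    · simp only [h, if_true]
      rcases lt_or_ge u 0 with hu | hu
      · simp [ha0 u hu]
      rcases lt_or_ge s 0 with hs | hs
      · simp [hb0 s hs]
      rw [if_pos (by linarith), if_pos (by linarith)]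
    · simp [h]
  have h1 : ∀ u, a u * prim b (t - u) = ∫ s, K u s := by
    intro u
    rw [prim_eq hb0, ← integral_const_mul]
    congr 1; ext s
    rw [key]
    simp only [indicator, mem_Iic]
    by_cases h : u + s ≤ t
    · rw [if_pos (by linarith), if_pos h]
    · rw [if_neg (by intro h'; apply h; linarith), if_neg h, mul_zero]
  have h2 : ∀ s, prim a (t - s) * b s = ∫ u, K u s := by
    intro s
    rw [prim_eq ha0, ← integral_mul_const]
    congr 1; ext u
    rw [key]
    simp only [indicator, mem_Iic]
    by_cases h : u + s ≤ t
    · rw [if_pos (by linarith), if_pos h]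
    · rw [if_neg (by intro h'; apply h; linarith), if_neg h, zero_mul]
  simp_rw [h1, h2]
  exact integral_integral_swap hKi

/-- `r * f = F + ρ * F`. -/
lemma conv_eq {r ρ f : ℝ → ℝ} (hρ : Integrable ρ) (hρ0 : ∀ s < 0, ρ s = 0)
    (hr0 : ∀ s < 0, r s = 0) (hr : ∀ s ≥ 0, r s = 1 + prim ρ s)
    (hf : LocallyIntegrable f) (hf0 : ∀ s < 0, f s = 0) (t : ℝ) :
    ∫ s, r (t - s) * f s = prim f t + ∫ u, ρ u * prim f (t - u) := by
  have h1 : ∀ s, r (t - s) * f s = (Iic t).indicator f s + prim ρ (t - s) * f s := by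
    intro s
    simp only [indicator, mem_Iic]
    by_cases h : s ≤ t
    · rw [if_pos h, hr _ (by linarith)]; ring
    · rw [if_neg h, hr0 _ (by linarith), prim_nonpos hρ0 (by linarith)]; ring
  have h2 : Integrable (fun s => prim ρ (t - s) * f s) := by
    have h3 : (fun s => prim ρ (t - s) * f s) =
        fun s => prim ρ (t - s) * (Iic t).indicator f s := by
      ext s
      simp only [indicator, mem_Iic]
      by_cases h : s ≤ t
      · rw [if_pos h]
      · rw [if_neg h, prim_nonpos hρ0 (by linarith)]; ring
    rw [h3]
    refine (integrable_trunc hf hf0 t).bdd_mul (c := ∫ s, ‖ρ s‖) ?_ (ae_of_all _ fun s => ?_)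
    · have := prim_continuous hρ.locallyIntegrable
      exact Continuous.aestronglyMeasurable (by fun_prop)
    · rw [prim_eq hρ0]
      refine (norm_integral_le_integral_norm _).trans ?_
      apply integral_mono
      · exact (hρ.indicator measurableSet_Iic).norm
      · exact hρ.norm
      · intro x
        exact norm_indicator_le_norm_self _ _
  simp_rw [h1]
  rw [integral_add (integrable_trunc hf hf0 t) h2, ← prim_eq hf0,
    fubini_prim hρ.locallyIntegrable hρ0 hf hf0]

/-- `1 * (r * f) = R * f = r * F`. -/
lemma prim_conv {r f : ℝ → ℝ} (hrm : Measurable r) (hri : LocallyIntegrable r) {M : ℝ}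
    (hM : ∀ s, |r s| ≤ M)
    (hr0 : ∀ s < 0, r s = 0)
    (hf : LocallyIntegrable f) (hf0 : ∀ s < 0, f s = 0) (T : ℝ) :
    prim (fun t => ∫ s, r (t - s) * f s) T = ∫ u, r u * prim f (T - u) := by
  rw [fubini_prim hri hr0 hf hf0]
  have hy0 : ∀ t < 0, ∫ s, r (t - s) * f s = 0 := by
    intro t ht
    have : (fun s => r (t - s) * f s) = 0 := by
      ext s
      rcases lt_or_ge s 0 with h | h
      · simp [hf0 s h]
      · simp [hr0 (t - s) (by linarith)]
    rw [this]; simp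
  rcases lt_or_ge T 0 with hT | hT
  · rw [prim_nonpos hy0 hT.le]
    symm
    have : (fun s => prim r (T - s) * f s) = 0 := by
      ext s
      rcases lt_or_ge s 0 with h | h
      · simp [hf0 s h]
      · simp [prim_nonpos hr0 (t := T - s) (by linarith)]
    rw [this]; simp
  · have h1 : prim (fun t => ∫ s, r (t - s) * f s) T
        = ∫ t in Ioc 0 T, ∫ s, r (t - s) * (Iic T).indicator f s := by
      unfold prim
      rw [intervalIntegral.integral_of_le hT]
      apply setIntegral_congr_fun measurableSet_Ioc
      intro t ht
      dsimp only
      congr 1; ext s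
      simp only [indicator, mem_Iic]
      by_cases h : s ≤ T
      · rw [if_pos h]
      · rw [if_neg h, hr0 _ (by linarith [ht.2])]; ring
    rw [h1, integral_integral_swap]
    · congr 1; ext s
      rw [← intervalIntegral.integral_of_le hT, intervalIntegral.integral_mul_const,
        intervalIntegral.integral_comp_sub_right, zero_sub, ← prim_sub hri]
      simp only [indicator, mem_Iic]
      rcases lt_or_ge s 0 with hs | hs
      · simp [hf0 s hs]
      rw [prim_nonpos hr0 (t := -s) (by linarith)]
      by_cases h : s ≤ T
      · rw [if_pos h]; ring
      · rw [if_neg h, prim_nonpos hr0 (t := T - s) (by linarith)]; ring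
    · refine Integrable.bdd_mul (c := M)
        ((integrable_trunc hf hf0 T).comp_snd (volume.restrict (Ioc 0 T))) ?_
        (ae_of_all _ fun z => hM _)
      exact Measurable.aestronglyMeasurable (by fun_prop)

/-- `(μ * r) * F = μ * (r * F)`. -/
lemma measure_conv {r F : ℝ → ℝ} (μ : Measure ℝ) [IsFiniteMeasure μ] (hμ : ∀ᵐ s ∂μ, 0 ≤ s)
    (hrm : Measurable r) {M : ℝ} (hM : ∀ s, |r s| ≤ M) (hr0 : ∀ s < 0, r s = 0)
    (hF : Continuous F) (hF0 : ∀ s ≤ 0, F s = 0) (t : ℝ) :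
    ∫ u, (∫ s, r (u - s) ∂μ) * F (t - u) = ∫ s, (∫ u, r u * F (t - s - u)) ∂μ := by
  have hμ0 : ∀ u < 0, ∫ s, r (u - s) ∂μ = 0 := by
    intro u hu
    apply integral_eq_zero_of_ae
    filter_upwards [hμ] with s hs
    exact hr0 _ (by linarith)
  set k : ℝ → ℝ := (Ici 0).indicator (fun u => F (t - u)) with hk
  have hki : Integrable k := by
    have : k = (Icc 0 t).indicator (fun u => F (t - u)) := by
      ext u
      simp only [hk, indicator, mem_Ici, mem_Icc]
      by_cases h : u ≤ t
      · simp [h]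
      · simp [h, hF0 (t - u) (by linarith)]
    rw [this, integrable_indicator_iff measurableSet_Icc]
    exact (Continuous.continuousOn (by fun_prop)).integrableOn_compact isCompact_Icc
  have h1 : ∀ u, (∫ s, r (u - s) ∂μ) * F (t - u) = ∫ s, r (u - s) * k u ∂μ := by
    intro u
    rw [integral_mul_const]
    rcases lt_or_ge u 0 with h | h
    · simp [hμ0 u h]
    · simp [hk, h]
  simp_rw [h1]
  rw [integral_integral_swap]
  · apply integral_congr_ae
    filter_upwards [hμ] with s hs
    rw [← integral_sub_right_eq_self (fun u => r u * F (t - s - u)) s]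
    congr 1; ext u
    have : t - s - (u - s) = t - u := by ring
    rw [this]
    rcases lt_or_ge u 0 with h | h
    · simp [hr0 (u - s) (by linarith)]
    · simp [hk, h]
  · refine Integrable.bdd_mul (c := M) (hki.comp_fst μ) ?_ (ae_of_all _ fun z => hM _)
    exact Measurable.aestronglyMeasurable (by fun_prop)

lemma conv_measurable {r f : ℝ → ℝ} (hrm : Measurable r) (hfm : Measurable f) :
    Measurable (fun t => ∫ s, r (t - s) * f s) := by
  apply StronglyMeasurable.measurable
  apply StronglyMeasurable.integral_prod_right
  exact Measurable.stronglyMeasurable (by simp only [Function.uncurry_def]; fun_prop)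

lemma mconv_measurable {r : ℝ → ℝ} (μ : Measure ℝ) [IsFiniteMeasure μ] (hrm : Measurable r) :
    Measurable (fun t => ∫ s, r (t - s) ∂μ) := by
  apply StronglyMeasurable.measurable
  apply StronglyMeasurable.integral_prod_right
  exact Measurable.stronglyMeasurable (by simp only [Function.uncurry_def]; fun_prop)

lemma mconv_zero {r : ℝ → ℝ} (μ : Measure ℝ) (hμ : ∀ᵐ s ∂μ, 0 ≤ s)
    (hr0 : ∀ s < 0, r s = 0) : ∀ u < 0, ∫ s, r (u - s) ∂μ = 0 := by
  intro u hu
  apply integral_eq_zero_of_ae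
  filter_upwards [hμ] with s hs
  exact hr0 _ (by linarith)

lemma mconv_integrable {r : ℝ → ℝ} (μ : Measure ℝ) [IsFiniteMeasure μ] (hrm : Measurable r)
    (hri : Integrable r) : Integrable (fun t => ∫ s, r (t - s) ∂μ) := by
  have := young μ le_rfl hrm (by simpa [memLp_one_iff_integrable] using hri)
  simpa [memLp_one_iff_integrable] using this

lemma mconv_diff_memLp {p : ℝ} (hp : 1 ≤ p) (μ : Measure ℝ) [IsFiniteMeasure μ]
    (hμ : ∀ᵐ s ∂μ, 0 ≤ s)
    {Y : ℝ → ℝ} (hY : Continuous Y) (hY0 : ∀ s ≤ 0, Y s = 0) (θ : ℝ)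
    (hL : MemLp (fun t => Y (t + θ) - Y t) (ENNReal.ofReal p) volume) :
    MemLp (fun t => (∫ s, Y (t + θ - s) ∂μ) - ∫ s, Y (t - s) ∂μ) (ENNReal.ofReal p) volume := by
  have hint : ∀ t, Integrable (fun s => Y (t - s)) μ := by
    intro t
    obtain ⟨C, hC⟩ := bdd_left hY hY0 t
    refine Integrable.mono' (integrable_const C)
      (Continuous.aestronglyMeasurable (by fun_prop)) ?_
    filter_upwards [hμ] with s hs
    exact hC _ (by linarith)
  have := young μ hp (h := fun t => Y (t + θ) - Y t) (by fun_prop) hL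
  convert this using 2 with t
  rw [← integral_sub (hint _) (hint _)]
  congr 1; ext s
  congr 2; ring

/-- (B) implies (A), in normalised form. -/
lemma core_BA {p : ℝ} (hp : 1 ≤ p) (μ₁ μ₂ : Measure ℝ) [IsFiniteMeasure μ₁] [IsFiniteMeasure μ₂]
    (hμ₁ : ∀ᵐ s ∂μ₁, 0 ≤ s) (hμ₂ : ∀ᵐ s ∂μ₂, 0 ≤ s)
    {r f : ℝ → ℝ} (hrm : Measurable r) (hri : Integrable r) {M : ℝ}
    (hM : ∀ s, |r s| ≤ M) (hr0 : ∀ s < 0, r s = 0)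
    (hr : ∀ s ≥ 0, r s = 1 + prim (fun t => (∫ s, r (t - s) ∂μ₁) - ∫ s, r (t - s) ∂μ₂) s)
    (hfm : Measurable f) (hf : LocallyIntegrable f) (hf0 : ∀ s < 0, f s = 0)
    (hy : MemLp (fun t => ∫ s, r (t - s) * f s) (ENNReal.ofReal p) volume)
    {θ : ℝ} (hθ : 0 < θ) :
    MemLp (fun t => prim f (t + θ) - prim f t) (ENNReal.ofReal p) volume := by
  set y : ℝ → ℝ := fun t => ∫ s, r (t - s) * f s with hydef
  have hym : Measurable y := conv_measurable hrm hfm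
  have hp' : 1 ≤ ENNReal.ofReal p := by simpa using hp
  have hyl : LocallyIntegrable y := hy.locallyIntegrable hp'
  have hy0 : ∀ t < 0, y t = 0 := by
    intro t ht
    have : (fun s => r (t - s) * f s) = 0 := by
      ext s
      rcases lt_or_ge s 0 with h | h
      · simp [hf0 s h]
      · simp [hr0 (t - s) (by linarith)]
    simp only [hydef]
    rw [this]; simp
  set Y := prim y with hYdef
  have hYc : Continuous Y := prim_continuous hyl
  have hY0 : ∀ t ≤ 0, Y t = 0 := fun t ht => prim_nonpos hy0 ht
  have hFc := prim_continuous hf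
  have hF0 : ∀ t ≤ 0, prim f t = 0 := fun t ht => prim_nonpos hf0 ht
  have hi1 := mconv_integrable μ₁ hrm hri
  have hi2 := mconv_integrable μ₂ hrm hri
  have hz1 := mconv_zero μ₁ hμ₁ hr0
  have hz2 := mconv_zero μ₂ hμ₂ hr0
  have hY : ∀ T, ∫ u, r u * prim f (T - u) = Y T := fun T =>
    (prim_conv hrm hri.locallyIntegrable hM hr0 hf hf0 T).symm
  have ident : ∀ t, prim f t = y t - ((∫ s, Y (t - s) ∂μ₁) - ∫ s, Y (t - s) ∂μ₂) := by
    intro t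
    have h1 := conv_eq (hi1.sub hi2) (fun s hs => by simp [hz1 s hs, hz2 s hs]) hr0 hr hf hf0 t
    have h2 := measure_conv μ₁ hμ₁ hrm hM hr0 hFc hF0 t
    have h3 := measure_conv μ₂ hμ₂ hrm hM hr0 hFc hF0 t
    simp only [hY] at h2 h3
    rw [← h2, ← h3, ← integral_sub (integrable_mul_left hi1 hz1 hFc hF0 t)
      (integrable_mul_left hi2 hz2 hFc hF0 t)]
    simp only [hydef]
    rw [h1]
    simp only [Pi.sub_apply, sub_mul]
    ring
  have hD : MemLp (fun t => Y (t + θ) - Y t) (ENNReal.ofReal p) volume := by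
    have := young (volume.restrict (Ioc (-θ) 0)) hp hym hy
    convert this using 2 with t
    rw [hYdef, prim_sub hyl, ← intervalIntegral.integral_of_le (by linarith),
      intervalIntegral.integral_comp_sub_left]
    simp
  have hW1 := mconv_diff_memLp hp μ₁ hμ₁ hYc hY0 θ hD
  have hW2 := mconv_diff_memLp hp μ₂ hμ₂ hYc hY0 θ hD
  have := ((memLp_shift hy θ).sub hy).sub (hW1.sub hW2)
  convert this using 2 with t
  simp only [Pi.sub_apply]
  rw [ident, ident]
  ring

lemma baire_bound {p : ℝ} (hp : 1 ≤ p) {F : ℝ → ℝ} (hF : Continuous F)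
    (hA : ∀ θ ∈ Ioc (0:ℝ) 1, ∫⁻ t, ‖F t - F (t - θ)‖ₑ ^ p < ∞) :
    ∃ a b : ℝ, ∃ N : ℕ, a < b ∧ ∀ θ ∈ Icc a b, 0 < θ ∧ θ ≤ 1 ∧
      ∫⁻ t, ‖F t - F (t - θ)‖ₑ ^ p ≤ N := by
  have hp0 : 0 < p := by linarith
  set c : ℝ → ℝ := fun θ => max 0 (min θ 1) with hc
  have hcc : Continuous c := by fun_prop
  set S : ℕ → Set ℝ := fun n => {θ | ∫⁻ t, ‖F t - F (t - c θ)‖ₑ ^ p ≤ n} with hS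
  have hclosed : ∀ n, IsClosed (S n) := by
    intro n
    apply IsSeqClosed.isClosed
    intro x θ hx hxθ
    have hlim : ∀ t, Tendsto (fun k => ‖F t - F (t - c (x k))‖ₑ ^ p) atTop
        (nhds (‖F t - F (t - c θ)‖ₑ ^ p)) := by
      intro t
      have : Continuous (fun θ => ‖F t - F (t - c θ)‖ₑ ^ p) := by
        have h1 : Continuous (fun θ => ‖F t - F (t - c θ)‖ₑ) := by fun_prop
        exact (ENNReal.continuous_rpow_const).comp h1
      exact (this.tendsto θ).comp hxθ
    have h1 : ∫⁻ t, ‖F t - F (t - c θ)‖ₑ ^ p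
        = ∫⁻ t, liminf (fun k => ‖F t - F (t - c (x k))‖ₑ ^ p) atTop := by
      apply lintegral_congr
      intro t
      exact (hlim t).liminf_eq.symm
    change ∫⁻ t, ‖F t - F (t - c θ)‖ₑ ^ p ≤ n
    rw [h1]
    refine (lintegral_liminf_le fun k => ?_).trans ?_
    · have : Continuous (fun t => F t - F (t - c (x k))) := by fun_prop
      exact (this.measurable.enorm).pow_const _
    · apply liminf_le_of_frequently_le'
      exact Frequently.of_forall fun k => hx k
  have hcover : ⋃ n, S n = univ := by
    rw [eq_univ_iff_forall]
    intro θ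
    have hfin : ∫⁻ t, ‖F t - F (t - c θ)‖ₑ ^ p < ∞ := by
      by_cases h : c θ = 0
      · simp [h, hp0]
      · refine hA _ ⟨lt_of_le_of_ne (le_max_left _ _) (Ne.symm h), ?_⟩
        simp [hc]
    obtain ⟨n, hn⟩ := ENNReal.exists_nat_gt hfin.ne
    exact mem_iUnion.2 ⟨n, hn.le⟩
  have hd := dense_iUnion_interior_of_closed hclosed hcover
  obtain ⟨θ, hθ, hθS⟩ := hd.inter_open_nonempty (Ioo 0 1) isOpen_Ioo ⟨1/2, by norm_num⟩
  obtain ⟨n, hn⟩ := mem_iUnion.1 hθS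
  have hop : IsOpen (Ioo (0:ℝ) 1 ∩ interior (S n)) := isOpen_Ioo.inter isOpen_interior
  obtain ⟨ε, hε, hball⟩ := Metric.isOpen_iff.1 hop θ ⟨hθ, hn⟩
  refine ⟨θ, θ + ε / 2, n, by linarith, fun x hx => ?_⟩
  have hxb : x ∈ Metric.ball θ ε := by
    rw [Metric.mem_ball, Real.dist_eq, abs_lt]
    constructor <;> linarith [hx.1, hx.2]
  obtain ⟨h1, h2⟩ := hball hxb
  have h3' : x ∈ S n := interior_subset h2
  have h3 : ∫⁻ t, ‖F t - F (t - c x)‖ₑ ^ p ≤ n := h3'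
  have h4 : c x = x := by simp [hc, h1.1.le, h1.2.le]
  rw [h4] at h3
  exact ⟨h1.1, h1.2.le, h3⟩

/-- (A) implies (B), in normalised form. -/
lemma core_AB {p : ℝ} (hp : 1 ≤ p) {r ρ f : ℝ → ℝ} (hrm : Measurable r) (hri : Integrable r)
    (hρm : Measurable ρ) (hρ : Integrable ρ) (hρ0 : ∀ s < 0, ρ s = 0)
    (hr0 : ∀ s < 0, r s = 0)
    (hr : ∀ s ≥ 0, r s = 1 + prim ρ s)
    (hf : LocallyIntegrable f) (hf0 : ∀ s < 0, f s = 0)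
    (hA : ∀ θ ∈ Ioc (0:ℝ) 1,
      MemLp (fun t => prim f (t + θ) - prim f t) (ENNReal.ofReal p) volume) :
    MemLp (fun t => ∫ s, r (t - s) * f s) (ENNReal.ofReal p) volume := by
  have hp0 : 0 < p := by linarith
  set F := prim f with hFdef
  have hFc : Continuous F := prim_continuous hf
  have hF0 : ∀ t ≤ 0, F t = 0 := fun t ht => prim_nonpos hf0 ht
  have hB : ∀ θ ∈ Ioc (0:ℝ) 1, MemLp (fun t => F t - F (t - θ)) (ENNReal.ofReal p) volume := by
    intro θ hθ
    have := memLp_shift (hA θ hθ) (-θ)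
    convert this using 2 with t
    simp [sub_eq_add_neg]
  obtain ⟨a, b, N, hab, hN⟩ := baire_bound hp hFc
    (fun θ hθ => (memLp_iff hp (Continuous.aestronglyMeasurable (by fun_prop))).1 (hB θ hθ))
  have ha := hN a ⟨le_rfl, hab.le⟩
  have hb := hN b ⟨hab.le, le_rfl⟩
  have hba : b - a ≠ 0 := by linarith
  set g : ℝ → ℝ := fun t => (b - a)⁻¹ * (F (t - a) - F (t - b)) with hg
  have hgc : Continuous g := by fun_prop
  have hg0 : ∀ s < 0, g s = 0 := by
    intro s hs
    simp [hg, hF0 (s - a) (by linarith [ha.1]), hF0 (s - b) (by linarith [hb.1])]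
  have hgL : MemLp g (ENNReal.ofReal p) volume := by
    have := ((hB b ⟨hb.1, hb.2.1⟩).sub (hB a ⟨ha.1, ha.2.1⟩)).const_mul (b - a)⁻¹
    convert this using 2 with t
    simp only [hg, Pi.sub_apply]; ring
  have hgl : LocallyIntegrable g := hgc.locallyIntegrable
  set G := prim g with hGdef
  have hGc : Continuous G := prim_continuous hgl
  have hG0 : ∀ t ≤ 0, G t = 0 := fun t ht => prim_nonpos hg0 ht
  have hGeq : ∀ t, G t = (b - a)⁻¹ * ∫ θ in a..b, F (t - θ) := by
    intro t
    have hii : ∀ x y : ℝ, IntervalIntegrable F volume x y := fun x y =>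
      hFc.intervalIntegrable x y
    simp only [hGdef, prim, hg]
    rw [intervalIntegral.integral_const_mul, intervalIntegral.integral_sub
      (Continuous.intervalIntegrable (by fun_prop) _ _)
      (Continuous.intervalIntegrable (by fun_prop) _ _),
      intervalIntegral.integral_comp_sub_right, intervalIntegral.integral_comp_sub_right,
      intervalIntegral.integral_comp_sub_left]
    congr 1
    have hz : ∫ x in (0 - b)..(0 - a), F x = 0 := by
      rw [intervalIntegral.integral_congr (g := fun _ => (0:ℝ))]
      · simp
      · intro x hx
        rw [uIcc_of_le (by linarith)] at hx
        exact hF0 x (by linarith [hx.2, ha.1])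
    have e1 := intervalIntegral.integral_add_adjacent_intervals (hii (0 - b) (0 - a))
      (hii (0 - a) (t - a))
    have e2 := intervalIntegral.integral_add_adjacent_intervals (hii (0 - b) (t - b))
      (hii (t - b) (t - a))
    linarith
  set h : ℝ → ℝ := fun t => F t - G t with hh
  have hhc : Continuous h := by fun_prop
  have hheq : ∀ t, h t = (b - a)⁻¹ * ∫ θ in a..b, (F t - F (t - θ)) := by
    intro t
    rw [intervalIntegral.integral_sub (by simp)
      (Continuous.intervalIntegrable (by fun_prop) _ _)]
    simp only [hh, hGeq, intervalIntegral.integral_const, smul_eq_mul]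
    field_simp
  have hhL : MemLp (fun t => ∫ θ in a..b, (F t - F (t - θ))) (ENNReal.ofReal p) volume := by
    have hm : Measurable (fun t => ∫ θ in a..b, (F t - F (t - θ))) := by
      have : (fun t => ∫ θ in a..b, (F t - F (t - θ))) = fun t => (b - a) * h t := by
        ext t; rw [hheq]; field_simp
      rw [this]; fun_prop
    rw [memLp_iff hp hm.aestronglyMeasurable]
    set μ := volume.restrict (Ioc a b) with hμ
    calc ∫⁻ t, ‖∫ θ in a..b, (F t - F (t - θ))‖ₑ ^ p
        ≤ ∫⁻ t, (∫⁻ θ, ‖F t - F (t - θ)‖ₑ ^ p ∂μ) * μ univ ^ (p - 1) := by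
          apply lintegral_mono
          intro t
          refine le_trans (ENNReal.rpow_le_rpow ?_ hp0.le) (jensen μ hp (by fun_prop))
          rw [intervalIntegral.integral_of_le hab.le]
          exact enorm_integral_le_lintegral_enorm _
      _ = (∫⁻ t, ∫⁻ θ, ‖F t - F (t - θ)‖ₑ ^ p ∂μ) * μ univ ^ (p - 1) := by
          rw [lintegral_mul_const']
          exact ENNReal.rpow_ne_top_of_nonneg (by linarith) (measure_ne_top _ _)
      _ = (∫⁻ θ, (∫⁻ t, ‖F t - F (t - θ)‖ₑ ^ p) ∂μ) * μ univ ^ (p - 1) := by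
          rw [lintegral_lintegral_swap]
          have hmF := hFc.measurable
          exact Measurable.aemeasurable (by simp only [Function.uncurry_def]; fun_prop)
      _ ≤ (∫⁻ θ, (N : ℝ≥0∞) ∂μ) * μ univ ^ (p - 1) := by
          refine mul_le_mul_left (lintegral_mono_ae ?_) _
          filter_upwards [ae_restrict_mem measurableSet_Ioc] with θ hθ
          exact (hN θ ⟨hθ.1.le, hθ.2⟩).2.2
      _ < ∞ := by
          rw [lintegral_const]
          exact ENNReal.mul_lt_top (ENNReal.mul_lt_top (ENNReal.natCast_lt_top _)
            (measure_lt_top _ _))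
            (ENNReal.rpow_lt_top_of_nonneg (by linarith) (measure_ne_top _ _))
  have hhL' : MemLp h (ENNReal.ofReal p) volume := by
    convert hhL.const_mul (b - a)⁻¹ using 2 with t
    rw [hheq]
  have h1 := young_conv hp hρm hρ hhc.measurable hhL'
  have h2 := young_conv hp hrm hri hgc.measurable hgL
  convert (hhL'.add h1).add h2 using 2 with t
  simp only [Pi.add_apply]
  rw [conv_eq hρ hρ0 hr0 hr hf hf0 t]
  have h3 := conv_eq hρ hρ0 hr0 hr hgl hg0 t
  have h4 : ∫ s, r s * g (t - s) = ∫ s, r (t - s) * g s := by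
    rw [← integral_sub_left_eq_self (fun s => r (t - s) * g s) volume t]
    simp
  rw [h4, h3]
  have h5 : ∫ s, ρ s * h (t - s) = (∫ s, ρ s * F (t - s)) - ∫ s, ρ s * G (t - s) := by
    rw [← integral_sub (integrable_mul_left hρ hρ0 hFc hF0 t)
      (integrable_mul_left hρ hρ0 hGc hG0 t)]
    congr 1; ext s
    simp only [hh]; ring
  rw [h5]
  simp only [hh, ← hFdef, ← hGdef]
  ring

lemma locInt_indicator {f : ℝ → ℝ} (hf : LocallyIntegrableOn f (Ici 0)) :
    LocallyIntegrable ((Ici (0:ℝ)).indicator f) := by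
  rw [locallyIntegrable_iff]
  intro K hK
  rw [IntegrableOn, integrable_indicator_iff measurableSet_Ici, IntegrableOn,
    Measure.restrict_restrict measurableSet_Ici]
  exact hf.integrableOn_compact_subset inter_subset_left (hK.inter_left isClosed_Ici)

lemma integrableOn_iff {p : ℝ} (hp : 1 ≤ p) {g k : ℝ → ℝ} (hk : Measurable k)
    (hgk : ∀ t ≥ 0, g t = k t) :
    IntegrableOn (fun t => |g t| ^ p) (Ici 0) ↔
      MemLp k (ENNReal.ofReal p) (volume.restrict (Ici 0)) := by
  have hp0 : 0 < p := by linarith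
  rw [integrableOn_congr_fun (g := fun t => |k t| ^ p) (fun t ht => by simp only [hgk t ht])
    measurableSet_Ici]
  rw [← integrable_norm_rpow_iff hk.aestronglyMeasurable (by simpa using hp0)
    ENNReal.ofReal_ne_top, ENNReal.toReal_ofReal hp0.le]
  rfl

lemma memLp_extend {p : ℝ≥0∞} {D : ℝ → ℝ} (hD : Continuous D) {θ : ℝ}
    (h0 : ∀ t < -θ, D t = 0) (hL : MemLp D p (volume.restrict (Ici 0))) :
    MemLp D p volume := by
  have h1 : MemLp ((Ici 0).indicator D) p volume :=
    (memLp_indicator_iff_restrict measurableSet_Ici).2 hL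
  have h2 : MemLp ((Ico (-θ) 0).indicator D) p volume := by
    rw [memLp_indicator_iff_restrict measurableSet_Ico]
    obtain ⟨C, hC⟩ := isCompact_Icc.exists_bound_of_continuousOn (s := Icc (-θ) 0) hD.continuousOn
    refine MemLp.of_bound hD.aestronglyMeasurable C ?_
    filter_upwards [ae_restrict_mem measurableSet_Ico] with t ht
    exact hC t ⟨ht.1, ht.2.le⟩
  convert h1.add h2 using 1
  ext t
  simp only [Pi.add_apply, indicator, mem_Ici, mem_Ico]
  rcases lt_or_ge t 0 with h | h
  · rcases lt_or_ge t (-θ) with h' | h'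
    · simp [h0 t h']
    · simp [h, h', not_le.2 h]
  · simp [h, not_lt.2 h]

end VolterraLp

open VolterraLp

/-- Theorem 2.3: let `r` be the differential resolvent of the finite signed
Borel measure `ν` on `[0,∞)`, with `r ∈ L¹([0,∞))`, and for `ξ ∈ ℝ` let `x(·;ξ)` be the
solution of the perturbed equation, given by the variation of constants formula
`x(t;ξ) = r(t) ξ + ∫_0^t r(t-s) f(s) ds`. Then:
(A) every interval average `t ↦ ∫_t^{t+θ} f(s) ds`, `θ ∈ (0,1]`, is in `L^p([0,∞))`
if and only if
(B) `x(·;ξ) ∈ L^p([0,∞))` for every `ξ ∈ ℝ`. -/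
theorem solution_Lp_iff_interval_average_Lp
    (p : ℝ) (hp : 1 ≤ p)
    (ν : MeasureTheory.SignedMeasure ℝ)
    (hν : ν.restrict (Iio 0) = 0)
    (f : ℝ → ℝ)
    (hf : LocallyIntegrableOn f (Ici 0))
    (r r' : ℝ → ℝ)
    (hr'loc : LocallyIntegrableOn r' (Ici 0))
    (hr0 : r 0 = 1)
    (hFTC : ∀ t ≥ (0:ℝ), r t = 1 + ∫ s in (0:ℝ)..t, r' s)
    (hres : ∀ᵐ t ∂(volume.restrict (Ioi (0:ℝ))),
      r' t = signedSetIntegral ν (fun s => r (t - s)) (Icc 0 t))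
    (hrL1 : IntegrableOn r (Ici 0)) :
    (∀ θ ∈ Ioc (0:ℝ) 1,
        IntegrableOn (fun t => |∫ s in t..(t + θ), f s| ^ p) (Ici 0))
      ↔ ∀ ξ : ℝ,
          IntegrableOn (fun t => |r t * ξ + ∫ s in (0:ℝ)..t, r (t - s) * f s| ^ p)
            (Ici 0) := by
  
  classical
  set P₁ := ν.toJordanDecomposition.posPart with hP₁
  set P₂ := ν.toJordanDecomposition.negPart with hP₂
  set μ₁ := P₁.restrict (Ici 0) with hμ₁
  set μ₂ := P₂.restrict (Ici 0) with hμ₂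
  have hs₁ : ∀ᵐ s ∂μ₁, 0 ≤ s := ae_restrict_mem measurableSet_Ici
  have hs₂ : ∀ᵐ s ∂μ₂, 0 ≤ s := ae_restrict_mem measurableSet_Ici
  set q : ℝ → ℝ := (Ici (0:ℝ)).indicator r with hq
  have hq0 : ∀ s < 0, q s = 0 := fun s hs => by simp [hq, hs]
  have hqr : ∀ s ≥ 0, q s = r s := fun s hs => by simp only [hq, indicator, mem_Ici]; exact if_pos hs
  have hqi : Integrable q := (integrable_indicator_iff measurableSet_Ici).2 hrL1
  have hqm : Measurable q := by
    have hl := locInt_indicator hr'loc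
    have hc := prim_continuous hl
    have : q = (Ici (0:ℝ)).indicator (fun t => 1 + prim ((Ici (0:ℝ)).indicator r') t) := by
      apply indicator_congr
      intro t ht
      rw [hFTC t ht]
      congr 1
      apply intervalIntegral.integral_congr
      intro s hs
      rw [uIcc_of_le ht] at hs
      simp [hs.1]
    rw [this]
    exact Measurable.indicator (by fun_prop) measurableSet_Ici
  set ρ : ℝ → ℝ := fun t => (∫ s, q (t - s) ∂μ₁) - ∫ s, q (t - s) ∂μ₂ with hρ
  have hρm : Measurable ρ := (mconv_measurable μ₁ hqm).sub (mconv_measurable μ₂ hqm)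
  have hρi : Integrable ρ := (mconv_integrable μ₁ hqm hqi).sub (mconv_integrable μ₂ hqm hqi)
  have hρ0 : ∀ s < 0, ρ s = 0 := fun s hs => by
    simp only [hρ]
    rw [mconv_zero μ₁ hs₁ hq0 s hs, mconv_zero μ₂ hs₂ hq0 s hs, sub_zero]
  have hset : ∀ (P : Measure ℝ) (t : ℝ),
      ∫ s in Icc 0 t, r (t - s) ∂P = ∫ s in Ici 0, q (t - s) ∂P := by
    intro P t
    rw [← integral_indicator measurableSet_Icc, ← integral_indicator measurableSet_Ici]
    congr 1; ext s
    simp only [indicator, mem_Icc, mem_Ici, hq, sub_nonneg]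
    by_cases h1 : 0 ≤ s <;> by_cases h2 : s ≤ t <;> simp [h1, h2]
  have hr'ρ : ∀ᵐ t ∂(volume.restrict (Ioi (0:ℝ))), r' t = ρ t := by
    filter_upwards [hres] with t ht
    rw [ht, signedSetIntegral, hset, hset]
  have hqρ : ∀ s ≥ 0, q s = 1 + prim ρ s := by
    intro s hs
    rw [hqr s hs, hFTC s hs]
    congr 1
    apply intervalIntegral.integral_congr_ae
    rw [ae_restrict_iff' measurableSet_Ioi] at hr'ρ
    filter_upwards [hr'ρ] with t ht hts
    rw [uIoc_of_le hs] at hts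
    exact ht hts.1
  have hM : ∀ s, |q s| ≤ 1 + ∫ t, ‖ρ t‖ := by
    intro s
    have hpos : 0 ≤ ∫ t, ‖ρ t‖ := integral_nonneg fun t => norm_nonneg _
    rcases lt_or_ge s 0 with h | h
    · rw [hq0 s h, abs_zero]; linarith
    · rw [hqρ s h]
      refine (abs_add_le _ _).trans ?_
      rw [abs_one, prim_eq hρ0]
      gcongr
      rw [← Real.norm_eq_abs]
      refine (norm_integral_le_integral_norm _).trans ?_
      apply integral_mono
      · exact (hρi.indicator measurableSet_Iic).norm
      · exact hρi.norm
      · intro x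
        exact norm_indicator_le_norm_self _ _
  have hfl := locInt_indicator hf
  set fm := hfl.aestronglyMeasurable.mk with hfm
  set g : ℝ → ℝ := (Ici (0:ℝ)).indicator fm with hg
  have hgm : Measurable g :=
    hfl.aestronglyMeasurable.stronglyMeasurable_mk.measurable.indicator measurableSet_Ici
  have hg0 : ∀ s < 0, g s = 0 := fun s hs => by simp [hg, hs]
  have hgf : g =ᵐ[volume] (Ici (0:ℝ)).indicator f := by
    filter_upwards [hfl.aestronglyMeasurable.ae_eq_mk] with s hs
    by_cases h : 0 ≤ s
    · simp only [hg, indicator, mem_Ici, h, if_true]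
      rw [hfm, ← hs]; simp [h]
    · simp [hg, indicator, h]
  have hgl : LocallyIntegrable g := by
    intro x
    exact (hfl x).congr hgf.symm
  have hF : ∀ θ ∈ Ioc (0:ℝ) 1, ∀ t ≥ 0, ∫ s in t..(t + θ), f s = prim g (t + θ) - prim g t := by
    intro θ hθ t ht
    rw [prim_sub hgl]
    apply intervalIntegral.integral_congr_ae
    filter_upwards [hgf] with s hs hst
    rw [uIoc_of_le (by linarith [hθ.1])] at hst
    rw [hs, indicator_of_mem]
    exact le_trans ht hst.1.le
  set y : ℝ → ℝ := fun t => ∫ s, q (t - s) * g s with hy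
  have hym : Measurable y := conv_measurable hqm hgm
  have hy0 : ∀ t < 0, y t = 0 := by
    intro t ht
    have : (fun s => q (t - s) * g s) = 0 := by
      ext s
      rcases lt_or_ge s 0 with h | h
      · simp [hg0 s h]
      · simp [hq0 (t - s) (by linarith)]
    simp only [hy]
    rw [this]; simp
  have hyr : ∀ t ≥ 0, ∫ s in (0:ℝ)..t, r (t - s) * f s = y t := by
    intro t ht
    rw [intervalIntegral.integral_of_le ht, ← integral_Icc_eq_integral_Ioc,
      ← integral_indicator measurableSet_Icc]
    apply integral_congr_ae
    filter_upwards [hgf] with s hs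
    rw [hs]
    simp only [indicator, mem_Icc, mem_Ici, hq, sub_nonneg]
    by_cases h1 : 0 ≤ s <;> by_cases h2 : s ≤ t <;> simp [h1, h2]
  have hxr : ∀ ξ : ℝ, ∀ t ≥ 0, r t * ξ + ∫ s in (0:ℝ)..t, r (t - s) * f s = q t * ξ + y t :=
    fun ξ t ht => by rw [hyr t ht, hqr t ht]
  have hFc := prim_continuous hgl
  have hF0 : ∀ t ≤ 0, prim g t = 0 := fun t ht => prim_nonpos hg0 ht
  constructor
  · intro hA ξ
    rw [integrableOn_iff hp (k := fun t => q t * ξ + y t) (by fun_prop) (hxr ξ)]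
    have hqL : MemLp q (ENNReal.ofReal p) volume := memLp_of_bdd hp hqi hM
    have hyL : MemLp y (ENNReal.ofReal p) volume := by
      apply core_AB hp hqm hqi hρm hρi hρ0 hq0 hqρ hgl hg0
      intro θ hθ
      apply memLp_extend (θ := θ) (by fun_prop)
      · intro t ht
        rw [hF0 _ (by linarith), hF0 _ (by linarith [hθ.1]), sub_zero]
      · exact (integrableOn_iff hp (by fun_prop) (hF θ hθ)).1 (hA θ hθ)
    exact ((hqL.mul_const ξ).add hyL).mono_measure Measure.restrict_le_self
  · intro hB θ hθ
    rw [integrableOn_iff hp (k := fun t => prim g (t + θ) - prim g t) (by fun_prop) (hF θ hθ)]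
    have h1 := (integrableOn_iff hp (k := fun t => q t * 0 + y t) (by fun_prop) (hxr 0)).1 (hB 0)
    simp only [mul_zero, zero_add] at h1
    have hyL : MemLp y (ENNReal.ofReal p) volume := by
      have := (memLp_indicator_iff_restrict (measurableSet_Ici (a := (0:ℝ)))).2 h1
      have e : (Ici (0:ℝ)).indicator y = y := by
        funext t
        rcases lt_or_ge t 0 with h | h
        · rw [hy0 t h]; simp [h]
        · rw [indicator_of_mem]; exact h
      rwa [e] at this
    exact (core_BA hp μ₁ μ₂ hs₁ hs₂ hqm hqi hM hq0 hqρ hgm hgl hg0 hyL hθ.1).mono_measure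
      Measure.restrict_le_self
end

section
/- Let ν be a finite signed Borel measure on [0,∞), f : [0,∞) → ℝ locally integrable, let r be the differential resolvent of ν with r ∈ L¹([0,∞)), and for ξ ∈ ℝ let x(·;ξ) denote the solution of x′(t) = ∫_{[0,t]} x(t−s) dν(s) + f(t), x(0) = ξ. Then the following are equivalent: (A) x(·;ξ) is bounded, continuous, and tends to 0 at infinity, for every ξ ∈ ℝ; (B) for each θ ∈ (0,1], the function t ↦ ∫_t^{t+θ} f(s) ds is bounded, continuous, and tends to 0 at infinity. -/
open MeasureTheory Set Filter

namespace VB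
noncomputable def conv (a b : ℝ → ℝ) (t : ℝ) : ℝ := ∫ v, a (t - v) * b v

noncomputable def H : ℝ → ℝ := indicator (Ici 0) (fun _ => (1:ℝ))

def Causal (a : ℝ → ℝ) : Prop := ∀ t < 0, a t = 0

lemma H_causal : Causal H := by
  intro t ht; simp [H, ht]

lemma H_meas : Measurable H := measurable_const.indicator measurableSet_Ici

lemma H_bdd (t : ℝ) : |H t| ≤ 1 := by
  unfold H indicator; split_ifs <;> simp

lemma conv_congr {a b b' : ℝ → ℝ} (ha : Causal a) {t : ℝ} (h : ∀ v ≤ t, b v = b' v) :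
    conv a b t = conv a b' t := by
  unfold conv
  congr 1; ext v
  rcases le_or_gt v t with hv | hv
  · rw [h v hv]
  · rw [ha (t - v) (by linarith)]; simp

lemma conv_causal {a b : ℝ → ℝ} (ha : Causal a) (hb : Causal b) : Causal (conv a b) := by
  intro t ht
  unfold conv
  rw [← integral_zero ℝ ℝ]
  congr 1; ext v
  rcases lt_or_ge v 0 with hv | hv
  · rw [hb v hv]; simp
  · rw [ha (t - v) (by linarith)]; simp

lemma conv_H (b : ℝ → ℝ) (t : ℝ) : conv H b t = ∫ v in Iic t, b v := by
  rw [← integral_indicator measurableSet_Iic]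
  unfold conv
  congr 1; ext v
  by_cases hv : v ≤ t <;> simp [H, hv]

lemma conv_H' {b : ℝ → ℝ} (hb : Causal b) {t : ℝ} (ht : 0 ≤ t) :
    conv H b t = ∫ v in (0:ℝ)..t, b v := by
  rw [intervalIntegral.integral_of_le ht, conv_H, ← integral_Icc_eq_integral_Ioc,
    ← integral_indicator measurableSet_Iic, ← integral_indicator measurableSet_Icc]
  congr 1; ext v
  by_cases hv : v ≤ t <;> by_cases hv0 : 0 ≤ v <;> simp [indicator, hv, hv0]
  exact hb v (by linarith)

lemma conv_bound {a b : ℝ → ℝ} (hb : Integrable b) {C : ℝ} (hC : ∀ t, |a t| ≤ C) (t : ℝ) :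
    |conv a b t| ≤ C * ∫ v, |b v| := by
  unfold conv
  rw [← integral_const_mul]
  rw [← Real.norm_eq_abs]
  refine norm_integral_le_of_norm_le (hb.abs.const_mul C) (Eventually.of_forall fun v => ?_)
  rw [Real.norm_eq_abs, abs_mul]
  exact mul_le_mul_of_nonneg_right (hC _) (abs_nonneg _)

/-- Continuity of a convolution whose kernel is continuous away from `0`. -/
lemma conv_continuous {a b : ℝ → ℝ} (ha : Measurable a) {C : ℝ} (hC : ∀ t, |a t| ≤ C)
    (hac : ∀ t ≠ 0, ContinuousAt a t) (hb : Integrable b) : Continuous (conv a b) := by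
  rw [continuous_iff_continuousAt]
  intro t
  unfold conv
  apply continuousAt_of_dominated (bound := fun v => C * |b v|)
  · refine Eventually.of_forall fun s => ?_
    exact ((ha.comp (measurable_const.sub measurable_id)).aestronglyMeasurable).mul
      hb.aestronglyMeasurable
  · refine Eventually.of_forall fun s => Eventually.of_forall fun v => ?_
    rw [Real.norm_eq_abs, abs_mul]
    exact mul_le_mul_of_nonneg_right (hC _) (abs_nonneg _)
  · exact hb.abs.const_mul C
  · have : ∀ᵐ v : ℝ, v ≠ t := by simp [ae_iff]
    filter_upwards [this] with v hv
    apply ContinuousAt.mul _ continuousAt_const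
    exact ContinuousAt.comp (g := a) (f := fun s => s - v) (hac _ (sub_ne_zero.2 (Ne.symm hv)))
      (by fun_prop)

lemma H_cont : ∀ t ≠ 0, ContinuousAt H t := by
  intro t ht
  rcases lt_or_gt_of_ne ht with h | h
  · have : H =ᶠ[nhds t] fun _ => 0 := by
      filter_upwards [Iio_mem_nhds h] with s hs using H_causal s hs
    exact continuousAt_const.congr this.symm
  · have : H =ᶠ[nhds t] fun _ => 1 := by
      filter_upwards [Ioi_mem_nhds h] with s hs
      have : (0:ℝ) ≤ s := le_of_lt hs
      simp [H, this]
    exact continuousAt_const.congr this.symm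

/-- Fubini: a bounded kernel against a finite measure and an integrable function. -/
lemma swap_measure {a b : ℝ → ℝ} (μ : Measure ℝ) [IsFiniteMeasure μ] (ha : Measurable a) {C : ℝ}
    (hC : ∀ t, |a t| ≤ C) (hb : Integrable b) (t : ℝ) :
    Integrable (fun v => (∫ u, a (t - v - u) ∂μ) * b v) ∧
    ∫ v, (∫ u, a (t - v - u) ∂μ) * b v = ∫ u, conv a b (t - u) ∂μ := by
  have hprodInt : Integrable (fun p : ℝ × ℝ => a (t - p.1 - p.2) * b p.1) (volume.prod μ) := by
    have h1 : Integrable (fun p : ℝ × ℝ => b p.1) (volume.prod μ) := hb.comp_fst μ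
    refine h1.bdd_mul (c := C) ?_ (Eventually.of_forall fun p => hC _)
    exact (ha.comp (by fun_prop)).aestronglyMeasurable
  constructor
  · have := hprodInt.integral_prod_left
    refine this.congr (Eventually.of_forall fun v => ?_)
    simp only [integral_mul_const]
  · simp_rw [← integral_mul_const]
    rw [integral_integral_swap hprodInt]
    unfold conv
    congr 1; ext u; congr 1; ext v
    rw [sub_right_comm]

lemma conv_comm (a b : ℝ → ℝ) (t : ℝ) : conv a b t = conv b a t := by
  unfold conv
  rw [← integral_sub_left_eq_self _ volume t]
  congr 1; ext v
  rw [sub_sub_cancel, mul_comm]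

lemma conv_assoc_H {a b : ℝ → ℝ} (ha : Integrable a) (hb : Integrable b) (t : ℝ) :
    conv (conv H a) b t = conv a (conv H b) t := by
  rw [conv_comm a]
  have hprodInt : Integrable (fun p : ℝ × ℝ => H (t - p.1 - p.2) * (a p.2 * b p.1))
      (volume.prod volume) := by
    have h1 : Integrable (fun p : ℝ × ℝ => a p.2 * b p.1) (volume.prod volume) := by
      simpa [mul_comm] using hb.mul_prod ha
    refine h1.bdd_mul (c := 1) ?_ (Eventually.of_forall fun p => H_bdd _)
    exact (H_meas.comp (by fun_prop)).aestronglyMeasurable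
  unfold conv
  simp_rw [← integral_mul_const, mul_assoc]
  rw [integral_integral_swap hprodInt]
  congr 1; ext u; congr 1; ext v
  rw [sub_right_comm]; ring

lemma conv_assoc_H' {a b : ℝ → ℝ} (ha : Integrable a) (hb : Integrable b) (t : ℝ) :
    conv (conv H a) b t = conv H (conv a b) t := by
  have hprodInt : Integrable (fun p : ℝ × ℝ => H (t - p.1) * (a (p.1 - p.2) * b p.2))
      (volume.prod volume) := by
    have h1 : Integrable (fun p : ℝ × ℝ => a (p.1 - p.2) * b p.2) (volume.prod volume) := by
      simpa [mul_comm] using hb.convolution_integrand (ContinuousLinearMap.mul ℝ ℝ) ha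
    refine h1.bdd_mul (c := 1) ?_ (Eventually.of_forall fun p => H_bdd _)
    exact (H_meas.comp (by fun_prop)).aestronglyMeasurable
  unfold conv
  simp_rw [← integral_const_mul]
  rw [integral_integral_swap hprodInt]
  congr 1; ext v
  simp_rw [← mul_assoc]
  rw [integral_mul_const]
  congr 1
  rw [← integral_sub_right_eq_self _ v]
  congr 1; ext u
  congr 2; ring

lemma dc {w g : ℝ → ℝ} (μ : Measure ℝ) (hw : Integrable w μ) (hg : Measurable g) {C l : ℝ}
    (hC : ∀ t, |g t| ≤ C) (h0 : Tendsto g atTop (nhds l)) :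
    Tendsto (fun t => ∫ u, w u * g (t - u) ∂μ) atTop (nhds (∫ u, w u * l ∂μ)) := by
  apply tendsto_integral_filter_of_dominated_convergence (fun u => |w u| * C)
  · refine Eventually.of_forall fun s => ?_
    exact hw.aestronglyMeasurable.mul
      (hg.comp (measurable_const.sub measurable_id)).aestronglyMeasurable
  · refine Eventually.of_forall fun s => Eventually.of_forall fun v => ?_
    rw [Real.norm_eq_abs, abs_mul]
    exact mul_le_mul_of_nonneg_left (hC _) (abs_nonneg _)
  · exact hw.abs.mul_const C
  · refine Eventually.of_forall fun u => ?_
    apply Tendsto.const_mul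
    exact h0.comp (tendsto_atTop_add_const_right _ (-u) tendsto_id)

lemma bdd_of_tendsto {g : ℝ → ℝ} (hg : ContinuousOn g (Ici 0)) {l : ℝ}
    (h0 : Tendsto g atTop (nhds l)) : ∃ M, ∀ t ≥ (0:ℝ), |g t| ≤ M := by
  have h1 : ∀ᶠ t in atTop, |g t| ≤ |l| + 1 :=
    (h0.abs).eventually (eventually_le_nhds (by linarith))
  obtain ⟨T, hT⟩ := eventually_atTop.1 h1
  obtain ⟨C, hC⟩ := (isCompact_Icc (a := (0:ℝ)) (b := T)).exists_bound_of_continuousOn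
    (hg.mono Icc_subset_Ici_self)
  refine ⟨max C (|l| + 1), fun t ht => ?_⟩
  rcases le_total t T with h | h
  · exact (hC t ⟨ht, h⟩).trans (le_max_left _ _)
  · exact (hT t h).trans (le_max_right _ _)
end VB
namespace VB

set_option linter.unusedSectionVars false

lemma dc_one {g : ℝ → ℝ} (μ : Measure ℝ) [IsFiniteMeasure μ] (hg : Measurable g) {C l : ℝ}
    (hC : ∀ t, |g t| ≤ C) (h0 : Tendsto g atTop (nhds l)) :
    Tendsto (fun t => ∫ u, g (t - u) ∂μ) atTop (nhds (∫ _, l ∂μ)) := by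
  simpa using dc (w := fun _ => 1) μ (integrable_const _) hg hC h0

lemma integrable_of_bdd {g : ℝ → ℝ} (μ : Measure ℝ) [IsFiniteMeasure μ] (hg : Measurable g) {C : ℝ}
    (hC : ∀ t, |g t| ≤ C) (t : ℝ) : Integrable (fun u => g (t - u)) μ :=
  Integrable.of_bound (C := C) (hg.comp (measurable_const.sub measurable_id)).aestronglyMeasurable
    (Eventually.of_forall fun _ => hC _)

lemma integrableOn_Iic {f : ℝ → ℝ} (hc : Causal f) (hf : LocallyIntegrable f) (T : ℝ) :
    IntegrableOn f (Iic T) := by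
  have h1 : IntegrableOn f (Iio 0) := by
    refine (integrableOn_zero).congr_fun (fun v hv => (hc v hv).symm) measurableSet_Iio
  have h2 : IntegrableOn f (Icc 0 T) := hf.integrableOn_isCompact isCompact_Icc
  refine (h1.union h2).mono_set ?_
  intro v hv
  rcases lt_or_ge v 0 with h | h
  · exact Or.inl h
  · exact Or.inr ⟨h, hv⟩

noncomputable def tr (T : ℝ) (f : ℝ → ℝ) : ℝ → ℝ := indicator (Iic T) f

lemma tr_int {f : ℝ → ℝ} (hc : Causal f) (hf : LocallyIntegrable f) (T : ℝ) :
    Integrable (tr T f) :=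
  (integrable_indicator_iff measurableSet_Iic).2 (integrableOn_Iic hc hf T)

lemma conv_tr {a f : ℝ → ℝ} (ha : Causal a) {t T : ℝ} (h : t ≤ T) :
    conv a f t = conv a (tr T f) t :=
  conv_congr ha fun v hv => by
    have : v ∈ Iic T := hv.trans h
    simp only [tr, indicator_of_mem this]

structure Data (μ₁ μ₂ : Measure ℝ) (a : ℝ → ℝ) : Prop where
  null₁ : μ₁ (Iio 0) = 0
  null₂ : μ₂ (Iio 0) = 0
  meas : Measurable a
  int : Integrable a
  bdd : ∃ C, ∀ t, |a t| ≤ C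
  causal : Causal a
  cont : ∀ t ≠ 0, ContinuousAt a t
  hK : ∀ t, a t = H t + (∫ u, conv H a (t - u) ∂μ₁ - ∫ u, conv H a (t - u) ∂μ₂)

lemma A_cont {a : ℝ → ℝ} (h : Integrable a) : Continuous (conv H a) :=
  conv_continuous H_meas H_bdd H_cont h

lemma conv_cont_loc {a f : ℝ → ℝ} (ha : Measurable a) (hca : Causal a) {C : ℝ}
    (hC : ∀ t, |a t| ≤ C) (hac : ∀ t ≠ 0, ContinuousAt a t) (hc : Causal f)
    (hf : LocallyIntegrable f) : Continuous (conv a f) := by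
  rw [continuous_iff_continuousAt]
  intro t
  have h1 := (conv_continuous ha hC hac (tr_int hc hf (t+1))).continuousAt (x := t)
  refine h1.congr ?_
  filter_upwards [Iio_mem_nhds (show t < t + 1 by linarith)] with s hs
  exact (conv_tr hca (le_of_lt hs)).symm

lemma ae_nonneg {μ : Measure ℝ} (h : μ (Iio 0) = 0) : ∀ᵐ u ∂μ, 0 ≤ u := by
  rw [ae_iff]; simpa [Iio] using h

variable {μ₁ μ₂ : Measure ℝ} [IsFiniteMeasure μ₁] [IsFiniteMeasure μ₂] {a : ℝ → ℝ}

lemma A_bdd (h : Integrable a) (t : ℝ) : |conv H a t| ≤ ∫ v, |a v| := by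
  simpa using conv_bound h H_bdd t

lemma G1 (D : Data μ₁ μ₂ a) {f : ℝ → ℝ} (hc : Causal f) (hf : LocallyIntegrable f) (t : ℝ) :
    conv a f t = conv H f t +
      (∫ u, conv (conv H a) f (t - u) ∂μ₁ - ∫ u, conv (conv H a) f (t - u) ∂μ₂) := by
  have hφ := tr_int hc hf t
  have hAc : Causal (conv H a) := conv_causal H_causal D.causal
  have key : ∀ (μ : Measure ℝ) [IsFiniteMeasure μ], μ (Iio 0) = 0 →
      ∫ u, conv (conv H a) f (t - u) ∂μ = ∫ u, conv (conv H a) (tr t f) (t - u) ∂μ := by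
    intro μ _ h
    refine integral_congr_ae ?_
    filter_upwards [ae_nonneg h] with u hu
    exact conv_tr hAc (by linarith)
  rw [key μ₁ D.null₁, key μ₂ D.null₂, conv_tr D.causal le_rfl, conv_tr H_causal le_rfl]
  obtain ⟨i1, e1⟩ := swap_measure μ₁ (A_cont D.int).measurable (A_bdd D.int) hφ t
  obtain ⟨i2, e2⟩ := swap_measure μ₂ (A_cont D.int).measurable (A_bdd D.int) hφ t
  have i0 : Integrable (fun v => H (t - v) * tr t f v) :=
    hφ.bdd_mul (c := 1) (H_meas.comp (by fun_prop)).aestronglyMeasurable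
      (Eventually.of_forall fun p => H_bdd _)
  rw [← e1, ← e2, ← integral_sub i1 i2]
  unfold conv at *
  refine Eq.trans ?_ (integral_add i0 (i1.sub i2))
  congr 1; ext v
  rw [D.hK (t - v)]
  simp only [conv, Pi.sub_apply]
  ring

lemma G2 (D : Data μ₁ μ₂ a) {f : ℝ → ℝ} (hc : Causal f) (hf : LocallyIntegrable f) (t : ℝ) :
    conv (conv H a) f t = conv a (conv H f) t := by
  rw [conv_tr (conv_causal H_causal D.causal) le_rfl, conv_assoc_H D.int (tr_int hc hf t)]
  exact conv_congr D.causal fun v hv => (conv_tr H_causal hv).symm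

lemma G3 (D : Data μ₁ μ₂ a) {f : ℝ → ℝ} (hc : Causal f) (hf : LocallyIntegrable f) (t : ℝ) :
    conv (conv H a) f t = conv H (conv a f) t := by
  rw [conv_tr (conv_causal H_causal D.causal) le_rfl, conv_assoc_H' D.int (tr_int hc hf t)]
  exact conv_congr H_causal fun v hv => (conv_tr D.causal hv).symm

lemma x_cont (D : Data μ₁ μ₂ a) {f : ℝ → ℝ} (hc : Causal f) (hf : LocallyIntegrable f) :
    Continuous (conv a f) := by
  obtain ⟨C, hC⟩ := D.bdd
  exact conv_cont_loc D.meas D.causal hC D.cont hc hf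

lemma F_cont {f : ℝ → ℝ} (hc : Causal f) (hf : LocallyIntegrable f) :
    Continuous (conv H f) :=
  conv_cont_loc H_meas H_causal H_bdd H_cont hc hf

lemma F_sub {f : ℝ → ℝ} (hc : Causal f) (hf : LocallyIntegrable f) (s t : ℝ) :
    conv H f t - conv H f s = ∫ v in s..t, f v := by
  rw [conv_H, conv_H]
  exact intervalIntegral.integral_Iic_sub_Iic (integrableOn_Iic hc hf _) (integrableOn_Iic hc hf _)

lemma causal_bdd {g : ℝ → ℝ} (hc : Causal g) {M : ℝ} (h : ∀ t ≥ (0:ℝ), |g t| ≤ M) (t : ℝ) :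
    |g t| ≤ M := by
  rcases lt_or_ge t 0 with h1 | h1
  · rw [hc t h1, abs_zero]; exact (abs_nonneg _).trans (h 0 le_rfl)
  · exact h t h1

lemma N_cont_int {g : ℝ → ℝ} (μ : Measure ℝ) [IsFiniteMeasure μ] (h0 : μ (Iio 0) = 0)
    (hg : Continuous g) (hc : Causal g) (t : ℝ) : Integrable (fun u => g (t - u)) μ := by
  obtain ⟨C, hC⟩ := (isCompact_Icc (a := (0:ℝ)) (b := max t 0)).exists_bound_of_continuousOn
    hg.continuousOn
  refine Integrable.of_bound (C := C) (hg.measurable.comp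
    (measurable_const.sub measurable_id)).aestronglyMeasurable ?_
  filter_upwards [ae_nonneg h0] with u hu
  rcases lt_or_ge (t - u) 0 with h1 | h1
  · rw [hc _ h1, norm_zero]
    exact (norm_nonneg _).trans (hC 0 ⟨le_rfl, le_max_right _ _⟩)
  · exact hC _ ⟨h1, le_max_of_le_left (by linarith)⟩

lemma forward (D : Data μ₁ μ₂ a) {f : ℝ → ℝ} (hc : Causal f) (hf : LocallyIntegrable f)
    (hx : Tendsto (conv a f) atTop (nhds 0)) {θ : ℝ} (hθ : 0 ≤ θ) :
    Tendsto (fun t => conv H f (t + θ) - conv H f t) atTop (nhds 0) := by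
  set x := conv a f with hxdef
  have xc : Continuous x := x_cont D hc hf
  have xcaus : Causal x := conv_causal D.causal hc
  obtain ⟨M, hM⟩ := bdd_of_tendsto xc.continuousOn hx
  replace hM := causal_bdd xcaus hM
  have hXc : Continuous (conv H x) := F_cont xcaus xc.locallyIntegrable
  have hXcaus : Causal (conv H x) := conv_causal H_causal xcaus
  let d : ℝ → ℝ := fun s => conv H x (s + θ) - conv H x s
  have hd : ∀ s, d s = ∫ v in s..(s + θ), x v := fun s => F_sub xcaus xc.locallyIntegrable _ _
  have dm : Measurable d :=
    ((hXc.comp (continuous_id.add continuous_const)).sub hXc).measurable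
  have db : ∀ s, |d s| ≤ M * |s + θ - s| := fun s => by
    rw [hd, ← Real.norm_eq_abs]
    exact intervalIntegral.norm_integral_le_of_norm_le_const fun v _ => hM v
  have db' : ∀ s, |d s| ≤ M * θ := fun s => by
    have := db s
    rwa [add_sub_cancel_left, abs_of_nonneg hθ] at this
  have d0 : Tendsto d atTop (nhds 0) := by
    rw [Metric.tendsto_atTop]
    intro ε hε
    rw [Metric.tendsto_atTop] at hx
    obtain ⟨S, hS⟩ := hx (ε / (θ + 1)) (by positivity)
    refine ⟨S, fun s hs => ?_⟩
    have : ‖d s‖ ≤ ε / (θ + 1) * |s + θ - s| := by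
      rw [hd]
      refine intervalIntegral.norm_integral_le_of_norm_le_const fun v hv => ?_
      rw [uIoc_of_le (by linarith)] at hv
      have := hS v (by linarith [hv.1])
      rw [dist_zero_right] at this
      exact this.le
    rw [add_sub_cancel_left, abs_of_nonneg hθ] at this
    rw [dist_zero_right]
    refine this.trans_lt ?_
    rw [div_mul_eq_mul_div, div_lt_iff₀ (by positivity)]
    nlinarith
  have e : ∀ t, conv H f (t + θ) - conv H f t =
      x (t + θ) - x t - (∫ u, d (t - u) ∂μ₁ - ∫ u, d (t - u) ∂μ₂) := by
    intro t
    have g1 := G1 D hc hf (t + θ)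
    have g2 := G1 D hc hf t
    simp only [G3 D hc hf] at g1 g2
    have key : ∀ (μ : Measure ℝ) [IsFiniteMeasure μ], μ (Iio 0) = 0 →
        ∫ u, d (t - u) ∂μ = ∫ u, conv H x (t + θ - u) ∂μ - ∫ u, conv H x (t - u) ∂μ := by
      intro μ _ h
      rw [← integral_sub (N_cont_int μ h hXc hXcaus _) (N_cont_int μ h hXc hXcaus _)]
      congr 1; ext u
      simp only [d]
      rw [show t - u + θ = t + θ - u by ring]
    rw [key μ₁ D.null₁, key μ₂ D.null₂]
    rw [← hxdef] at g1 g2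
    linarith
  simp_rw [e]
  have h1 := dc_one μ₁ dm db' d0
  have h2 := dc_one μ₂ dm db' d0
  have h3 := hx.comp (tendsto_atTop_add_const_right _ θ tendsto_id)
  simpa using (h3.sub hx).sub (h1.sub h2)

lemma a_tendsto (D : Data μ₁ μ₂ a) : Tendsto a atTop (nhds 0) := by
  have hA : Tendsto (conv H a) atTop (nhds (∫ v, a v)) := by
    have := (aecover_Iic (μ := (volume : Measure ℝ)) (tendsto_id (x := (atTop : Filter ℝ)))).integral_tendsto_of_countably_generated D.int
    exact this.congr fun t => (conv_H a t).symm
  have h1 := dc_one μ₁ (A_cont D.int).measurable (A_bdd D.int) hA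
  have h2 := dc_one μ₂ (A_cont D.int).measurable (A_bdd D.int) hA
  have hH : Tendsto H atTop (nhds 1) := by
    refine tendsto_const_nhds.congr' ?_
    filter_upwards [eventually_ge_atTop 0] with s hs
    simp [H, hs]
  have h3 := (hH.add (h1.sub h2)).congr fun t => (D.hK t).symm
  have : IntegrableAtFilter a atTop := D.int.integrableAtFilter _
  have := this.eq_zero_of_tendsto (fun s hs => by
    obtain ⟨b, hb⟩ := mem_atTop_sets.1 hs
    rw [← top_le_iff, ← Real.volume_Ici (a := b)]
    exact measure_mono hb) h3
  rwa [this] at h3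

end VB
namespace VB

set_option linter.unusedSectionVars false

/-- Baire category: boundedness for each shift gives uniform boundedness for small shifts. -/
lemma baire_step {F : ℝ → ℝ} (hF : Continuous F)
    (hB : ∀ θ ∈ Ioc (0:ℝ) 1, ∃ M : ℝ, ∀ t ≥ (0:ℝ), |F (t + θ) - F t| ≤ M) :
    ∃ c ∈ Ioc (0:ℝ) 1, ∃ C : ℝ, ∀ t ≥ (0:ℝ), ∀ θ ∈ Icc 0 c, |F (t + θ) - F t| ≤ C := by
  let pr : ℝ → ℝ := fun θ => max 0 (min θ 1)
  have prc : Continuous pr := by fun_prop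
  let E : ℕ → Set ℝ := fun n => {θ | ∀ t ≥ (0:ℝ), |F (t + pr θ) - F t| ≤ n}
  have Ecl : ∀ n, IsClosed (E n) := by
    intro n
    have : E n = ⋂ t ∈ Ici (0:ℝ), {θ | |F (t + pr θ) - F t| ≤ n} := by
      ext θ; simp [E]
    rw [this]
    refine isClosed_biInter fun t _ => isClosed_le (by fun_prop) continuous_const
  have EU : ⋃ n, E n = univ := by
    rw [eq_univ_iff_forall]
    intro θ
    rw [mem_iUnion]
    have h01 : 0 ≤ pr θ ∧ pr θ ≤ 1 := ⟨le_max_left _ _, max_le zero_le_one (min_le_right _ _)⟩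
    rcases h01.1.eq_or_lt with h | h
    · refine ⟨0, fun t _ => ?_⟩
      rw [← h]; simp
    · obtain ⟨M, hM⟩ := hB (pr θ) ⟨h, h01.2⟩
      obtain ⟨n, hn⟩ := exists_nat_ge M
      exact ⟨n, fun t ht => (hM t ht).trans hn⟩
  obtain ⟨b, hb, hb'⟩ := (dense_iUnion_interior_of_closed Ecl EU).inter_open_nonempty
    (Ioo 0 1) isOpen_Ioo ⟨1/2, by norm_num, by norm_num⟩
  obtain ⟨n, hn⟩ := mem_iUnion.1 hb'
  have hop : IsOpen (interior (E n) ∩ Ioo 0 1) := isOpen_interior.inter isOpen_Ioo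
  obtain ⟨ε, hε, hball⟩ := Metric.isOpen_iff.1 hop b ⟨hn, hb⟩
  have hmem : ∀ θ ∈ Icc 0 (min (ε / 2) 1), ∀ t ≥ (0:ℝ), |F (t + (b + θ)) - F t| ≤ n := by
    intro θ hθ t ht
    have h1 : θ ≤ ε / 2 := hθ.2.trans (min_le_left _ _)
    have : b + θ ∈ Metric.ball b ε := by
      rw [Metric.mem_ball, Real.dist_eq, add_sub_cancel_left, abs_of_nonneg hθ.1]; linarith
    obtain ⟨h2, h3⟩ := hball this
    have h4 := interior_subset h2 t ht
    have : pr (b + θ) = b + θ := by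
      simp only [pr]
      rw [min_eq_left h3.2.le, max_eq_right h3.1.le]
    rwa [this] at h4
  refine ⟨min (ε / 2) 1, ⟨lt_min (by linarith) one_pos, min_le_right _ _⟩, n + n, ?_⟩
  intro t ht θ hθ
  have h1 := hmem θ hθ t ht
  have h2 := hmem 0 ⟨le_rfl, hθ.1.trans hθ.2⟩ (t + θ) (by linarith [hθ.1])
  rw [show t + θ + (b + 0) = t + (b + θ) by ring] at h2
  rw [abs_le] at *
  constructor <;> linarith [h1.1, h1.2, h2.1, h2.2]

lemma ind_causal (g : ℝ → ℝ) : Causal (indicator (Ici 0) g) := by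
  intro t ht; simp [ht]

lemma ind_cont {g : ℝ → ℝ} (hg : ContinuousOn g (Ici 0)) :
    ∀ t ≠ 0, ContinuousAt (indicator (Ici 0) g) t := by
  intro t ht
  rcases lt_or_gt_of_ne ht with h | h
  · have : indicator (Ici 0) g =ᶠ[nhds t] fun _ => 0 := by
      filter_upwards [Iio_mem_nhds h] with s hs using ind_causal g s hs
    exact continuousAt_const.congr this.symm
  · have : indicator (Ici 0) g =ᶠ[nhds t] g := by
      filter_upwards [Ioi_mem_nhds h] with s hs
      have : s ∈ Ici (0:ℝ) := (show (0:ℝ) < s from hs).le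
      simp only [indicator_of_mem this]
    exact (hg.continuousAt (Ici_mem_nhds h)).congr this.symm

lemma ind_tendsto {g : ℝ → ℝ} {l : ℝ} (hg : Tendsto g atTop (nhds l)) :
    Tendsto (indicator (Ici 0) g) atTop (nhds l) := by
  refine hg.congr' ?_
  filter_upwards [eventually_ge_atTop 0] with s hs
  have : s ∈ Ici (0:ℝ) := hs
  simp only [indicator_of_mem this]

lemma ind_bdd {g : ℝ → ℝ} {C : ℝ} (hC : ∀ t ≥ (0:ℝ), |g t| ≤ C) (t : ℝ) :
    |indicator (Ici 0) g t| ≤ C := by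
  refine causal_bdd (ind_causal g) (fun s hs => ?_) t
  have : s ∈ Ici (0:ℝ) := hs
  simpa only [indicator_of_mem this] using hC s hs

lemma conv_tendsto {b g : ℝ → ℝ} (hb : Integrable b) (hg : Measurable g) {C : ℝ}
    (hC : ∀ t, |g t| ≤ C) (h0 : Tendsto g atTop (nhds 0)) :
    Tendsto (conv b g) atTop (nhds 0) := by
  have := dc volume hb hg hC h0
  simp only [mul_zero, integral_zero] at this
  refine this.congr fun t => ?_
  rw [conv_comm]; unfold conv
  congr 1; ext u; ring

variable {μ₁ μ₂ : Measure ℝ} [IsFiniteMeasure μ₁] [IsFiniteMeasure μ₂] {a : ℝ → ℝ}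

lemma conv_sub_loc (D : Data μ₁ μ₂ a) {f g : ℝ → ℝ} (hc : Causal f) (hf : LocallyIntegrable f)
    (hc' : Causal g) (hg : LocallyIntegrable g) (t : ℝ) :
    conv a (f - g) t = conv a f t - conv a g t := by
  obtain ⟨C, hC⟩ := D.bdd
  have key : ∀ h : ℝ → ℝ, Causal h → LocallyIntegrable h →
      Integrable fun v => a (t - v) * tr t h v := fun h c i =>
    (tr_int c i t).bdd_mul (c := C) (D.meas.comp (by fun_prop)).aestronglyMeasurable
      (Eventually.of_forall fun p => hC _)
  rw [conv_tr D.causal (f := f - g) le_rfl, conv_tr D.causal (f := f) le_rfl,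
    conv_tr D.causal (f := g) le_rfl]
  unfold conv
  rw [← integral_sub (key f hc hf) (key g hc' hg)]
  congr 1; ext v
  by_cases hv : v ≤ t <;> simp [tr, hv]
  ring

lemma backward (D : Data μ₁ μ₂ a) {f : ℝ → ℝ} (hc : Causal f) (hf : LocallyIntegrable f)
    (hB : ∀ θ ∈ Ioc (0:ℝ) 1, ∃ M : ℝ, ∀ t ≥ (0:ℝ), |conv H f (t + θ) - conv H f t| ≤ M)
    (hT : ∀ θ ∈ Ioc (0:ℝ) 1,
      Tendsto (fun t => conv H f (t + θ) - conv H f t) atTop (nhds 0)) :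
    Tendsto (conv a f) atTop (nhds 0) := by
  set F := conv H f with hFdef
  have Fc : Continuous F := F_cont hc hf
  obtain ⟨c, hc01, C, hC⟩ := baire_step Fc hB
  have c0 : 0 < c := hc01.1
  let p : ℝ → ℝ := fun t => (F (t + c) - F t) / c
  let q : ℝ → ℝ := fun t => (∫ θ in (0:ℝ)..c, (F (t + θ) - F t)) / c
  have pc : Continuous p := by fun_prop
  have qc : Continuous q := by
    refine Continuous.div_const ?_ _
    exact intervalIntegral.continuous_parametric_intervalIntegral_of_continuous' (by fun_prop) _ _
  have pb : ∀ t ≥ (0:ℝ), |p t| ≤ C / c := by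
    intro t ht
    simp only [p]; rw [abs_div, abs_of_pos c0]
    exact div_le_div_of_nonneg_right (hC t ht c ⟨c0.le, le_rfl⟩) c0.le
  have qb : ∀ t ≥ (0:ℝ), |q t| ≤ C := by
    intro t ht
    simp only [q]; rw [abs_div, abs_of_pos c0, div_le_iff₀ c0]
    have := intervalIntegral.norm_integral_le_of_norm_le_const (a := 0) (b := c)
      (f := fun θ => F (t + θ) - F t) (C := C) (fun θ hθ => by
        rw [uIoc_of_le c0.le] at hθ
        exact hC t ht θ ⟨hθ.1.le, hθ.2⟩)
    rwa [sub_zero, abs_of_pos c0] at this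
  have pT : Tendsto p atTop (nhds 0) := by
    simpa using (hT c hc01).div_const c
  have qT : Tendsto q atTop (nhds 0) := by
    have : Tendsto (fun t => ∫ θ in (0:ℝ)..c, (F (t + θ) - F t)) atTop
        (nhds (∫ θ in (0:ℝ)..c, (0:ℝ))) := by
      refine intervalIntegral.tendsto_integral_filter_of_dominated_convergence (fun _ => C) ?_ ?_ ?_ ?_
      · refine Eventually.of_forall fun t => Continuous.aestronglyMeasurable (by fun_prop)
      · filter_upwards [eventually_ge_atTop 0] with t ht
        refine Eventually.of_forall fun θ hθ => ?_
        rw [uIoc_of_le c0.le] at hθ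
        exact hC t ht θ ⟨hθ.1.le, hθ.2⟩
      · exact intervalIntegrable_const
      · refine Eventually.of_forall fun θ hθ => ?_
        rw [uIoc_of_le c0.le] at hθ
        exact hT θ ⟨hθ.1, hθ.2.trans hc01.2⟩
    simpa using this.div_const c
  let p' := indicator (Ici 0) p
  let q' := indicator (Ici 0) q
  have p'm : Measurable p' := pc.measurable.indicator measurableSet_Ici
  have q'm : Measurable q' := qc.measurable.indicator measurableSet_Ici
  have p'c : Causal p' := ind_causal p
  have p'l : LocallyIntegrable p' := pc.locallyIntegrable.indicator measurableSet_Ici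
  have gc : Causal (f - p') := fun t ht => by simp [hc t ht, p'c t ht]
  have gl : LocallyIntegrable (f - p') := hf.sub p'l
  have F0 : F 0 = 0 := by
    rw [hFdef, conv_H' hc le_rfl]; simp
  have hQ : conv H (f - p') = fun t => q 0 * H t - q' t := by
    ext t
    rcases lt_or_ge t 0 with ht | ht
    · rw [conv_causal H_causal gc t ht, H_causal t ht]
      simp only [q']; rw [ind_causal q t ht]; simp
    · have hts : t ∈ Ici (0:ℝ) := ht
      have h1 : ∫ v in (0:ℝ)..t, (f - p') v = F t - ∫ v in (0:ℝ)..t, p v := by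
        have e1 : ∫ v in (0:ℝ)..t, p v = ∫ v in (0:ℝ)..t, p' v := by
          refine intervalIntegral.integral_congr fun v hv => ?_
          rw [uIcc_of_le ht] at hv
          have : v ∈ Ici (0:ℝ) := hv.1
          simp only [p', indicator_of_mem this]
        rw [hFdef, conv_H' hc ht, e1]
        exact intervalIntegral.integral_sub
          (hf.integrableOn_isCompact isCompact_uIcc).intervalIntegrable
          (p'l.integrableOn_isCompact isCompact_uIcc).intervalIntegrable
      have hi : ∀ x y, IntervalIntegrable F volume x y := fun x y => Fc.intervalIntegrable _ _
      have h2 : ∀ s, q s = ((∫ v in (0:ℝ)..(s+c), F v) - ∫ v in (0:ℝ)..s, F v) / c - F s := by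
        intro s
        simp only [q]
        rw [intervalIntegral.integral_sub
          (Continuous.intervalIntegrable (u := fun v => F (s + v)) (by fun_prop) _ _)
          intervalIntegrable_const, intervalIntegral.integral_interval_sub_left (hi _ _) (hi _ _),
          intervalIntegral.integral_comp_add_left (fun v => F v)]
        simp
        field_simp
      have h3 : ∫ v in (0:ℝ)..t, p v = ((∫ v in (0:ℝ)..(t+c), F v) - (∫ v in (0:ℝ)..c, F v)
          - ∫ v in (0:ℝ)..t, F v) / c := by
        simp only [p]
        rw [intervalIntegral.integral_div, intervalIntegral.integral_sub
          (Continuous.intervalIntegrable (u := fun v => F (v + c)) (by fun_prop) _ _) (hi _ _),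
          intervalIntegral.integral_interval_sub_left (hi _ _) (hi _ _),
          intervalIntegral.integral_comp_add_right (fun v => F v)]
        simp
      rw [conv_H' gc ht, h1, h3]
      simp only [q', H, indicator_of_mem hts]
      rw [h2 t, h2 0, F0]
      simp
      ring
  have Ac := A_cont D.int
  have q'b := ind_bdd qb
  have aq_b : ∀ t, |conv a q' t| ≤ C * ∫ v, |a v| := fun t => by
    rw [conv_comm]; exact conv_bound D.int q'b t
  have aq_m : Measurable (conv a q') := by
    have : conv a q' = conv q' a := funext fun t => conv_comm _ _ _
    rw [this]
    exact (conv_continuous q'm q'b (ind_cont qc.continuousOn) D.int).measurable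
  have aq_T : Tendsto (conv a q') atTop (nhds 0) :=
    conv_tendsto D.int q'm q'b (ind_tendsto qT)
  have aQ : ∀ s, conv a (fun t => q 0 * H t - q' t) s = q 0 * conv H a s - conv a q' s := by
    intro s
    rw [conv_comm H a]
    unfold conv
    have has : Integrable (fun v => a (s - v)) := D.int.comp_sub_left s
    have i1 : Integrable (fun v => a (s - v) * H v) :=
      has.mul_bdd (c := 1) H_meas.aestronglyMeasurable (Eventually.of_forall H_bdd)
    have i2 : Integrable (fun v => a (s - v) * q' v) :=
      has.mul_bdd (c := C) q'm.aestronglyMeasurable (Eventually.of_forall q'b)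
    rw [← integral_const_mul, ← integral_sub (i1.const_mul _) i2]
    congr 1; ext v; ring
  have main : ∀ t, conv a f t = conv a p' t + q 0 * a t - q' t
      - (∫ u, conv a q' (t - u) ∂μ₁ - ∫ u, conv a q' (t - u) ∂μ₂) := by
    intro t
    have e1 := conv_sub_loc D hc hf p'c p'l t
    have e2 := G1 D gc gl t
    simp only [G2 D gc gl, hQ, aQ] at e2
    have e3 : ∀ (μ : Measure ℝ) [IsFiniteMeasure μ],
        ∫ u, (q 0 * conv H a (t - u) - conv a q' (t - u)) ∂μ =
        q 0 * ∫ u, conv H a (t - u) ∂μ - ∫ u, conv a q' (t - u) ∂μ := by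
      intro μ _
      rw [integral_sub ((integrable_of_bdd μ Ac.measurable (A_bdd D.int) t).const_mul _)
        (integrable_of_bdd μ aq_m aq_b t), integral_const_mul]
    rw [e3, e3] at e2
    have e4 := D.hK t
    rw [e2] at e1
    rw [e4]
    linarith
  have t1 := conv_tendsto D.int p'm (ind_bdd pb) (ind_tendsto pT)
  have t2 := (a_tendsto D).const_mul (q 0)
  have t3 := dc_one μ₁ aq_m aq_b aq_T
  have t4 := dc_one μ₂ aq_m aq_b aq_T
  have := ((t1.add t2).sub (ind_tendsto qT)).sub (t3.sub t4)
  simp only [integral_zero, mul_zero, add_zero, sub_zero] at this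
  exact this.congr fun t => (main t).symm

end VB
namespace VB

lemma ind_locInt {f : ℝ → ℝ} (hf : LocallyIntegrableOn f (Ici 0)) :
    LocallyIntegrable (indicator (Ici 0) f) := by
  rw [locallyIntegrable_iff]
  intro K hK
  rw [IntegrableOn, integrable_indicator_iff measurableSet_Ici, IntegrableOn,
    Measure.restrict_restrict measurableSet_Ici]
  exact hf.integrableOn_compact_subset inter_subset_left (hK.inter_left isClosed_Ici)

lemma swap_translate {a : ℝ → ℝ} (μ : Measure ℝ) [IsFiniteMeasure μ] (h0 : μ (Iio 0) = 0)
    (ha : Measurable a) (hi : Integrable a) (hc : Causal a) (t : ℝ) :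
    IntervalIntegrable (fun s => ∫ u, a (s - u) ∂μ) volume 0 t ∧
    ∫ s in (0:ℝ)..t, ∫ u, a (s - u) ∂μ = ∫ u, conv H a (t - u) ∂μ := by
  have hprodInt : Integrable (fun p : ℝ × ℝ => a (p.1 - p.2)) (volume.prod μ) := by
    have hm : AEStronglyMeasurable (fun p : ℝ × ℝ => a (p.1 - p.2)) (volume.prod μ) :=
      (ha.comp (measurable_fst.sub measurable_snd)).aestronglyMeasurable
    rw [integrable_prod_iff' hm]
    refine ⟨Eventually.of_forall fun u => hi.comp_sub_right u, ?_⟩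
    have : ∀ u, ∫ s, ‖a (s - u)‖ = ∫ s, ‖a s‖ := fun u =>
      integral_sub_right_eq_self (fun s => ‖a s‖) u
    simp only [this]
    exact integrable_const _
  have hprodInt' : Integrable (fun p : ℝ × ℝ => a (p.1 - p.2))
      ((volume.restrict (uIoc 0 t)).prod μ) := by
    rw [← Measure.restrict_univ (μ := μ), Measure.prod_restrict]
    exact hprodInt.restrict
  refine ⟨hprodInt.integral_prod_left.intervalIntegrable, ?_⟩
  rw [intervalIntegral_integral_swap hprodInt']
  refine integral_congr_ae ?_
  filter_upwards [ae_nonneg h0] with u hu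
  rw [intervalIntegral.integral_comp_sub_right (fun s => a s) u, ← F_sub hc hi.locallyIntegrable]
  have : conv H a (0 - u) = 0 := by
    rcases hu.eq_or_lt with h | h
    · rw [← h, sub_zero, conv_H' hc le_rfl]; simp
    · exact conv_causal H_causal hc _ (by linarith)
  rw [this, sub_zero]

lemma ind_integral {r : ℝ → ℝ} (μ : Measure ℝ) (h0 : μ (Iio 0) = 0) (t : ℝ) :
    ∫ s in Icc 0 t, r (t - s) ∂μ = ∫ s, indicator (Ici 0) r (t - s) ∂μ := by
  rw [← integral_indicator measurableSet_Icc]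
  refine integral_congr_ae ?_
  filter_upwards [ae_nonneg h0] with u hu
  by_cases h : u ≤ t <;> simp [indicator, hu, h]

lemma jordan_null (ν : MeasureTheory.SignedMeasure ℝ) (hν : ν.restrict (Iio 0) = 0) :
    ν.toJordanDecomposition.posPart (Iio 0) = 0 ∧ ν.toJordanDecomposition.negPart (Iio 0) = 0 := by
  obtain ⟨i, hi₁, hi₂, hi₃, hp, hn⟩ := ν.toJordanDecomposition_spec
  have key : ∀ j, MeasurableSet j → ν (j ∩ Iio 0) = 0 := fun j hj => by
    rw [← VectorMeasure.restrict_apply _ measurableSet_Iio hj, hν]; simp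
  constructor
  · rw [hp, SignedMeasure.toMeasureOfZeroLE_apply _ _ _ measurableSet_Iio]
    simp [key i hi₁]
  · rw [hn, SignedMeasure.toMeasureOfLEZero_apply _ _ _ measurableSet_Iio]
    simp [key _ hi₁.compl]

lemma r_cont {r r' : ℝ → ℝ} (hr'loc : LocallyIntegrableOn r' (Ici 0))
    (hFTC : ∀ t ≥ (0:ℝ), r t = 1 + ∫ s in (0:ℝ)..t, r' s) : ContinuousOn r (Ici 0) := by
  have h1 := F_cont (ind_causal r') (ind_locInt hr'loc)
  have h2 : ContinuousOn (fun t => 1 + conv H (indicator (Ici 0) r') t) (Ici 0) :=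
    (continuous_const.add h1).continuousOn
  refine h2.congr fun t ht => ?_
  show r t = 1 + conv H (indicator (Ici 0) r') t
  rw [hFTC t ht, conv_H' (ind_causal r') ht]
  congr 1
  refine intervalIntegral.integral_congr fun v hv => ?_
  rw [uIcc_of_le ht] at hv
  have : v ∈ Ici (0:ℝ) := hv.1
  simp only [indicator_of_mem this]

lemma mkData (ν : MeasureTheory.SignedMeasure ℝ)
    (hν : ν.restrict (Iio 0) = 0)
    (r r' : ℝ → ℝ)
    (hr'loc : LocallyIntegrableOn r' (Ici 0))
    (hFTC : ∀ t ≥ (0:ℝ), r t = 1 + ∫ s in (0:ℝ)..t, r' s)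
    (hres : ∀ᵐ t ∂(volume.restrict (Ioi (0:ℝ))),
      r' t = signedSetIntegral ν (fun s => r (t - s)) (Icc 0 t))
    (hrL1 : IntegrableOn r (Ici 0)) :
    Data ν.toJordanDecomposition.posPart ν.toJordanDecomposition.negPart
      (indicator (Ici 0) r) := by
  obtain ⟨n1, n2⟩ := jordan_null ν hν
  set μ₁ := ν.toJordanDecomposition.posPart
  set μ₂ := ν.toJordanDecomposition.negPart
  have rc := r_cont hr'loc hFTC
  have hi : Integrable (indicator (Ici 0) r) := (integrable_indicator_iff measurableSet_Ici).2 hrL1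
  have hm : Measurable (indicator (Ici 0) r) := by
    have := rc.measurable_piecewise (g := (0 : ℝ → ℝ)) continuous_zero.continuousOn measurableSet_Ici
    rwa [piecewise_eq_indicator] at this
  have hc := ind_causal r
  have hK : ∀ t, indicator (Ici 0) r t = H t + (∫ u, conv H (indicator (Ici 0) r) (t - u) ∂μ₁
      - ∫ u, conv H (indicator (Ici 0) r) (t - u) ∂μ₂) := by
    intro t
    rcases lt_or_ge t 0 with ht | ht
    · rw [hc t ht, H_causal t ht]
      have : ∀ (μ : Measure ℝ), μ (Iio 0) = 0 →
          ∫ u, conv H (indicator (Ici 0) r) (t - u) ∂μ = 0 := by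
        intro μ h
        refine integral_eq_zero_of_ae ?_
        filter_upwards [ae_nonneg h] with u hu
        exact conv_causal H_causal hc _ (by linarith)
      rw [this _ n1, this _ n2]; simp
    · have hts : t ∈ Ici (0:ℝ) := ht
      obtain ⟨i1, e1⟩ := swap_translate μ₁ n1 hm hi hc t
      obtain ⟨i2, e2⟩ := swap_translate μ₂ n2 hm hi hc t
      rw [← e1, ← e2, ← intervalIntegral.integral_sub i1 i2]
      simp only [H, indicator_of_mem hts]
      rw [hFTC t ht]
      congr 1
      rw [intervalIntegral.integral_of_le ht, intervalIntegral.integral_of_le ht]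
      refine integral_congr_ae ?_
      have := ae_mono (Measure.restrict_mono (show Ioc (0:ℝ) t ⊆ Ioi 0 from Ioc_subset_Ioi_self) le_rfl) hres
      filter_upwards [this] with s hs
      rw [hs, signedSetIntegral, ind_integral _ n1, ind_integral _ n2]
  refine ⟨n1, n2, hm, hi, ?_, hc, ind_cont rc, hK⟩
  refine ⟨1 + ((∫ v, |indicator (Ici 0) r v|) * μ₁.real univ +
    (∫ v, |indicator (Ici 0) r v|) * μ₂.real univ), fun t => ?_⟩
  rw [hK t]
  have b : ∀ (μ : Measure ℝ) [IsFiniteMeasure μ], |∫ u, conv H (indicator (Ici 0) r) (t - u) ∂μ| ≤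
      (∫ v, |indicator (Ici 0) r v|) * μ.real univ := by
    intro μ _
    rw [← Real.norm_eq_abs]
    exact norm_integral_le_of_norm_le_const (Eventually.of_forall fun u => A_bdd hi _)
  refine (abs_add_le _ _).trans (add_le_add (H_bdd t) ((abs_sub _ _).trans (add_le_add (b μ₁) (b μ₂))))

lemma conv_ind {r f : ℝ → ℝ} {t : ℝ} (ht : 0 ≤ t) :
    ∫ s in (0:ℝ)..t, r (t - s) * f s = conv (indicator (Ici 0) r) (indicator (Ici 0) f) t := by
  rw [intervalIntegral.integral_of_le ht, ← integral_Icc_eq_integral_Ioc,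
    ← integral_indicator measurableSet_Icc]
  unfold conv
  congr 1; ext v
  by_cases hv : v ≤ t <;> by_cases hv0 : 0 ≤ v <;> simp [indicator, hv, hv0]

lemma avg_ind {f : ℝ → ℝ} (hf : LocallyIntegrableOn f (Ici 0)) {t θ : ℝ} (ht : 0 ≤ t)
    (hθ : 0 ≤ θ) : ∫ s in t..(t + θ), f s =
      conv H (indicator (Ici 0) f) (t + θ) - conv H (indicator (Ici 0) f) t := by
  rw [F_sub (ind_causal f) (ind_locInt hf)]
  refine intervalIntegral.integral_congr fun v hv => ?_
  rw [uIcc_of_le (by linarith)] at hv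
  have : v ∈ Ici (0:ℝ) := ht.trans hv.1
  simp only [indicator_of_mem this]

end VB

/-- the `BC₀` characterisation: let `r` be the differential resolvent of
the finite signed Borel measure `ν` on `[0,∞)`, with `r ∈ L¹([0,∞))`, and for `ξ ∈ ℝ` let
`x(·;ξ)` denote the solution `x(t;ξ) = r(t) ξ + ∫_0^t r(t-s) f(s) ds` of the perturbed
equation. Then: (A) for every `ξ`, `x(·;ξ)` is bounded on `[0,∞)`, continuous on `[0,∞)`,
and tends to `0` at `∞`, if and only if (B) for each `θ ∈ (0,1]` the interval average
`t ↦ ∫_t^{t+θ} f(s) ds` is bounded on `[0,∞)`, continuous on `[0,∞)`, and tends to `0`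
at `∞`. -/
theorem solution_BC0_iff_interval_average_BC0
    (ν : MeasureTheory.SignedMeasure ℝ)
    (hν : ν.restrict (Iio 0) = 0)
    (f : ℝ → ℝ)
    (hf : LocallyIntegrableOn f (Ici 0))
    (r r' : ℝ → ℝ)
    (hr'loc : LocallyIntegrableOn r' (Ici 0))
    (hr0 : r 0 = 1)
    (hFTC : ∀ t ≥ (0:ℝ), r t = 1 + ∫ s in (0:ℝ)..t, r' s)
    (hres : ∀ᵐ t ∂(volume.restrict (Ioi (0:ℝ))),
      r' t = signedSetIntegral ν (fun s => r (t - s)) (Icc 0 t))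
    (hrL1 : IntegrableOn r (Ici 0)) :
    (∀ ξ : ℝ,
        (∃ M : ℝ, ∀ t ≥ (0:ℝ), |r t * ξ + ∫ s in (0:ℝ)..t, r (t - s) * f s| ≤ M) ∧
        ContinuousOn (fun t => r t * ξ + ∫ s in (0:ℝ)..t, r (t - s) * f s) (Ici 0) ∧
        Tendsto (fun t => r t * ξ + ∫ s in (0:ℝ)..t, r (t - s) * f s) atTop (nhds 0))
      ↔ ∀ θ ∈ Ioc (0:ℝ) 1,
          (∃ M : ℝ, ∀ t ≥ (0:ℝ), |∫ s in t..(t + θ), f s| ≤ M) ∧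
          ContinuousOn (fun t => ∫ s in t..(t + θ), f s) (Ici 0) ∧
          Tendsto (fun t => ∫ s in t..(t + θ), f s) atTop (nhds 0) := by
  have D := VB.mkData ν hν r r' hr'loc hFTC hres hrL1
  have fc := VB.ind_causal f
  have fl := VB.ind_locInt hf
  have Fc := VB.F_cont fc fl
  constructor
  · intro hA θ hθ
    have hx : Tendsto (VB.conv (indicator (Ici 0) r) (indicator (Ici 0) f)) atTop (nhds 0) := by
      refine (hA 0).2.2.congr' ?_
      filter_upwards [eventually_ge_atTop 0] with t ht
      rw [VB.conv_ind ht]; simp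
    have hT : Tendsto (fun t => ∫ s in t..(t + θ), f s) atTop (nhds 0) := by
      refine (VB.forward D fc fl hx hθ.1.le).congr' ?_
      filter_upwards [eventually_ge_atTop 0] with t ht
      rw [VB.avg_ind hf ht hθ.1.le]
    have hC : ContinuousOn (fun t => ∫ s in t..(t + θ), f s) (Ici 0) := by
      have : Continuous fun t => VB.conv VB.H (indicator (Ici 0) f) (t + θ)
          - VB.conv VB.H (indicator (Ici 0) f) t := by fun_prop
      exact this.continuousOn.congr fun t ht => VB.avg_ind hf ht hθ.1.le
    exact ⟨VB.bdd_of_tendsto hC hT, hC, hT⟩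
  · intro hB ξ
    have hx := VB.backward D fc fl
      (fun θ hθ => by
        obtain ⟨M, hM⟩ := (hB θ hθ).1
        refine ⟨M, fun t ht => ?_⟩
        rw [← VB.avg_ind hf ht hθ.1.le]
        exact hM t ht)
      (fun θ hθ => by
        refine (hB θ hθ).2.2.congr' ?_
        filter_upwards [eventually_ge_atTop 0] with t ht
        rw [VB.avg_ind hf ht hθ.1.le])
    have hr : Tendsto r atTop (nhds 0) := by
      refine (VB.a_tendsto D).congr' ?_
      filter_upwards [eventually_ge_atTop 0] with t ht
      have : t ∈ Ici (0:ℝ) := ht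
      simp only [indicator_of_mem this]
    have hT : Tendsto (fun t => r t * ξ + ∫ s in (0:ℝ)..t, r (t - s) * f s) atTop (nhds 0) := by
      have h := (hr.mul_const ξ).add hx
      rw [zero_mul, zero_add] at h
      refine h.congr' ?_
      filter_upwards [eventually_ge_atTop 0] with t ht
      rw [VB.conv_ind ht]
    have hC : ContinuousOn (fun t => r t * ξ + ∫ s in (0:ℝ)..t, r (t - s) * f s) (Ici 0) := by
      have h1 := VB.r_cont hr'loc hFTC
      have h2 := (VB.x_cont D fc fl).continuousOn (s := Ici 0)
      exact ((h1.mul continuousOn_const).add h2).congr fun t ht => by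
        simp only [Pi.add_apply, Pi.mul_apply]
        rw [VB.conv_ind ht]
    exact ⟨VB.bdd_of_tendsto hC hT, hC, hT⟩
end

section
/- Let 0 < α < β and define f(t) = e^{αt} sin(e^{βt}) for t ≥ 0. Then for every θ > 0 there exist constants C > 0 and T ≥ 0 such that |∫_t^{t+θ} f(s) ds| ≤ C e^{−(β−α)t} for all t ≥ T; in particular, for every p ≥ 1 and every θ > 0 the function t ↦ ∫_t^{t+θ} f(s) ds belongs to L^p([0,∞)). -/
open MeasureTheory Set Filter

lemma aux_bound (α β : ℝ) (hα : 0 < α) (hαβ : α < β) (θ : ℝ) (hθ : 0 < θ) (t : ℝ) :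
    |∫ s in t..(t + θ), Real.exp (α * s) * Real.sin (Real.exp (β * s))|
      ≤ ((2 + (β - α) * θ) / β) * Real.exp (-(β - α) * t) := by
  have hβ : 0 < β := hα.trans hαβ
  have hγ : 0 < β - α := sub_pos.mpr hαβ
  set G : ℝ → ℝ := fun s => -(Real.exp (-(β - α) * s) * Real.cos (Real.exp (β * s))) / β with hG
  set h : ℝ → ℝ := fun s => (β - α) / β * (Real.exp (-(β - α) * s) * Real.cos (Real.exp (β * s)))
    with hh
  set f : ℝ → ℝ := fun s => Real.exp (α * s) * Real.sin (Real.exp (β * s)) with hf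
  have hfc : Continuous f := by fun_prop
  have hhc : Continuous h := by fun_prop
  have hder : ∀ s, HasDerivAt G (f s + h s) s := by
    intro s
    have h1 : HasDerivAt (fun s : ℝ => Real.exp (-(β - α) * s))
        (Real.exp (-(β - α) * s) * (-(β - α) * 1)) s :=
      ((hasDerivAt_id s).const_mul (-(β - α))).exp
    have h2 : HasDerivAt (fun s : ℝ => Real.cos (Real.exp (β * s)))
        (-Real.sin (Real.exp (β * s)) * (Real.exp (β * s) * (β * 1))) s :=
      (((hasDerivAt_id s).const_mul β).exp).cos
    have h3 := ((h1.mul h2).neg).div_const β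
    refine h3.congr_deriv ?_
    have e : Real.exp (α * s) = Real.exp (-(β - α) * s) * Real.exp (β * s) := by
      rw [← Real.exp_add]; congr 1; ring
    simp only [hf, hh, e]
    field_simp
    ring
  have hFTC : ∫ s in t..(t + θ), (f s + h s) = G (t + θ) - G t :=
    intervalIntegral.integral_eq_sub_of_hasDerivAt (fun s _ => hder s)
      ((hfc.add hhc).intervalIntegrable _ _)
  rw [intervalIntegral.integral_add (hfc.intervalIntegrable _ _) (hhc.intervalIntegrable _ _)]
    at hFTC
  have hexp : ∀ s, t ≤ s → Real.exp (-(β - α) * s) ≤ Real.exp (-(β - α) * t) := by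
    intro s hs
    apply Real.exp_le_exp.mpr
    nlinarith
  have hprod : ∀ s, t ≤ s → |Real.exp (-(β - α) * s) * Real.cos (Real.exp (β * s))|
      ≤ Real.exp (-(β - α) * t) := by
    intro s hs
    rw [abs_mul, abs_of_pos (Real.exp_pos _)]
    calc _ ≤ Real.exp (-(β - α) * s) * 1 :=
          mul_le_mul_of_nonneg_left (Real.abs_cos_le_one _) (Real.exp_pos _).le
      _ ≤ _ := by rw [mul_one]; exact hexp s hs
  have hGb : ∀ s, t ≤ s → |G s| ≤ Real.exp (-(β - α) * t) / β := by
    intro s hs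
    simp only [hG]
    rw [abs_div, abs_neg, abs_of_pos hβ]
    exact div_le_div_of_nonneg_right (hprod s hs) hβ.le
  have hI : |∫ s in t..(t + θ), h s| ≤ (β - α) / β * Real.exp (-(β - α) * t) * θ := by
    have := intervalIntegral.norm_integral_le_of_norm_le_const (a := t) (b := t + θ) (f := h)
      (C := (β - α) / β * Real.exp (-(β - α) * t)) (by
        intro s hs
        rw [uIoc_of_le (by linarith)] at hs
        rw [Real.norm_eq_abs]
        simp only [hh]
        rw [abs_mul, abs_of_pos (div_pos hγ hβ)]
        exact mul_le_mul_of_nonneg_left (hprod s hs.1.le) (div_pos hγ hβ).le)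
    rwa [Real.norm_eq_abs, add_sub_cancel_left, abs_of_pos hθ] at this
  have e1 : ((2 + (β - α) * θ) / β) * Real.exp (-(β - α) * t)
      = Real.exp (-(β - α) * t) / β + Real.exp (-(β - α) * t) / β
        + (β - α) / β * Real.exp (-(β - α) * t) * θ := by
    field_simp
    ring
  rw [e1]
  have a1 := abs_le.mp (hGb t le_rfl)
  have a2 := abs_le.mp (hGb (t + θ) (by linarith))
  have a3 := abs_le.mp hI
  rw [abs_le]
  constructor <;> linarith [a1.1, a1.2, a2.1, a2.2, a3.1, a3.2]

/-- the example: for `0 < α < β` and `f(t) = e^{αt} sin(e^{βt})`, for every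
`θ > 0` there are `C > 0` and `T ≥ 0` with `|∫_t^{t+θ} f(s) ds| ≤ C e^{-(β-α)t}` for `t ≥ T`;
in particular for every `p ≥ 1` and `θ > 0` the interval average `t ↦ ∫_t^{t+θ} f(s) ds`
belongs to `L^p([0,∞))`. -/
theorem oscillatory_example_interval_average_decay_and_Lp
    (α β : ℝ) (hα : 0 < α) (hαβ : α < β) :
    (∀ θ > (0:ℝ), ∃ C > (0:ℝ), ∃ T ≥ (0:ℝ), ∀ t ≥ T,
        |∫ s in t..(t + θ), Real.exp (α * s) * Real.sin (Real.exp (β * s))|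
          ≤ C * Real.exp (-(β - α) * t)) ∧
    ∀ p ≥ (1:ℝ), ∀ θ > (0:ℝ),
      IntegrableOn
        (fun t => |∫ s in t..(t + θ), Real.exp (α * s) * Real.sin (Real.exp (β * s))| ^ p)
        (Ici 0) := by
  have hβ : 0 < β := hα.trans hαβ
  have hγ : 0 < β - α := sub_pos.mpr hαβ
  constructor
  · intro θ hθ
    exact ⟨(2 + (β - α) * θ) / β, by positivity, 0, le_rfl,
      fun t _ => aux_bound α β hα hαβ θ hθ t⟩
  · intro p hp θ hθ
    have hp0 : 0 < p := by linarith
    have hfc : Continuous (fun s : ℝ => Real.exp (α * s) * Real.sin (Real.exp (β * s))) := by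
      fun_prop
    have hF := intervalIntegral.continuous_primitive
      (fun a b => hfc.intervalIntegrable (μ := volume) a b) 0
    have hcont : Continuous (fun t : ℝ =>
        ∫ s in t..(t + θ), Real.exp (α * s) * Real.sin (Real.exp (β * s))) := by
      have : (fun t : ℝ =>
          ∫ s in t..(t + θ), Real.exp (α * s) * Real.sin (Real.exp (β * s))) =
          fun t => (∫ s in (0:ℝ)..(t + θ), Real.exp (α * s) * Real.sin (Real.exp (β * s)))
            - ∫ s in (0:ℝ)..t, Real.exp (α * s) * Real.sin (Real.exp (β * s)) := by
        funext t
        rw [intervalIntegral.integral_interval_sub_left] <;>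
          exact hfc.intervalIntegrable _ _
      rw [this]
      exact (hF.comp (continuous_id.add continuous_const)).sub hF
    rw [integrableOn_Ici_iff_integrableOn_Ioi]
    have hdom : IntegrableOn (fun t : ℝ => ((2 + (β - α) * θ) / β) ^ p *
        Real.exp (-((β - α) * p) * t)) (Ioi 0) :=
      (exp_neg_integrableOn_Ioi 0 (mul_pos hγ hp0)).const_mul _
    refine Integrable.mono' hdom
      ((hcont.abs.rpow_const (fun _ => Or.inr hp0.le)).aestronglyMeasurable) ?_
    refine Eventually.of_forall fun t => ?_
    rw [Real.norm_eq_abs, abs_of_nonneg (Real.rpow_nonneg (abs_nonneg _) _)]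
    refine (Real.rpow_le_rpow (abs_nonneg _) (aux_bound α β hα hαβ θ hθ t) hp0.le).trans ?_
    rw [Real.mul_rpow (by positivity) (Real.exp_pos _).le, ← Real.exp_mul]
    apply le_of_eq
    congr 2
    ring
end

section
/- Let 0 < α < β and define f(t) = e^{αt} sin(e^{βt}) for t ≥ 0. Then for every p ≥ 1, ∫_0^∞ |f(s)|^p ds = ∞; that is, f does not belong to L^p([0,∞)) for any p ≥ 1. -/
open MeasureTheory Set Filter


lemma osc_sin_bound (n : ℕ) (x : ℝ) (h1 : ((n:ℝ)+1) * Real.pi + Real.pi / 6 < x)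
    (h2 : x < ((n:ℝ)+1) * Real.pi + 5 * Real.pi / 6) : 1 / 2 ≤ |Real.sin x| := by
  obtain ⟨y, hy⟩ : ∃ y, x = y + ((n+1 : ℕ):ℝ) * Real.pi :=
    ⟨x - ((n+1 : ℕ):ℝ) * Real.pi, by ring⟩
  subst hy
  push_cast at h1 h2
  rw [Real.sin_add_nat_mul_pi, abs_mul, abs_pow, abs_neg, abs_one, one_pow, one_mul]
  refine le_trans ?_ (le_abs_self _)
  rw [← Real.cos_pi_div_three, ← Real.cos_sub_pi_div_two, ← Real.cos_abs (y - Real.pi / 2)]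
  apply Real.cos_le_cos_of_nonneg_of_le_pi (abs_nonneg _)
  · linarith [Real.pi_pos]
  · rw [abs_le]; constructor <;> linarith

lemma osc_len (n : ℕ) : (1/3 : ℝ) * (1 / ((n + 1 : ℕ):ℝ)) ≤
    Real.log (((n:ℝ)+1) * Real.pi + 5 * Real.pi / 6) -
    Real.log (((n:ℝ)+1) * Real.pi + Real.pi / 6) := by
  have hp := Real.pi_pos
  have hn : (0:ℝ) ≤ n := Nat.cast_nonneg n
  have ha : 0 < ((n:ℝ)+1) * Real.pi + Real.pi / 6 := by positivity
  have hb : 0 < ((n:ℝ)+1) * Real.pi + 5 * Real.pi / 6 := by positivity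
  rw [← Real.log_div hb.ne' ha.ne']
  refine le_trans ?_ (Real.one_sub_inv_le_log_of_pos (div_pos hb ha))
  have : 1 - ((((n:ℝ)+1) * Real.pi + 5 * Real.pi / 6) / (((n:ℝ)+1) * Real.pi + Real.pi / 6))⁻¹
      = (2/3) / ((n:ℝ) + 1 + 5/6) := by
    field_simp
    ring
  rw [this]
  push_cast
  rw [div_mul_div_comm, div_le_div_iff₀ (by positivity) (by positivity)]
  linarith

lemma osc_lintegral (α β : ℝ) (hα : 0 < α) (hαβ : α < β) (p : ℝ) (hp : 1 ≤ p) :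
    (∫⁻ s in Ici (0:ℝ),
      ENNReal.ofReal (|Real.exp (α * s) * Real.sin (Real.exp (β * s))| ^ p)) = ⊤ := by
  have hβ : 0 < β := hα.trans hαβ
  have hpi := Real.pi_pos
  have hpi3 := Real.pi_gt_three
  set I : ℕ → Set ℝ := fun n => Ioo
    (Real.log (((n:ℝ)+1) * Real.pi + Real.pi / 6) / β)
    (Real.log (((n:ℝ)+1) * Real.pi + 5 * Real.pi / 6) / β) with hI
  have hmem : ∀ n s, s ∈ I n → ((n:ℝ)+1) * Real.pi + Real.pi / 6 < Real.exp (β * s) ∧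
      Real.exp (β * s) < ((n:ℝ)+1) * Real.pi + 5 * Real.pi / 6 := by
    intro n s hs
    have h1 := hs.1
    have h2 := hs.2
    rw [div_lt_iff₀ hβ, mul_comm s β] at h1
    rw [lt_div_iff₀ hβ, mul_comm s β] at h2
    exact ⟨(Real.log_lt_iff_lt_exp (by positivity)).1 h1,
      (Real.lt_log_iff_exp_lt (by positivity)).1 h2⟩
  have hlt : ∀ n m : ℕ, n < m → Disjoint (I n) (I m) := by
    intro n m hnm
    rw [Set.disjoint_left]
    intro s h1 h2
    have h1 := (hmem n s h1).2
    have h2 := (hmem m s h2).1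
    have : (n:ℝ) + 1 ≤ m := by exact_mod_cast hnm
    nlinarith
  have hdisj : Pairwise (Function.onFun Disjoint I) := by
    intro n m hnm
    rcases lt_or_gt_of_ne hnm with h | h
    · exact hlt n m h
    · exact (hlt m n h).symm
  have hvol : volume (⋃ n, I n) = ⊤ := by
    rw [measure_iUnion hdisj (fun n => measurableSet_Ioo)]
    by_contra hne
    have hs := ENNReal.summable_toReal hne
    have h0 : Summable (fun n : ℕ => (1/3/β : ℝ) * (1 / ((n + 1 : ℕ):ℝ))) := by
      refine Summable.of_nonneg_of_le (fun n => by positivity) (fun n => ?_) hs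
      simp only [hI, Real.volume_Ioo]
      rw [ENNReal.toReal_ofReal']
      refine le_trans ?_ (le_max_left _ _)
      rw [← sub_div, le_div_iff₀ hβ]
      refine le_trans (le_of_eq ?_) (osc_len n)
      field_simp
    rw [summable_mul_left_iff (by positivity)] at h0
    exact Real.not_summable_one_div_natCast ((summable_nat_add_iff 1).1 h0)
  have hsub : (⋃ n, I n) ⊆ Ici (0:ℝ) := by
    intro s hs
    obtain ⟨n, hn⟩ := mem_iUnion.1 hs
    have h1 := (hmem n s hn).1
    have hn0 : (0:ℝ) ≤ n := Nat.cast_nonneg n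
    have h2 : 1 < Real.exp (β * s) := by nlinarith
    have h3 := Real.one_lt_exp_iff.1 h2
    exact (pos_of_mul_pos_right h3 hβ.le).le
  have hU : MeasurableSet (⋃ n, I n) := MeasurableSet.iUnion fun n => measurableSet_Ioo
  rw [eq_top_iff]
  calc ⊤ = ENNReal.ofReal ((1/2:ℝ)^p) * volume (⋃ n, I n) := by
        rw [hvol, ENNReal.mul_top]
        simp only [ne_eq, ENNReal.ofReal_eq_zero, not_le]
        positivity
    _ = ∫⁻ s in ⋃ n, I n, ENNReal.ofReal ((1/2:ℝ)^p) := by rw [setLIntegral_const]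
    _ ≤ ∫⁻ s in ⋃ n, I n,
      ENNReal.ofReal (|Real.exp (α * s) * Real.sin (Real.exp (β * s))| ^ p) := by
        refine setLIntegral_mono' hU fun s hs => ?_
        obtain ⟨n, hn⟩ := mem_iUnion.1 hs
        have hs0 : 0 ≤ s := hsub hs
        have h := osc_sin_bound n _ (hmem n s hn).1 (hmem n s hn).2
        have he : 1 ≤ Real.exp (α * s) := Real.one_le_exp (by positivity)
        apply ENNReal.ofReal_le_ofReal
        apply Real.rpow_le_rpow (by norm_num) _ (by linarith)
        rw [abs_mul, Real.abs_exp]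
        nlinarith
    _ ≤ _ := lintegral_mono_set hsub

/-- for `0 < α < β` and `f(t) = e^{αt} sin(e^{βt})`, for every `p ≥ 1` one
has `∫_0^∞ |f(s)|^p ds = ∞`; that is, `f ∉ L^p([0,∞))` for any `p ≥ 1`. -/
theorem oscillatory_example_not_Lp
    (α β : ℝ) (hα : 0 < α) (hαβ : α < β) :
    ∀ p ≥ (1:ℝ),
      (∫⁻ s in Ici (0:ℝ),
          ENNReal.ofReal (|Real.exp (α * s) * Real.sin (Real.exp (β * s))| ^ p)) = ⊤ ∧
      ¬ IntegrableOn
          (fun s => |Real.exp (α * s) * Real.sin (Real.exp (β * s))| ^ p) (Ici 0) := by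
  intro p hp
  have h := osc_lintegral α β hα hαβ p hp
  exact ⟨h, fun hi => (Integrable.lintegral_lt_top hi).ne h⟩
end

section
/- Let p ≥ 1 and let f : [0,∞) → ℝ be locally integrable, extended by zero on [−1,0). Suppose θ, θ′ ∈ (0,1] with θ > θ′ satisfy ∫_0^∞ |∫_t^{t+θ} f(s) ds|^p dt ≤ m and ∫_0^∞ |∫_t^{t+θ′} f(s) ds|^p dt ≤ m for some m > 0. Then ∫_0^∞ |∫_t^{t+(θ−θ′)} f(s) ds|^p dt ≤ 2^p ( sup_{0 ≤ t ≤ 1} |∫_0^t f(s) ds|^p + m ). -/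
open MeasureTheory Set Filter

lemma wde_conv (p : ℝ) (hp : 1 ≤ p) (a b : ℝ) (ha : 0 ≤ a) (hb : 0 ≤ b) :
    (a + b) ^ p ≤ (2:ℝ) ^ (p - 1) * (a ^ p + b ^ p) := by
  lift a to NNReal using ha
  lift b to NNReal using hb
  exact_mod_cast NNReal.rpow_add_le_mul_rpow_add_rpow a b hp

lemma wde_shift (p : ℝ) (F : ℝ → ℝ)
    (hF0 : ∀ x ≤ 0, F x = 0) (S m d c : ℝ)
    (hd : 0 < d) (hd1 : d ≤ 1) (hdc : d ≤ c) (hc : c ≤ 1)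
    (hS : ∀ t ∈ Icc (0:ℝ) 1, |F t| ^ p ≤ S)
    (h : ∫⁻ t in Ici (0:ℝ), ENNReal.ofReal (|F (t + c) - F t| ^ p) ≤ ENNReal.ofReal m) :
    ∫⁻ t in Ici (0:ℝ), ENNReal.ofReal (|F ((t - d) + c) - F (t - d)| ^ p)
      ≤ ENNReal.ofReal S + ENNReal.ofReal m := by
  have hmp : MeasurePreserving (fun t : ℝ => t - d) volume volume :=
    measurePreserving_sub_right volume d
  have he : MeasurableEmbedding (fun t : ℝ => t - d) := measurableEmbedding_subRight d
  have hpre : (fun t : ℝ => t - d) ⁻¹' (Ici (-d)) = Ici (0:ℝ) := by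
    ext t; simp
  have key := hmp.setLIntegral_comp_preimage_emb he
    (fun u => ENNReal.ofReal (|F (u + c) - F u| ^ p)) (Ici (-d))
  rw [hpre] at key
  rw [key]
  have hU : Ici (-d) = Ico (-d) 0 ∪ Ici (0:ℝ) := by
    rw [Ico_union_Ici_eq_Ici]; linarith
  rw [hU]
  refine (lintegral_union_le _ _ _).trans (add_le_add ?_ h)
  calc ∫⁻ u in Ico (-d) 0, ENNReal.ofReal (|F (u + c) - F u| ^ p)
      ≤ ∫⁻ u in Ico (-d) 0, ENNReal.ofReal S := by
        refine setLIntegral_mono' measurableSet_Ico ?_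
        intro u hu
        apply ENNReal.ofReal_le_ofReal
        rw [hF0 u hu.2.le, sub_zero]
        exact hS _ ⟨by linarith [hu.1], by linarith [hu.2]⟩
    _ = ENNReal.ofReal S * ENNReal.ofReal d := by
        rw [setLIntegral_const, Real.volume_Ico]; congr 2; ring
    _ ≤ ENNReal.ofReal S * 1 := by
        gcongr; simpa using hd1
    _ = ENNReal.ofReal S := mul_one _

/-- difference-of-windows estimate in Lemma 2.1: with `f` locally
integrable on `[0,∞)` extended by zero on `[-1,0)`, if `θ, θ' ∈ (0,1]` with `θ' < θ` satisfy
`∫_0^∞ |∫_t^{t+θ} f|^p dt ≤ m` and `∫_0^∞ |∫_t^{t+θ'} f|^p dt ≤ m`, then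
`∫_0^∞ |∫_t^{t+(θ-θ')} f|^p dt ≤ 2^p (sup_{0 ≤ t ≤ 1} |∫_0^t f|^p + m)`. -/
theorem window_difference_estimate
    (p : ℝ) (hp : 1 ≤ p) (f : ℝ → ℝ)
    (hf : LocallyIntegrableOn f (Ici 0))
    (hf0 : ∀ t < (0:ℝ), f t = 0)
    (θ θ' m : ℝ) (hθ : θ ∈ Ioc (0:ℝ) 1) (hθ' : θ' ∈ Ioc (0:ℝ) 1) (hlt : θ' < θ)
    (hm : 0 < m)
    (h1 : ∫⁻ t in Ici (0:ℝ), ENNReal.ofReal (|∫ s in t..(t + θ), f s| ^ p)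
        ≤ ENNReal.ofReal m)
    (h2 : ∫⁻ t in Ici (0:ℝ), ENNReal.ofReal (|∫ s in t..(t + θ'), f s| ^ p)
        ≤ ENNReal.ofReal m) :
    ∫⁻ t in Ici (0:ℝ), ENNReal.ofReal (|∫ s in t..(t + (θ - θ')), f s| ^ p)
      ≤ ENNReal.ofReal
          ((2:ℝ) ^ p * ((⨆ t : Icc (0:ℝ) 1, |∫ s in (0:ℝ)..(t:ℝ), f s| ^ p) + m)) := by
  have hint : ∀ a b : ℝ, IntervalIntegrable f volume a b := by
    have hpos : ∀ b : ℝ, IntervalIntegrable f volume 0 b := by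
      intro b
      rcases le_total 0 b with hb | hb
      · rw [intervalIntegrable_iff_integrableOn_Icc_of_le hb]
        exact hf.integrableOn_compact_subset Icc_subset_Ici_self isCompact_Icc
      · apply IntervalIntegrable.symm
        rw [intervalIntegrable_iff_integrableOn_Ico_of_le hb]
        refine (integrableOn_zero : IntegrableOn (fun _ => (0:ℝ)) (Ico b 0) volume).congr_fun ?_ measurableSet_Ico
        intro x hx
        exact (hf0 x hx.2).symm
    intro a b
    exact (hpos a).symm.trans (hpos b)
  set F : ℝ → ℝ := fun x => ∫ s in (0:ℝ)..x, f s with hFdef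
  have hW : ∀ a b : ℝ, ∫ s in a..b, f s = F b - F a := fun a b =>
    (intervalIntegral.integral_interval_sub_left (hint 0 b) (hint 0 a)).symm
  have hFc : Continuous F := intervalIntegral.continuous_primitive hint 0
  have hF0 : ∀ x ≤ 0, F x = 0 := by
    intro x hx
    simp only [hFdef]
    rw [intervalIntegral.integral_symm, intervalIntegral.integral_of_le hx,
      integral_Ioc_eq_integral_Ioo, setIntegral_eq_zero_of_forall_eq_zero, neg_zero]
    intro y hy
    exact hf0 y hy.2
  have hp0 : 0 ≤ p := by linarith
  have hGc : Continuous fun x => |F x| ^ p := hFc.abs.rpow_const fun _ => Or.inr hp0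
  set S : ℝ := ⨆ t : Icc (0:ℝ) 1, |F (t:ℝ)| ^ p with hSdef
  have hS : ∀ t ∈ Icc (0:ℝ) 1, |F t| ^ p ≤ S := by
    intro t ht
    have hb : BddAbove (range fun t : Icc (0:ℝ) 1 => |F (t:ℝ)| ^ p) :=
      (isCompact_range (hGc.comp continuous_subtype_val)).bddAbove
    exact le_ciSup hb ⟨t, ht⟩
  have hS0 : 0 ≤ S := le_trans (by positivity) (hS 0 (by simp))
  simp only [hW] at h1 h2 ⊢
  have e1 := wde_shift p F hF0 S m θ' θ hθ'.1 hθ'.2 hlt.le hθ.2 hS h1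
  have e2 := wde_shift p F hF0 S m θ' θ' hθ'.1 hθ'.2 le_rfl hθ'.2 hS h2
  have hpt : ∀ t : ℝ, ENNReal.ofReal (|F (t + (θ - θ')) - F t| ^ p) ≤
      ENNReal.ofReal ((2:ℝ) ^ (p - 1)) *
        (ENNReal.ofReal (|F ((t - θ') + θ) - F (t - θ')| ^ p) +
          ENNReal.ofReal (|F ((t - θ') + θ') - F (t - θ')| ^ p)) := by
    intro t
    rw [← ENNReal.ofReal_add (by positivity) (by positivity),
      ← ENNReal.ofReal_mul (by positivity)]
    apply ENNReal.ofReal_le_ofReal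
    have ha : t + (θ - θ') = (t - θ') + θ := by ring
    have hb : (t - θ') + θ' = t := by ring
    rw [ha, hb]
    refine le_trans ?_ (wde_conv p hp _ _ (abs_nonneg _) (abs_nonneg _))
    apply Real.rpow_le_rpow (abs_nonneg _) _ hp0
    have := abs_sub_le (F (t - θ' + θ)) (F (t - θ')) (F t)
    rwa [abs_sub_comm (F (t - θ')) (F t)] at this
  have hmeas : ∀ c : ℝ, Measurable fun t : ℝ =>
      ENNReal.ofReal (|F ((t - θ') + c) - F (t - θ')| ^ p) := by
    intro c
    apply ENNReal.measurable_ofReal.comp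
    have : Continuous fun t : ℝ => |F ((t - θ') + c) - F (t - θ')| ^ p := by
      refine Continuous.rpow_const ?_ fun _ => Or.inr hp0
      fun_prop
    exact this.measurable
  calc _ ≤ ∫⁻ t in Ici (0:ℝ), ENNReal.ofReal ((2:ℝ) ^ (p - 1)) *
        (ENNReal.ofReal (|F ((t - θ') + θ) - F (t - θ')| ^ p) +
          ENNReal.ofReal (|F ((t - θ') + θ') - F (t - θ')| ^ p)) := lintegral_mono hpt
    _ = ENNReal.ofReal ((2:ℝ) ^ (p - 1)) *
        ((∫⁻ t in Ici (0:ℝ), ENNReal.ofReal (|F ((t - θ') + θ) - F (t - θ')| ^ p)) +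
          ∫⁻ t in Ici (0:ℝ), ENNReal.ofReal (|F ((t - θ') + θ') - F (t - θ')| ^ p)) := by
        rw [lintegral_const_mul' _ _ ENNReal.ofReal_ne_top, lintegral_add_left (hmeas θ)]
    _ ≤ ENNReal.ofReal ((2:ℝ) ^ (p - 1)) *
        ((ENNReal.ofReal S + ENNReal.ofReal m) + (ENNReal.ofReal S + ENNReal.ofReal m)) := by
        gcongr
    _ = ENNReal.ofReal ((2:ℝ) ^ p * (S + m)) := by
        rw [← ENNReal.ofReal_add hS0 hm.le, ← ENNReal.ofReal_add (by positivity) (by positivity),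
          ← ENNReal.ofReal_mul (by positivity)]
        congr 1
        rw [Real.rpow_sub_one (by norm_num)]
        ring
end
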